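/- Let Ω ⊂ ℝⁿ be a simply connected, bounded Lipschitz domain, let f ∈ C²([0,∞)) be strictly convex with f(0) = f'(0) = 0, satisfying the linear growth condition νt − L ≤ f(t) ≤ L(t+1) and the bound f''(t) ≤ L(1+t)⁻¹ for all t ≥ 0, and let T₀ ∈ W^{2,∞}(Ω;ℝ^{N×n}) satisfy ‖T₀‖_{L^∞(Ω;ℝ^{N×n})} < f^∞(1). Let u_k ∈ W^{1,2}(Ω;ℝ^N) be the minimisers of 𝔉_k with (u_k)_Ω = 0, and let u ∈ W^{1,1}(Ω;ℝ^N) be the unique minimiser of 𝔉 in W^{1,1}(Ω;ℝ^N) with (u)_Ω = 0. Then u_k → u strongly in W^{1,1}(Ω;ℝ^N) as k → ∞. -/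

import Mathlib

open MeasureTheory Filter Topology Set
open scoped ENNReal RealInnerProductSpace

noncomputable section

/-- Euclidean space `ℝⁿ`. -/
abbrev EVec (n : ℕ) := EuclideanSpace ℝ (Fin n)

/-- Frobenius inner product of two "matrices". -/
def mdot {ι κ : Type*} [Fintype ι] [Fintype κ] (A B : ι → κ → ℝ) : ℝ :=
  ∑ a, ∑ i, A a i * B a i

/-- Frobenius norm. -/
noncomputable def mnorm {ι κ : Type*} [Fintype ι] [Fintype κ] (A : ι → κ → ℝ) : ℝ :=
  Real.sqrt (mdot A A)

/-- Euclidean norm of a vector given as a tuple. -/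
noncomputable def vnorm {ι : Type*} [Fintype ι] (v : ι → ℝ) : ℝ :=
  Real.sqrt (∑ a, v a ^ 2)

/-- `Ω ⊆ ℝⁿ` is a (nonempty, open, connected) Lipschitz domain: every boundary point has
a neighbourhood on which `Ω` can be flattened to a half space by a bi-Lipschitz map. -/
def IsLipschitzDomain {n : ℕ} (Ω : Set (EVec n)) : Prop :=
  IsOpen Ω ∧ Ω.Nonempty ∧ IsConnected Ω ∧
  ∀ x ∈ frontier Ω, ∃ (U : Set (EVec n)) (h hinv : EVec n → EVec n) (K : NNReal)
      (e : EVec n),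
    ‖e‖ = 1 ∧ IsOpen U ∧ x ∈ U ∧ LipschitzOnWith K h U ∧
    LipschitzOnWith K hinv (h '' U) ∧ (∀ y ∈ U, hinv (h y) = y) ∧
    h '' (U ∩ Ω) = (h '' U) ∩ {y : EVec n | 0 < ⟪e, y⟫}

/-- `Du` is the weak (distributional) gradient of `u` on `Ω`, and both are integrable;
i.e. `u ∈ W^{1,1}(Ω; ℝ^ι)` with weak gradient `Du`. -/
def HasWeakDerivOn {n : ℕ} {ι : Type*} [Fintype ι] (Ω : Set (EVec n))
    (u : EVec n → ι → ℝ) (Du : EVec n → ι → Fin n → ℝ) : Prop :=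
  IntegrableOn u Ω volume ∧ IntegrableOn Du Ω volume ∧
  ∀ φ : EVec n → ℝ, ContDiff ℝ 1 φ → HasCompactSupport φ → tsupport φ ⊆ Ω →
    ∀ (a : ι) (i : Fin n),
      ∫ x in Ω, u x a * fderiv ℝ φ x (EuclideanSpace.single i 1) =
        - ∫ x in Ω, Du x a i * φ x

/-- `u ∈ W^{1,2}(Ω;ℝ^ι)` with weak gradient `Du`. -/
def MemW12 {n : ℕ} {ι : Type*} [Fintype ι] (Ω : Set (EVec n))
    (u : EVec n → ι → ℝ) (Du : EVec n → ι → Fin n → ℝ) : Prop :=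
  HasWeakDerivOn Ω u Du ∧ IntegrableOn (fun x => vnorm (u x) ^ 2) Ω volume ∧
    IntegrableOn (fun x => mnorm (Du x) ^ 2) Ω volume

/-- vanishing mean value `(u)_Ω = 0`. -/
def ZeroMean {n : ℕ} {ι : Type*} [Fintype ι] (Ω : Set (EVec n))
    (u : EVec n → ι → ℝ) : Prop :=
  ∀ a : ι, ∫ x in Ω, u x a = 0

/-- The `L^∞(Ω)` norm of a matrix field (w.r.t. the pointwise Frobenius norm). -/
noncomputable def linfNormOn {n N : ℕ} (Ω : Set (EVec n))
    (T : EVec n → Fin N → Fin n → ℝ) : ℝ≥0∞ :=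
  essSup (fun x => ENNReal.ofReal (mnorm (T x))) (volume.restrict Ω)

/-- `T ∈ W^{1,∞}(Ω)`: bounded and Lipschitz on `Ω`. -/
def MemW1inf {n N : ℕ} (Ω : Set (EVec n)) (T : EVec n → Fin N → Fin n → ℝ) : Prop :=
  ∃ C : NNReal, (∀ x ∈ Ω, ‖T x‖ ≤ C) ∧ LipschitzOnWith C T Ω

/-- `T ∈ W^{2,∞}(Ω)`: `T` is bounded with bounded Lipschitz derivative on `Ω`. -/
def MemW2inf {n N : ℕ} (Ω : Set (EVec n)) (T : EVec n → Fin N → Fin n → ℝ) : Prop :=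
  ∃ (C : NNReal) (DT : EVec n → EVec n →L[ℝ] (Fin N → Fin n → ℝ)),
    (∀ x ∈ Ω, ‖T x‖ ≤ C) ∧ (∀ x ∈ Ω, HasFDerivWithinAt T (DT x) Ω x) ∧
    (∀ x ∈ Ω, ‖DT x‖ ≤ C) ∧ LipschitzOnWith C DT Ω

/-- The nonlinear map `A(z) = f'(|z|) z / |z|` (equal to `0` at `z = 0`). -/
noncomputable def Amap {N n : ℕ} (f' : ℝ → ℝ) (z : Fin N → Fin n → ℝ) :
    Fin N → Fin n → ℝ :=
  fun a i => (f' (mnorm z) / mnorm z) * z a i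

/-- `u` is a weak solution of the Neumann problem for the integrand `f(|·|)` and datum `T₀`. -/
def IsWeakSolution {n N : ℕ} (Ω : Set (EVec n)) (f' : ℝ → ℝ)
    (T₀ : EVec n → Fin N → Fin n → ℝ)
    (u : EVec n → Fin N → ℝ) (Du : EVec n → Fin N → Fin n → ℝ) : Prop :=
  HasWeakDerivOn Ω u Du ∧
  ∀ φ Dφ, HasWeakDerivOn Ω φ Dφ →
    ∫ x in Ω, mdot (Amap f' (Du x)) (Dφ x) = ∫ x in Ω, mdot (T₀ x) (Dφ x)

/-- The functional `𝔉[w] = ∫_Ω (f(|∇w|) − T₀ · ∇w) dx` (as a function of the gradient). -/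
noncomputable def FF {n N : ℕ} (Ω : Set (EVec n)) (f : ℝ → ℝ)
    (T₀ : EVec n → Fin N → Fin n → ℝ) (Du : EVec n → Fin N → Fin n → ℝ) : ℝ :=
  ∫ x in Ω, (f (mnorm (Du x)) - mdot (T₀ x) (Du x))

/-- The regularised functional `𝔉_k[w] = 𝔉[w] + (2k)⁻¹ ∫_Ω |∇w|² dx`. -/
noncomputable def FFk {n N : ℕ} (Ω : Set (EVec n)) (f : ℝ → ℝ)
    (T₀ : EVec n → Fin N → Fin n → ℝ) (k : ℕ)
    (Du : EVec n → Fin N → Fin n → ℝ) : ℝ :=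
  FF Ω f T₀ Du + (2 * (k : ℝ))⁻¹ * ∫ x in Ω, mnorm (Du x) ^ 2

end

/-!
Each `u_k` nearly minimises `𝔉`: comparing it with Lipschitz functions, which are dense in
`W^{1,1}(Ω)`, gives `𝔉[u_k] → 𝔉[u]`. As `u` minimises `𝔉`, the convexity gap
`Φ(∇u) + Φ(∇u_k) - 2Φ((∇u + ∇u_k)/2)` of the integrand then tends to zero in `L¹`, and strict
convexity turns this into `∇u_k → ∇u` almost everywhere along subsequences. The bound
`‖T₀‖_∞ < f^∞(1)` makes the integrand control `|∇u_k|` from above, so that dominated convergence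
with convergent majorants yields `∇u_k → ∇u` in `L¹`, and the Poincaré inequality yields `u_k → u`.

Density and the Poincaré inequality are local on `Ω` once a bi-Lipschitz chart is available near
every point of the closure. In a chart one mollifies with a kernel supported on a ball of shifts
pointing into the half space. The charts are only given on the image of a neighbourhood, so one
needs that this image is again a neighbourhood: invariance of domain for bi-Lipschitz maps, which
follows from the integral of a Jacobian determinant being determined by boundary values.
-/

open Module ContinuousLinearMap
open scoped ContDiff NNReal Convolution

section L1

variable {X F ι : Type*} [MeasurableSpace X] {μ : Measure X} [NormedAddCommGroup F]
  {l : Filter ι}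

theorem integral_norm_sub_le {u v w : X → F} (hu : Integrable u μ) (hv : Integrable v μ)
    (hw : Integrable w μ) :
    ∫ x, ‖u x - w x‖ ∂μ ≤ ∫ x, ‖u x - v x‖ ∂μ + ∫ x, ‖v x - w x‖ ∂μ := by
  have huv : Integrable (fun x => ‖u x - v x‖) μ := (hu.sub hv).norm
  have hvw : Integrable (fun x => ‖v x - w x‖) μ := (hv.sub hw).norm
  rw [← integral_add huv hvw]
  exact integral_mono (hu.sub hw).norm (huv.add hvw) fun x => norm_sub_le_norm_sub_add_norm_sub ..

theorem setIntegral_norm_mono {s t : Set X} {u : X → F} (hst : s ⊆ t) (hu : IntegrableOn u t μ) :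
    ∫ x in s, ‖u x‖ ∂μ ≤ ∫ x in t, ‖u x‖ ∂μ :=
  setIntegral_mono_set hu.norm (Eventually.of_forall fun _ => norm_nonneg _) hst.eventuallyLE

theorem integrable_indicator_of_integrableOn {s : Set X} {u : X → F} (hs : MeasurableSet s)
    (hu : IntegrableOn u s μ) : Integrable (s.indicator u) μ :=
  hu.integrable_indicator hs

theorem tendsto_integral_of_tendsto_integral_norm_sub [NormedSpace ℝ F] {u : ι → X → F}
    {u₀ : X → F} (hu : ∀ i, Integrable (u i) μ) (hu₀ : Integrable u₀ μ)
    (h : Tendsto (fun i => ∫ x, ‖u i x - u₀ x‖ ∂μ) l (𝓝 0)) :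
    Tendsto (fun i => ∫ x, u i x ∂μ) l (𝓝 (∫ x, u₀ x ∂μ)) := by
  rw [tendsto_iff_norm_sub_tendsto_zero]
  refine squeeze_zero (fun _ => norm_nonneg _) (fun i => ?_) h
  rw [← integral_sub (hu i) hu₀]
  exact norm_integral_le_integral_norm _

theorem tendsto_integral_norm_of_tendsto_integral_norm_sub {u : ι → X → F} {u₀ : X → F}
    (hu : ∀ i, Integrable (u i) μ) (hu₀ : Integrable u₀ μ)
    (h : Tendsto (fun i => ∫ x, ‖u i x - u₀ x‖ ∂μ) l (𝓝 0)) :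
    Tendsto (fun i => ∫ x, ‖u i x‖ ∂μ) l (𝓝 (∫ x, ‖u₀ x‖ ∂μ)) := by
  refine tendsto_integral_of_tendsto_integral_norm_sub (fun i => (hu i).norm) hu₀.norm
    (squeeze_zero (fun _ => integral_nonneg fun _ => norm_nonneg _) (fun i => ?_) h)
  exact integral_mono ((hu i).norm.sub hu₀.norm).norm ((hu i).sub hu₀).norm
    fun x => abs_norm_sub_norm_le _ _

theorem setIntegral_mul_eq_integral [TopologicalSpace X] {s : Set X} (u : X → ℝ) {ψ : X → ℝ}
    (hψ : tsupport ψ ⊆ s) : ∫ x in s, u x * ψ x ∂μ = ∫ x, u x * ψ x ∂μ :=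
  setIntegral_eq_integral_of_forall_compl_eq_zero fun x hx => by
    rw [image_eq_zero_of_notMem_tsupport (fun h => hx (hψ h)), mul_zero]

theorem enorm_sub_setAverage_le [NormedSpace ℝ F] [CompleteSpace F] {s : Set X} {u : X → F}
    (h₀ : μ s ≠ 0) (h_top : μ s ≠ ⊤) (hu : IntegrableOn u s μ) (x : X) :
    ‖u x - ⨍ y in s, u y ∂μ‖ₑ ≤ (μ s)⁻¹ * ∫⁻ y in s, ‖u x - u y‖ₑ ∂μ := by
  have h_real : μ.real s ≠ 0 := (ENNReal.toReal_pos h₀ h_top).ne'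
  have h_const : IntegrableOn (fun _ => u x) s μ := integrableOn_const h_top
  have h_avg : u x - ⨍ y in s, u y ∂μ = (μ.real s)⁻¹ • ∫ y in s, (u x - u y) ∂μ := by
    rw [integral_sub h_const hu, setIntegral_const, setAverage_eq, smul_sub,
      inv_smul_smul₀ h_real]
  have h_inv : ‖(μ.real s)⁻¹‖ₑ = (μ s)⁻¹ := by
    rw [enorm_inv h_real, Real.enorm_of_nonneg measureReal_nonneg, ofReal_measureReal h_top]
  rw [h_avg, enorm_smul, h_inv]
  gcongr
  exact enorm_integral_le_lintegral_enorm _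

theorem tendsto_integral_norm_sub_average [NormedSpace ℝ F] [CompleteSpace F] [IsFiniteMeasure μ]
    {u : ι → X → F} {u₀ : X → F} (hu : ∀ i, Integrable (u i) μ) (hu₀ : Integrable u₀ μ)
    (h : Tendsto (fun i => ∫ x, ‖u i x - u₀ x‖ ∂μ) l (𝓝 0)) :
    Tendsto (fun i => ∫ x, ‖u i x - ⨍ y, u i y ∂μ‖ ∂μ) l (𝓝 (∫ x, ‖u₀ x - ⨍ y, u₀ y ∂μ‖ ∂μ)) := by
  have h_avg : Tendsto (fun i => ⨍ y, u i y ∂μ) l (𝓝 (⨍ y, u₀ y ∂μ)) := by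
    simp only [average_eq]
    exact (tendsto_integral_of_tendsto_integral_norm_sub hu hu₀ h).const_smul _
  have h_avg' := (tendsto_iff_norm_sub_tendsto_zero.1 h_avg).const_mul (μ.real univ)
  refine tendsto_integral_norm_of_tendsto_integral_norm_sub
    (fun i => (hu i).sub (integrable_const _)) (hu₀.sub (integrable_const _))
    (squeeze_zero (fun _ => integral_nonneg fun _ => norm_nonneg _) (fun i => ?_)
      (by simpa using h.add h_avg'))
  have h_sub : Integrable (fun x => ‖u i x - u₀ x‖) μ := ((hu i).sub hu₀).norm
  rw [← smul_eq_mul, ← integral_const, ← integral_add h_sub (integrable_const _)]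
  refine integral_mono (((hu i).sub (integrable_const _)).sub (hu₀.sub (integrable_const _))).norm
    (h_sub.add (integrable_const _)) fun x => ?_
  simpa only [sub_sub_sub_comm] using norm_sub_le _ _

theorem integrableOn_of_continuous_of_isBounded {E : Type*} [NormedAddCommGroup E]
    [ProperSpace E] [MeasurableSpace E] [BorelSpace E] {μ : Measure E}
    [IsFiniteMeasureOnCompacts μ] {s : Set E} {u : E → F} (hu : Continuous u)
    (hs : Bornology.IsBounded s) : IntegrableOn u s μ :=
  (hu.continuousOn.integrableOn_compact hs.isCompact_closure).mono_set subset_closure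

end L1

section Mollification

variable {E : Type*} [NormedAddCommGroup E] [MeasurableSpace E]
  {F : Type*} [NormedAddCommGroup F] [NormedSpace ℝ F] {μ : Measure E}

/-- The mollification `ρ ⋆ w` of a vector-valued function `w` by a scalar kernel `ρ`. -/
noncomputable def mollify (μ : Measure E) (ρ : E → ℝ) (w : E → F) : E → F :=
  ρ ⋆[lsmul ℝ ℝ, μ] w

theorem mollify_eq_zero_of_notMem_cthickening {ρ : E → ℝ} {c : E → F} {δ : ℝ}
    (hsupp : Function.support ρ ⊆ Metric.ball 0 δ) {x : E}
    (hx : x ∉ Metric.cthickening δ (tsupport c)) : mollify μ ρ c x = 0 := by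
  have h_integrand (t : E) : ρ t • c (x - t) = 0 := by
    by_contra h
    obtain ⟨hρt, hct⟩ := smul_ne_zero_iff.1 h
    refine hx (Metric.mem_cthickening_of_dist_le x (x - t) δ _ (subset_tsupport _ hct) ?_)
    simpa [dist_eq_norm] using (mem_ball_zero_iff.1 (hsupp hρt)).le
  simp [mollify, convolution_def, h_integrand]

variable [NormedSpace ℝ E]

/-- A mollification kernel: a smooth, compactly supported probability density with respect to `μ`.
Its support is not required to contain the origin, so that one can average over a displaced ball;
near a boundary this keeps the average inside the domain. -/
structure IsMollifier (μ : Measure E) (ρ : E → ℝ) : Prop where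
  contDiff : ContDiff ℝ ∞ ρ
  hasCompactSupport : HasCompactSupport ρ
  nonneg : ∀ x, 0 ≤ ρ x
  integral_eq_one : ∫ x, ρ x ∂μ = 1

theorem IsMollifier.integrable {ρ : E → ℝ} (hρ : IsMollifier μ ρ) : Integrable ρ μ :=
  integrable_of_integral_eq_one hρ.integral_eq_one

variable [FiniteDimensional ℝ E] [BorelSpace E] [μ.IsAddHaarMeasure]

theorem exists_isMollifier_tsupport_subset_closedBall (q : E) {r : ℝ} (hr : 0 < r) :
    ∃ ρ, IsMollifier μ ρ ∧ tsupport ρ ⊆ Metric.closedBall q r := by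
  let b : ContDiffBump q := ⟨r / 2, r, by positivity, by linarith⟩
  exact ⟨b.normed μ, ⟨b.contDiff_normed, b.hasCompactSupport_normed, b.nonneg_normed,
    b.integral_normed⟩, b.tsupport_normed_eq.subset⟩

variable {ρ : E → ℝ} {w : E → F}

theorem IsMollifier.integrable_mollify (hρ : IsMollifier μ ρ) (hw : Integrable w μ) :
    Integrable (mollify μ ρ w) μ :=
  hρ.integrable.integrable_convolution _ hw

theorem IsMollifier.integrable_smul_comp_sub (hρ : IsMollifier μ ρ) (hw : LocallyIntegrable w μ)
    (x : E) : Integrable (fun t => ρ t • w (x - t)) μ :=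
  hρ.hasCompactSupport.convolutionExists_left (lsmul ℝ ℝ) hρ.contDiff.continuous hw x

theorem IsMollifier.mollify_sub (hρ : IsMollifier μ ρ) {w w' : E → F} (hw : Integrable w μ)
    (hw' : Integrable w' μ) (x : E) :
    mollify μ ρ (fun y => w y - w' y) x = mollify μ ρ w x - mollify μ ρ w' x := by
  simp only [mollify, convolution_def, lsmul_apply, smul_sub]
  exact integral_sub (hρ.integrable_smul_comp_sub hw.locallyIntegrable x)
    (hρ.integrable_smul_comp_sub hw'.locallyIntegrable x)

theorem IsMollifier.contDiff_mollify (hρ : IsMollifier μ ρ) (hw : LocallyIntegrable w μ) :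
    ContDiff ℝ ∞ (mollify μ ρ w) :=
  hρ.hasCompactSupport.contDiff_convolution_left _ hρ.contDiff hw

theorem IsMollifier.integral_norm_mollify_le (hρ : IsMollifier μ ρ) (hw : Integrable w μ) :
    ∫ x, ‖mollify μ ρ w x‖ ∂μ ≤ ∫ x, ‖w x‖ ∂μ := by
  have h_pointwise (x : E) : ‖mollify μ ρ w x‖ ≤ mollify μ ρ (fun x => ‖w x‖) x := by
    refine (norm_integral_le_integral_norm _).trans_eq (integral_congr_ae (.of_forall fun t => ?_))
    simp [norm_smul, abs_of_nonneg (hρ.nonneg t)]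
  calc ∫ x, ‖mollify μ ρ w x‖ ∂μ
      ≤ ∫ x, mollify μ ρ (fun x => ‖w x‖) x ∂μ :=
        integral_mono (hρ.integrable_mollify hw).norm (hρ.integrable_mollify hw.norm) h_pointwise
    _ = ∫ x, ‖w x‖ ∂μ := by
        rw [mollify, integral_convolution _ hρ.integrable hw.norm, lsmul_apply,
          hρ.integral_eq_one, one_smul]

variable [CompleteSpace F] {ι : Type*} {l : Filter ι} {ρ : ι → E → ℝ}

theorem eventually_norm_mollify_sub_le_indicator (hρ : ∀ i, IsMollifier μ (ρ i))
    (hsupp : Tendsto (fun i => Function.support (ρ i)) l (𝓝 0).smallSets) {c : E → F}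
    (hc : Continuous c) (hcc : HasCompactSupport c) {η : ℝ} (hη : 0 < η) :
    ∀ᶠ i in l, ∀ x, ‖mollify μ (ρ i) c x - c x‖ ≤
      (Metric.cthickening 1 (tsupport c)).indicator (fun _ => η) x := by
  obtain ⟨δ, hδ, hδc⟩ := Metric.uniformContinuous_iff.1 (hcc.uniformContinuous_of_continuous hc)
    η hη
  filter_upwards [tendsto_smallSets_iff.1 hsupp _ (Metric.ball_mem_nhds 0 (lt_min hδ one_pos))]
    with i hi x
  by_cases hx : x ∈ Metric.cthickening 1 (tsupport c)
  · rw [indicator_of_mem hx, ← dist_eq_norm]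
    exact dist_convolution_le hη.le hi (hρ i).nonneg (hρ i).integral_eq_one hc.aestronglyMeasurable
      fun y hy => (hδc (hy.trans_le (min_le_left _ _))).le
  · have hcx : c x = 0 := image_eq_zero_of_notMem_tsupport fun h =>
      hx (Metric.self_subset_cthickening _ h)
    have hmx : mollify μ (ρ i) c x = 0 := mollify_eq_zero_of_notMem_cthickening
      (hi.trans (Metric.ball_subset_ball (min_le_right _ _))) hx
    simp [hx, hcx, hmx]

theorem tendsto_integral_norm_mollify_sub_of_continuous (hρ : ∀ i, IsMollifier μ (ρ i))
    (hsupp : Tendsto (fun i => Function.support (ρ i)) l (𝓝 0).smallSets) {c : E → F}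
    (hc : Continuous c) (hcc : HasCompactSupport c) :
    Tendsto (fun i => ∫ x, ‖mollify μ (ρ i) c x - c x‖ ∂μ) l (𝓝 0) := by
  set S := Metric.cthickening 1 (tsupport c)
  have hS : IsCompact S := hcc.isCompact.cthickening
  have hci : Integrable c μ := hc.integrable_of_hasCompactSupport hcc
  refine (nhds_basis_Icc_pos (0 : ℝ)).tendsto_right_iff.2 fun ε hε => ?_
  have hη : 0 < ε / (μ.real S + 1) := by positivity
  filter_upwards [eventually_norm_mollify_sub_le_indicator hρ hsupp hc hcc hη] with i hi
  have h_nonneg : 0 ≤ ∫ x, ‖mollify μ (ρ i) c x - c x‖ ∂μ := integral_nonneg fun _ => norm_nonneg _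
  refine ⟨by linarith, ?_⟩
  calc ∫ x, ‖mollify μ (ρ i) c x - c x‖ ∂μ
      ≤ ∫ x, S.indicator (fun _ => ε / (μ.real S + 1)) x ∂μ :=
        integral_mono (((hρ i).integrable_mollify hci).sub hci).norm
          ((integrable_indicator_iff hS.measurableSet).2
            (integrableOn_const hS.measure_lt_top.ne)) hi
    _ = μ.real S * (ε / (μ.real S + 1)) := by
        rw [integral_indicator hS.measurableSet, setIntegral_const, smul_eq_mul]
    _ ≤ 0 + ε := by
        rw [zero_add, mul_div_assoc', div_le_iff₀ (by positivity)]
        nlinarith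

theorem tendsto_integral_norm_mollify_sub (hρ : ∀ i, IsMollifier μ (ρ i))
    (hsupp : Tendsto (fun i => Function.support (ρ i)) l (𝓝 0).smallSets)
    (hw : Integrable w μ) :
    Tendsto (fun i => ∫ x, ‖mollify μ (ρ i) w x - w x‖ ∂μ) l (𝓝 0) := by
  refine Metric.tendsto_nhds.2 fun ε hε => ?_
  obtain ⟨c, hcc, hcw, hc, hci⟩ := hw.exists_hasCompactSupport_integral_sub_le
    (show 0 < ε / 3 by positivity)
  have h_cont := tendsto_integral_norm_mollify_sub_of_continuous hρ hsupp hc hcc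
  filter_upwards [h_cont.eventually_lt_const (show 0 < ε / 3 by positivity)] with i hi
  have hmw := (hρ i).integrable_mollify hw
  have hmc := (hρ i).integrable_mollify hci
  have h_contract : ∫ x, ‖mollify μ (ρ i) w x - mollify μ (ρ i) c x‖ ∂μ ≤ ε / 3 := by
    simp only [← (hρ i).mollify_sub hw hci]
    exact ((hρ i).integral_norm_mollify_le (hw.sub hci)).trans hcw
  have h_back : ∫ x, ‖c x - w x‖ ∂μ ≤ ε / 3 := by simpa only [norm_sub_rev] using hcw
  have h_triangle := integral_norm_sub_le hmw hmc hw
  have h_triangle' := integral_norm_sub_le hmc hci hw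
  rw [Real.dist_0_eq_abs, abs_of_nonneg (integral_nonneg fun _ => norm_nonneg _)]
  linarith

end Mollification

section WeakDerivative

variable {E : Type*} [NormedAddCommGroup E] [NormedSpace ℝ E] [MeasurableSpace E]
  {μ : Measure E} {Ω D S : Set E} {u V : E → ℝ} {G : E → E →L[ℝ] ℝ}

/-- The scalar function `u` belongs to `W^{1,1}(Ω)` and has weak derivative `G`, a field of
continuous linear functionals. Test functions are `C¹` with compact support in `Ω`. -/
structure HasWeakFDerivOn (μ : Measure E) (Ω : Set E) (u : E → ℝ) (G : E → E →L[ℝ] ℝ) :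
    Prop where
  integrableOn : IntegrableOn u Ω μ
  integrableOn_deriv : IntegrableOn G Ω μ
  integral_mul_fderiv : ∀ φ : E → ℝ, ContDiff ℝ 1 φ → HasCompactSupport φ → tsupport φ ⊆ Ω →
    ∀ v : E, ∫ x in Ω, u x * fderiv ℝ φ x v ∂μ = -∫ x in Ω, G x v * φ x ∂μ

/-- Arbitrarily small balls of displacements move all of `S` into `D`. This is what is needed to
mollify functions on `D` so that their derivatives are controlled on `S`, even where `S` and `D`
share boundary points. -/
def AdmitsSmallShifts (S D : Set E) : Prop :=
  ∀ δ > 0, ∃ q r, 0 < r ∧ Metric.closedBall q r ⊆ Metric.ball 0 δ ∧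
    ∀ x ∈ S, ∀ t ∈ Metric.closedBall q r, x - t ∈ D

omit [NormedSpace ℝ E] [MeasurableSpace E] in
theorem admitsSmallShifts_of_isCompact (hS : IsCompact S) (hD : IsOpen D) (hSD : S ⊆ D) :
    AdmitsSmallShifts S D := by
  intro δ hδ
  obtain ⟨η, hη, hηD⟩ := hS.exists_cthickening_subset_open hD hSD
  refine ⟨0, min (δ / 2) η, by positivity,
    Metric.closedBall_subset_ball ((min_le_left _ _).trans_lt (by linarith)), fun x hx t ht => ?_⟩
  refine hηD (Metric.mem_cthickening_of_dist_le _ x _ _ hx ?_)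
  simpa [dist_eq_norm] using (mem_closedBall_zero_iff.1 ht).trans (min_le_right _ _)

omit [NormedSpace ℝ E] [MeasurableSpace E] in
theorem AdmitsSmallShifts.mono_left {S' : Set E} (hS : AdmitsSmallShifts S D) (h_sub : S' ⊆ S) :
    AdmitsSmallShifts S' D := fun δ hδ =>
  let ⟨q, r, hr, h_ball, h_shift⟩ := hS δ hδ
  ⟨q, r, hr, h_ball, fun x hx => h_shift x (h_sub hx)⟩

variable [FiniteDimensional ℝ E] [BorelSpace E] [μ.IsAddHaarMeasure]

theorem AdmitsSmallShifts.exists_seq_isMollifier (h : AdmitsSmallShifts S D) :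
    ∃ ρ : ℕ → E → ℝ, (∀ k, IsMollifier μ (ρ k)) ∧
      Tendsto (fun k => Function.support (ρ k)) atTop (𝓝 0).smallSets ∧
      ∀ k, ∀ x ∈ S, ∀ t ∈ tsupport (ρ k), x - t ∈ D := by
  have h_kernel (k : ℕ) : ∃ ρ, IsMollifier μ ρ ∧
      Function.support ρ ⊆ Metric.ball 0 (1 / ((k : ℝ) + 1)) ∧
      ∀ x ∈ S, ∀ t ∈ tsupport ρ, x - t ∈ D := by
    obtain ⟨q, r, hr, hqr, hSD⟩ := h (1 / ((k : ℝ) + 1)) (by positivity)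
    obtain ⟨ρ, hρ, hsupp⟩ := exists_isMollifier_tsupport_subset_closedBall (μ := μ) q hr
    exact ⟨ρ, hρ, (subset_tsupport ρ).trans (hsupp.trans hqr), fun x hx t ht =>
      hSD x hx t (hsupp ht)⟩
  choose ρ hρ hsupp hSD using h_kernel
  refine ⟨ρ, hρ, Metric.nhds_basis_ball.smallSets.tendsto_right_iff.2 fun δ hδ => ?_, hSD⟩
  filter_upwards [tendsto_one_div_add_atTop_nhds_zero_nat.eventually_lt_const hδ] with k hk
  exact (hsupp k).trans (Metric.ball_subset_ball hk.le)

theorem HasWeakFDerivOn.fderiv_mollify (hΩ : IsOpen Ω) (hu : HasWeakFDerivOn μ Ω u G) {ρ : E → ℝ}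
    (hρ : IsMollifier μ ρ) {x : E} (hx : ∀ t ∈ tsupport ρ, x - t ∈ Ω) :
    fderiv ℝ (mollify μ ρ (Ω.indicator u)) x = mollify μ ρ (Ω.indicator G) x := by
  have hρ₁ : ContDiff ℝ 1 ρ := hρ.contDiff.of_le (by simp)
  have hui := (hu.integrableOn.integrable_indicator hΩ.measurableSet).locallyIntegrable
  have hGi := (integrable_indicator_of_integrableOn hΩ.measurableSet
    hu.integrableOn_deriv).locallyIntegrable
  have h_exists := (hρ.hasCompactSupport.fderiv ℝ).convolutionExists_left
    ((lsmul ℝ ℝ).precompL E) (hρ₁.continuous_fderiv one_ne_zero) hui x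
  -- Test the weak derivative against the reflected and translated kernel.
  set φ : E → ℝ := ρ ∘ Homeomorph.subLeft x with hφ
  have hφ_smooth : ContDiff ℝ 1 φ := hρ₁.comp (contDiff_const.sub contDiff_id)
  have hφ_supp : tsupport φ ⊆ Ω := by
    rw [hφ, tsupport_comp_eq_preimage]
    intro t ht
    simpa using hx _ ht
  have hφ_deriv (t v : E) : fderiv ℝ φ t v = -fderiv ℝ ρ (x - t) v := by
    have h_outer := (hρ₁.differentiable one_ne_zero (x - t)).hasFDerivAt
    have h_inner : HasFDerivAt (Homeomorph.subLeft x) (-ContinuousLinearMap.id ℝ E) t :=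
      (hasFDerivAt_id t).const_sub x
    simp [hφ, (h_outer.comp t h_inner).fderiv]
  ext v
  have h_test := hu.integral_mul_fderiv φ hφ_smooth
    (hρ.hasCompactSupport.comp_homeomorph _) hφ_supp v
  have h_left : fderiv ℝ (mollify μ ρ (Ω.indicator u)) x v =
      -∫ t in Ω, u t * fderiv ℝ φ t v ∂μ := by
    rw [mollify, (hρ.hasCompactSupport.hasFDerivAt_convolution_left _ hρ₁ hui x).fderiv,
      convolution_def, ContinuousLinearMap.integral_apply h_exists,
      ← integral_sub_left_eq_self _ μ x, ← integral_indicator hΩ.measurableSet, ← integral_neg]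
    refine integral_congr_ae (.of_forall fun t => ?_)
    by_cases ht : t ∈ Ω <;> simp [ht, hφ_deriv, mul_comm]
  have h_right : mollify μ ρ (Ω.indicator G) x v = ∫ t in Ω, G t v * φ t ∂μ := by
    rw [mollify, convolution_def]
    simp only [lsmul_apply]
    rw [ContinuousLinearMap.integral_apply (hρ.integrable_smul_comp_sub hGi x),
      ← integral_sub_left_eq_self _ μ x, ← integral_indicator hΩ.measurableSet]
    refine integral_congr_ae (.of_forall fun t => ?_)
    by_cases ht : t ∈ Ω <;> simp [ht, hφ, mul_comm]
  rw [h_left, h_test, neg_neg, h_right]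

theorem HasWeakFDerivOn.exists_seq_contDiff (hD : IsOpen D) (hb : Bornology.IsBounded D)
    (hSD : S ⊆ D) (hSm : MeasurableSet S) (hS : AdmitsSmallShifts S D)
    (hV : HasWeakFDerivOn μ D V G) :
    ∃ W : ℕ → E → ℝ, (∀ k, ContDiff ℝ ∞ (W k)) ∧ (∀ k, HasCompactSupport (W k)) ∧
      Tendsto (fun k => ∫ x in D, ‖W k x - V x‖ ∂μ) atTop (𝓝 0) ∧
      Tendsto (fun k => ∫ x in S, ‖fderiv ℝ (W k) x - G x‖ ∂μ) atTop (𝓝 0) := by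
  have hVi := hV.integrableOn.integrable_indicator hD.measurableSet
  have hGi := integrable_indicator_of_integrableOn hD.measurableSet hV.integrableOn_deriv
  obtain ⟨ρ, hρ, hsupp, hx⟩ := hS.exists_seq_isMollifier (μ := μ)
  refine ⟨fun k => mollify μ (ρ k) (D.indicator V),
    fun k => (hρ k).contDiff_mollify hVi.locallyIntegrable, fun k => ?_, ?_, ?_⟩
  · exact (hρ k).hasCompactSupport.convolution _ (HasCompactSupport.of_support_subset_isCompact
      hb.isCompact_closure (support_indicator_subset.trans subset_closure))
  · refine squeeze_zero (fun _ => integral_nonneg fun _ => norm_nonneg _) (fun k => ?_)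
      (tendsto_integral_norm_mollify_sub hρ hsupp hVi)
    rw [setIntegral_congr_fun (g := fun x => ‖mollify μ (ρ k) (D.indicator V) x -
      D.indicator V x‖) hD.measurableSet fun x hx => by simp [hx]]
    exact setIntegral_le_integral (((hρ k).integrable_mollify hVi).sub hVi).norm
      (.of_forall fun _ => norm_nonneg _)
  · refine squeeze_zero (fun _ => integral_nonneg fun _ => norm_nonneg _) (fun k => ?_)
      (tendsto_integral_norm_mollify_sub hρ hsupp hGi)
    rw [setIntegral_congr_fun (g := fun x => ‖mollify μ (ρ k) (D.indicator G) x -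
      D.indicator G x‖) hSm fun x hxS => by
        simp [hV.fderiv_mollify hD (hρ k) (hx k x hxS), hSD hxS]]
    exact setIntegral_le_integral (((hρ k).integrable_mollify hGi).sub hGi).norm
      (.of_forall fun _ => norm_nonneg _)

end WeakDerivative

section Poincare

variable {E : Type*} [NormedAddCommGroup E] [NormedSpace ℝ E] {D : Set E}

theorem enorm_midpoint_sub_le_lintegral {F : Type*} [NormedAddCommGroup F] [NormedSpace ℝ F]
    [CompleteSpace F] (hD : Convex ℝ D) {f : E → F} (hf : ContDiff ℝ 1 f) {y y' : E}
    (hy : y ∈ D) (hy' : y' ∈ D) :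
    ‖f ((1 / 2 : ℝ) • y + (1 / 2 : ℝ) • y') - f y‖ₑ ≤ ∫⁻ s in Ioc (0 : ℝ) (1 / 2),
      Metric.ediam D * D.indicator (fun z => ‖fderiv ℝ f z‖ₑ) ((1 - s) • y + s • y') := by
  have h_deriv (s : ℝ) : HasDerivAt (fun s : ℝ => f ((1 - s) • y + s • y'))
      (fderiv ℝ f ((1 - s) • y + s • y') (y' - y)) s := by
    have h_seg := (((hasDerivAt_id s).const_sub 1).smul_const y).add
      ((hasDerivAt_id s).smul_const y')
    rw [neg_one_smul, one_smul, neg_add_eq_sub] at h_seg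
    exact (hf.differentiable one_ne_zero _).hasFDerivAt.comp_hasDerivAt s h_seg
  have h_cont : Continuous fun s : ℝ => fderiv ℝ f ((1 - s) • y + s • y') (y' - y) := by
    have := hf.continuous_fderiv one_ne_zero
    fun_prop
  have h_ftc : f ((1 / 2 : ℝ) • y + (1 / 2 : ℝ) • y') - f y =
      ∫ s in Ioc (0 : ℝ) (1 / 2), fderiv ℝ f ((1 - s) • y + s • y') (y' - y) := by
    rw [← intervalIntegral.integral_of_le (by norm_num),
      intervalIntegral.integral_eq_sub_of_hasDerivAt (fun s _ => h_deriv s)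
        (h_cont.intervalIntegrable _ _)]
    norm_num
  rw [h_ftc]
  refine (enorm_integral_le_lintegral_enorm _).trans
    (setLIntegral_mono' measurableSet_Ioc fun s hs => ?_)
  rw [indicator_of_mem (hD hy hy' (by linarith [hs.2]) hs.1.le (by ring)), mul_comm]
  refine (ContinuousLinearMap.le_opENorm _ _).trans ?_
  gcongr
  rw [← edist_eq_enorm_sub]
  exact Metric.edist_le_ediam_of_mem hy' hy

variable [FiniteDimensional ℝ E] [MeasurableSpace E] [BorelSpace E] {μ : Measure E}
  [μ.IsAddHaarMeasure]

theorem lintegral_comp_lineMap_le {g : E → ℝ≥0∞} (hg : Measurable g) (y' : E) {s : ℝ}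
    (hs : s ≤ 1 / 2) :
    ∫⁻ y, g ((1 - s) • y + s • y') ∂μ ≤ 2 ^ finrank ℝ E * ∫⁻ y, g y ∂μ := by
  have h_map := Measure.map_addHaar_smul μ (show 1 - s ≠ 0 by linarith)
  have h_inv : (1 - s)⁻¹ ≤ 2 := by
    rw [inv_le_comm₀ (by linarith) two_pos]
    linarith
  have h_inv_pos : 0 < (1 - s)⁻¹ := inv_pos.2 (by linarith)
  calc ∫⁻ y, g ((1 - s) • y + s • y') ∂μ
      = ∫⁻ z, g (z + s • y') ∂(Measure.map ((1 - s) • ·) μ) := by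
        rw [lintegral_map (by fun_prop) (by fun_prop)]
    _ = ENNReal.ofReal ((1 - s)⁻¹ ^ finrank ℝ E) * ∫⁻ y, g y ∂μ := by
        rw [h_map, lintegral_smul_measure, lintegral_add_right_eq_self, smul_eq_mul, ← inv_pow,
          abs_of_pos (by positivity)]
    _ ≤ 2 ^ finrank ℝ E * ∫⁻ y, g y ∂μ := by
        rw [ENNReal.ofReal_pow h_inv_pos.le]
        gcongr
        exact ENNReal.ofReal_le_of_le_toReal (by simpa using h_inv)

theorem setLIntegral_lintegral_lineMap_le (D : Set E) {g : E → ℝ≥0∞} (hg : Measurable g) :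
    ∫⁻ y' in D, ∫⁻ y in D, (∫⁻ s in Ioc (0 : ℝ) (1 / 2), g ((1 - s) • y + s • y')) ∂μ ∂μ ≤
      μ D * (2 ^ finrank ℝ E * ∫⁻ z, g z ∂μ) := by
  have h_fibre (y' : E) :
      ∫⁻ y in D, (∫⁻ s in Ioc (0 : ℝ) (1 / 2), g ((1 - s) • y + s • y')) ∂μ ≤
        2 ^ finrank ℝ E * ∫⁻ z, g z ∂μ := by
    have h_meas : Measurable fun q : E × ℝ => g ((1 - q.2) • q.1 + q.2 • y') :=
      hg.comp (by fun_prop)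
    calc ∫⁻ y in D, (∫⁻ s in Ioc (0 : ℝ) (1 / 2), g ((1 - s) • y + s • y')) ∂μ
        = ∫⁻ s in Ioc (0 : ℝ) (1 / 2), ∫⁻ y in D, g ((1 - s) • y + s • y') ∂μ :=
          lintegral_lintegral_swap h_meas.aemeasurable
      _ ≤ ∫⁻ s in Ioc (0 : ℝ) (1 / 2), 2 ^ finrank ℝ E * ∫⁻ z, g z ∂μ :=
          setLIntegral_mono' measurableSet_Ioc fun s hs =>
            (setLIntegral_le_lintegral _ _).trans (lintegral_comp_lineMap_le hg y' hs.2)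
      _ ≤ 2 ^ finrank ℝ E * ∫⁻ z, g z ∂μ := by
          rw [setLIntegral_const, Real.volume_Ioc]
          exact mul_le_of_le_one_right' (ENNReal.ofReal_le_one.2 (by norm_num))
  calc _ ≤ ∫⁻ _ in D, 2 ^ finrank ℝ E * ∫⁻ z, g z ∂μ ∂μ := lintegral_mono h_fibre
    _ = μ D * (2 ^ finrank ℝ E * ∫⁻ z, g z ∂μ) := by rw [setLIntegral_const, mul_comm]

variable {F : Type*} [NormedAddCommGroup F] [NormedSpace ℝ F] [CompleteSpace F] {f : E → F}

theorem lintegral_lintegral_enorm_sub_le (hD : Convex ℝ D) (hDm : MeasurableSet D)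
    (hf : ContDiff ℝ 1 f) :
    ∫⁻ y in D, ∫⁻ y' in D, ‖f y - f y'‖ₑ ∂μ ∂μ ≤
      2 * (μ D * (2 ^ finrank ℝ E * (Metric.ediam D * ∫⁻ z in D, ‖fderiv ℝ f z‖ₑ ∂μ))) := by
  set g : E → ℝ≥0∞ := fun z => Metric.ediam D * D.indicator (fun z => ‖fderiv ℝ f z‖ₑ) z
  have h_deriv_meas : Measurable (D.indicator fun z => ‖fderiv ℝ f z‖ₑ) :=
    (hf.continuous_fderiv one_ne_zero).enorm.measurable.indicator hDm
  have hg : Measurable g := h_deriv_meas.const_mul _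
  set Φ : E → E → ℝ≥0∞ := fun y y' => ∫⁻ s in Ioc (0 : ℝ) (1 / 2), g ((1 - s) • y + s • y')
  have hΦ_meas : Measurable (Function.uncurry Φ) := by
    have : Measurable fun q : (E × E) × ℝ => g ((1 - q.2) • q.1.1 + q.2 • q.1.2) :=
      hg.comp (by fun_prop)
    exact this.lintegral_prod_right'
  have h_midpoint {y y' : E} (hy : y ∈ D) (hy' : y' ∈ D) :
      ‖f y - f y'‖ₑ ≤ Φ y y' + Φ y' y := by
    have h₁ := enorm_midpoint_sub_le_lintegral hD hf hy hy'
    have h₂ := enorm_midpoint_sub_le_lintegral hD hf hy' hy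
    rw [add_comm ((1 / 2 : ℝ) • y')] at h₂
    rw [← sub_sub_sub_cancel_left _ _ (f ((1 / 2 : ℝ) • y + (1 / 2 : ℝ) • y')),
      add_comm (Φ y y')]
    exact enorm_sub_le.trans (add_le_add h₂ h₁)
  calc ∫⁻ y in D, ∫⁻ y' in D, ‖f y - f y'‖ₑ ∂μ ∂μ
      ≤ ∫⁻ y in D, ∫⁻ y' in D, (Φ y y' + Φ y' y) ∂μ ∂μ :=
        setLIntegral_mono' hDm fun y hy => setLIntegral_mono' hDm fun y' hy' => h_midpoint hy hy'
    _ = (∫⁻ y in D, ∫⁻ y' in D, Φ y y' ∂μ ∂μ) + ∫⁻ y in D, ∫⁻ y' in D, Φ y' y ∂μ ∂μ := by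
        rw [← lintegral_add_left (f := fun y => ∫⁻ y' in D, Φ y y' ∂μ)
          hΦ_meas.lintegral_prod_right']
        exact lintegral_congr fun y => lintegral_add_left hΦ_meas.of_uncurry_left _
    _ = 2 * ∫⁻ y in D, ∫⁻ y' in D, Φ y' y ∂μ ∂μ := by
        rw [two_mul, lintegral_lintegral_swap hΦ_meas.aemeasurable]
    _ ≤ _ := by
        gcongr
        refine (setLIntegral_lintegral_lineMap_le D hg).trans_eq ?_
        rw [lintegral_const_mul _ h_deriv_meas, lintegral_indicator hDm]

theorem integral_norm_sub_average_le_of_contDiff (hD : Convex ℝ D) (hDm : MeasurableSet D)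
    (hb : Bornology.IsBounded D) (hf : ContDiff ℝ 1 f) :
    ∫ x in D, ‖f x - ⨍ y in D, f y ∂μ‖ ∂μ ≤
      2 * 2 ^ finrank ℝ E * Metric.diam D * ∫ x in D, ‖fderiv ℝ f x‖ ∂μ := by
  by_cases h₀ : μ D = 0
  · simp [Measure.restrict_eq_zero.2 h₀]
  have h_top : μ D ≠ ⊤ := hb.measure_lt_top.ne
  have hfD : IntegrableOn f D μ := integrableOn_of_continuous_of_isBounded hf.continuous hb
  have hf'D : IntegrableOn (fderiv ℝ f) D μ :=
    integrableOn_of_continuous_of_isBounded (hf.continuous_fderiv one_ne_zero) hb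
  have hg : IntegrableOn (fun x => f x - ⨍ y in D, f y ∂μ) D μ :=
    hfD.sub (integrableOn_const h_top)
  rw [← ENNReal.ofReal_le_ofReal_iff (by positivity), ENNReal.ofReal_mul (by positivity),
    ofReal_integral_norm_eq_lintegral_enorm hg, ofReal_integral_norm_eq_lintegral_enorm hf'D]
  calc ∫⁻ x in D, ‖f x - ⨍ y in D, f y ∂μ‖ₑ ∂μ
      ≤ ∫⁻ x in D, (μ D)⁻¹ * ∫⁻ y in D, ‖f x - f y‖ₑ ∂μ ∂μ :=
        lintegral_mono fun x => enorm_sub_setAverage_le h₀ h_top hfD x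
    _ = (μ D)⁻¹ * ∫⁻ x in D, ∫⁻ y in D, ‖f x - f y‖ₑ ∂μ ∂μ :=
        lintegral_const_mul' _ _ (ENNReal.inv_ne_top.2 h₀)
    _ ≤ (μ D)⁻¹ * (2 * (μ D * (2 ^ finrank ℝ E *
          (Metric.ediam D * ∫⁻ z in D, ‖fderiv ℝ f z‖ₑ ∂μ)))) := by
        gcongr
        exact lintegral_lintegral_enorm_sub_le hD hDm hf
    _ = (μ D)⁻¹ * μ D * (2 * 2 ^ finrank ℝ E * Metric.ediam D *
          ∫⁻ z in D, ‖fderiv ℝ f z‖ₑ ∂μ) := by ring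
    _ = ENNReal.ofReal (2 * 2 ^ finrank ℝ E * Metric.diam D) *
          ∫⁻ z in D, ‖fderiv ℝ f z‖ₑ ∂μ := by
        rw [ENNReal.inv_mul_cancel h₀ h_top, one_mul, ENNReal.ofReal_mul (by positivity),
          Metric.diam, ENNReal.ofReal_toReal (Metric.isBounded_iff_ediam_ne_top.1 hb)]
        norm_num

theorem HasWeakFDerivOn.integral_norm_sub_average_le {S : Set E} {V : E → ℝ} {G : E → E →L[ℝ] ℝ}
    (hD : IsOpen D) (hb : Bornology.IsBounded D) (hSD : S ⊆ D) (hSm : MeasurableSet S)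
    (hSc : Convex ℝ S) (hS : AdmitsSmallShifts S D) (hV : HasWeakFDerivOn μ D V G) :
    ∫ x in S, ‖V x - ⨍ y in S, V y ∂μ‖ ∂μ ≤
      2 * 2 ^ finrank ℝ E * Metric.diam S * ∫ x in S, ‖G x‖ ∂μ := by
  obtain ⟨W, hW_smooth, -, hWV, hWG⟩ := hV.exists_seq_contDiff hD hb hSD hSm hS
  have hSb : Bornology.IsBounded S := hb.subset hSD
  have : IsFiniteMeasure (μ.restrict S) := isFiniteMeasure_restrict.2 hSb.measure_lt_top.ne
  have hW₁ (k : ℕ) : ContDiff ℝ 1 (W k) := (hW_smooth k).of_le (by simp)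
  have hW_int {T : Set E} (hT : Bornology.IsBounded T) (k : ℕ) : IntegrableOn (W k) T μ :=
    integrableOn_of_continuous_of_isBounded (hW₁ k).continuous hT
  have hW'_int (k : ℕ) : IntegrableOn (fderiv ℝ (W k)) S μ :=
    integrableOn_of_continuous_of_isBounded ((hW₁ k).continuous_fderiv one_ne_zero) hSb
  have hWV_S : Tendsto (fun k => ∫ x in S, ‖W k x - V x‖ ∂μ) atTop (𝓝 0) :=
    squeeze_zero (fun _ => integral_nonneg fun _ => norm_nonneg _)
      (fun k => setIntegral_norm_mono hSD ((hW_int hb k).sub hV.integrableOn)) hWV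
  refine le_of_tendsto_of_tendsto'
    (tendsto_integral_norm_sub_average (hW_int hSb) (hV.integrableOn.mono_set hSD) hWV_S)
    (Tendsto.const_mul _ (tendsto_integral_norm_of_tendsto_integral_norm_sub hW'_int
      (hV.integrableOn_deriv.mono_set hSD) hWG))
    fun k => integral_norm_sub_average_le_of_contDiff hSc hSm hSb (hW₁ k)

end Poincare

section HalfBall

variable {E : Type*} [NormedAddCommGroup E] [NormedSpace ℝ E]

/-- The part of the ball of radius `r` around `p` that lies in the open half space `{0 < ℓ}`. -/
def halfBall (ℓ : E →L[ℝ] ℝ) (p : E) (r : ℝ) : Set E :=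
  Metric.ball p r ∩ {y | 0 < ℓ y}

variable {ℓ : E →L[ℝ] ℝ} {p : E} {r : ℝ}

theorem isOpen_halfBall : IsOpen (halfBall ℓ p r) :=
  Metric.isOpen_ball.inter (isOpen_lt continuous_const ℓ.continuous)

theorem isBounded_halfBall : Bornology.IsBounded (halfBall ℓ p r) :=
  Metric.isBounded_ball.subset inter_subset_left

theorem convex_halfBall : Convex ℝ (halfBall ℓ p r) :=
  (convex_ball p r).inter (convex_halfSpace_gt ℓ.isLinear 0)

theorem halfBall_subset_halfBall {r' : ℝ} (h : r ≤ r') : halfBall ℓ p r ⊆ halfBall ℓ p r' :=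
  inter_subset_inter_left _ (Metric.ball_subset_ball h)

theorem admitsSmallShifts_halfBall (hℓ : ℓ ≠ 0) {r' : ℝ} (hr : r < r') :
    AdmitsSmallShifts (halfBall ℓ p r) (halfBall ℓ p r') := by
  intro δ hδ
  obtain ⟨v, hv⟩ : ∃ v, ℓ v = 1 := by
    obtain ⟨w, hw⟩ := DFunLike.ne_iff.1 hℓ
    exact ⟨(ℓ w)⁻¹ • w, by simpa using inv_mul_cancel₀ hw⟩
  obtain ⟨s, hs, hs_small⟩ := exists_pos_mul_lt (lt_min hδ (sub_pos.2 hr)) (‖v‖ + 1)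
  have h_radius : s / (‖ℓ‖ + 1) ≤ s := div_le_self hs.le (by linarith [norm_nonneg ℓ])
  have h_norm {t : E} (ht : t ∈ Metric.closedBall (-(s • v)) (s / (‖ℓ‖ + 1))) :
      ‖t‖ ≤ (‖v‖ + 1) * s := by
    have h_tri := norm_sub_le (t + s • v) (s • v)
    have ht' : ‖t + s • v‖ ≤ s := by simpa [dist_eq_norm] using (ht.trans h_radius)
    rw [add_sub_cancel_right, norm_smul, Real.norm_of_nonneg hs.le] at h_tri
    linarith
  refine ⟨-(s • v), s / (‖ℓ‖ + 1), by positivity, fun t ht => ?_, fun x hx t ht => ⟨?_, ?_⟩⟩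
  · exact mem_ball_zero_iff.2 ((h_norm ht).trans_lt (hs_small.trans_le (min_le_left _ _)))
  · have hxp : ‖x - p‖ < r := mem_ball_iff_norm.1 hx.1
    have h_tri := norm_sub_le (x - p) t
    rw [mem_ball_iff_norm, sub_right_comm]
    linarith [h_norm ht, hs_small.trans_le (min_le_right _ _)]
  · have hx' : 0 < ℓ x := hx.2
    have ht' : ‖t + s • v‖ ≤ s / (‖ℓ‖ + 1) := by simpa [dist_eq_norm] using ht
    have hℓt : ℓ (t + s • v) ≤ s := calc
      ℓ (t + s • v) ≤ ‖ℓ‖ * ‖t + s • v‖ := (le_abs_self _).trans (ℓ.le_opNorm _)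
      _ ≤ (‖ℓ‖ + 1) * (s / (‖ℓ‖ + 1)) := by gcongr; linarith
      _ = s := mul_div_cancel₀ _ (by positivity)
    rw [map_add, map_smul, hv, smul_eq_mul, mul_one] at hℓt
    have : 0 < ℓ (x - t) := by
      rw [map_sub]
      linarith
    exact this

end HalfBall

section LipschitzChangeOfVariables

variable {E : Type*} [NormedAddCommGroup E] [NormedSpace ℝ E] [FiniteDimensional ℝ E]
  [MeasurableSpace E] [BorelSpace E] {μ : Measure E} [μ.IsAddHaarMeasure]

theorem integral_mul_fderiv_eq_neg_of_lipschitzWith {f φ : E → ℝ} {K : ℝ≥0}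
    (hf : LipschitzWith K f) (hφ : ContDiff ℝ 1 φ) (hφc : HasCompactSupport φ) (v : E) :
    ∫ x, f x * fderiv ℝ φ x v ∂μ = -∫ x, fderiv ℝ f x v * φ x ∂μ := by
  obtain ⟨M, hM⟩ := ContDiff.lipschitzWith_of_hasCompactSupport hφc hφ one_ne_zero
  have h_parts := hf.integral_lineDeriv_mul_eq hM hφc v (μ := μ)
  have h_left : ∫ x, lineDeriv ℝ f x v * φ x ∂μ = ∫ x, fderiv ℝ f x v * φ x ∂μ := by
    refine integral_congr_ae ?_
    filter_upwards [hf.ae_differentiableAt (μ := μ)] with x hx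
    rw [hx.lineDeriv_eq_fderiv]
  have h_right (x : E) : lineDeriv ℝ φ x (-v) * f x = -(f x * fderiv ℝ φ x v) := by
    rw [(hφ.differentiable one_ne_zero x).lineDeriv_eq_fderiv, map_neg]
    ring
  simp only [h_left, h_right, integral_neg] at h_parts
  rw [h_parts, neg_neg]

theorem addHaar_image_le_of_lipschitzWith {g : E → E} {K : ℝ≥0} (hg : LipschitzWith K g)
    (s : Set E) : μ (g '' s) ≤ (K : ℝ≥0∞) ^ finrank ℝ E * μ s := by
  have := isAddHaarMeasure_hausdorffMeasure (E := E)
  rw [Measure.isAddLeftInvariant_eq_smul μ (Measure.hausdorffMeasure (finrank ℝ E))]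
  simp only [Measure.smul_apply, ENNReal.smul_def, smul_eq_mul]
  rw [mul_left_comm]
  gcongr
  simpa using hg.hausdorffMeasure_image_le (d := finrank ℝ E) (by positivity) s

variable {F : Type*} [NormedAddCommGroup F] {h g : E → E} {K : ℝ≥0} {O D : Set E}

theorem map_restrict_le_of_leftInvOn_lipschitzWith (hh : Measurable h) (hg : LipschitzWith K g)
    (h_maps : MapsTo h O D) (h_inv : LeftInvOn g h O) :
    (μ.restrict O).map h ≤ ((K : ℝ≥0∞) ^ finrank ℝ E) • μ.restrict D := by
  refine Measure.le_iff.2 fun s hs => ?_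
  rw [Measure.map_apply hh hs, Measure.restrict_apply (hh hs), Measure.smul_apply,
    Measure.restrict_apply hs, smul_eq_mul]
  have h_image : h ⁻¹' s ∩ O ⊆ g '' (s ∩ D) :=
    fun x hx => ⟨h x, ⟨hx.1, h_maps hx.2⟩, h_inv hx.2⟩
  exact (measure_mono h_image).trans (addHaar_image_le_of_lipschitzWith hg _)

theorem integrableOn_comp_of_leftInvOn_lipschitzWith (hh : Measurable h) (hg : LipschitzWith K g)
    (h_maps : MapsTo h O D) (h_inv : LeftInvOn g h O) {q : E → F} (hq : IntegrableOn q D μ) :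
    IntegrableOn (fun x => q (h x)) O μ :=
  ((Integrable.smul_measure hq (by simp)).mono_measure
    (map_restrict_le_of_leftInvOn_lipschitzWith hh hg h_maps h_inv)).comp_measurable hh

theorem setIntegral_norm_comp_le_of_leftInvOn_lipschitzWith (hh : Measurable h)
    (hg : LipschitzWith K g) (h_maps : MapsTo h O D) (h_inv : LeftInvOn g h O) {q : E → F}
    (hq : IntegrableOn q D μ) :
    ∫ x in O, ‖q (h x)‖ ∂μ ≤ (K : ℝ) ^ finrank ℝ E * ∫ x in D, ‖q x‖ ∂μ := by
  have h_le := map_restrict_le_of_leftInvOn_lipschitzWith (μ := μ) hh hg h_maps h_inv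
  have hq' : Integrable q (((K : ℝ≥0∞) ^ finrank ℝ E) • μ.restrict D) :=
    Integrable.smul_measure hq (by simp)
  calc ∫ x in O, ‖q (h x)‖ ∂μ
      = ∫ y, ‖q y‖ ∂((μ.restrict O).map h) :=
        (integral_map hh.aemeasurable (hq'.mono_measure h_le).norm.aestronglyMeasurable).symm
    _ ≤ ∫ y, ‖q y‖ ∂(((K : ℝ≥0∞) ^ finrank ℝ E) • μ.restrict D) :=
        integral_mono_measure h_le (.of_forall fun _ => norm_nonneg _) hq'.norm
    _ = (K : ℝ) ^ finrank ℝ E * ∫ x in D, ‖q x‖ ∂μ := by simp [integral_smul_measure]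

variable [NormedSpace ℝ F] {L : E → F →L[ℝ] ℝ} {M : ℝ}

theorem integrableOn_clm_apply_comp (hh : Measurable h) (hg : LipschitzWith K g)
    (h_maps : MapsTo h O D) (h_inv : LeftInvOn g h O) (hL : AEStronglyMeasurable L (μ.restrict O))
    (hLM : ∀ x, ‖L x‖ ≤ M) {q : E → F} (hq : IntegrableOn q D μ) :
    IntegrableOn (fun x => L x (q (h x))) O μ := by
  have hqh := integrableOn_comp_of_leftInvOn_lipschitzWith hh hg h_maps h_inv hq
  refine (hqh.norm.const_mul M).mono'
    ((ContinuousLinearMap.apply ℝ ℝ).flip.aestronglyMeasurable_comp₂ hL hqh.aestronglyMeasurable)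
    (.of_forall fun x => ?_)
  exact (L x).le_of_opNorm_le (hLM x) _

theorem tendsto_setIntegral_clm_apply_comp (hh : Measurable h) (hg : LipschitzWith K g)
    (h_maps : MapsTo h O D) (h_inv : LeftInvOn g h O) (hL : AEStronglyMeasurable L (μ.restrict O))
    (hLM : ∀ x, ‖L x‖ ≤ M) {q : ℕ → E → F} {q₀ : E → F} (hq : ∀ k, IntegrableOn (q k) D μ)
    (hq₀ : IntegrableOn q₀ D μ)
    (h_lim : Tendsto (fun k => ∫ x in D, ‖q k x - q₀ x‖ ∂μ) atTop (𝓝 0)) :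
    Tendsto (fun k => ∫ x in O, L x (q k (h x)) ∂μ) atTop (𝓝 (∫ x in O, L x (q₀ (h x)) ∂μ)) := by
  have h_int {p : E → F} (hp : IntegrableOn p D μ) := integrableOn_clm_apply_comp
    hh hg h_maps h_inv hL hLM hp
  refine tendsto_integral_of_tendsto_integral_norm_sub (fun k => h_int (hq k)) (h_int hq₀)
    (squeeze_zero (fun _ => integral_nonneg fun _ => norm_nonneg _) (fun k => ?_)
      (by simpa using h_lim.const_mul (M * (K : ℝ) ^ finrank ℝ E)))
  have hM : 0 ≤ M := (norm_nonneg _).trans (hLM 0)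
  have h_sub : IntegrableOn (fun x => q k x - q₀ x) D μ := (hq k).sub hq₀
  calc ∫ x in O, ‖L x (q k (h x)) - L x (q₀ (h x))‖ ∂μ
      ≤ ∫ x in O, M * ‖q k (h x) - q₀ (h x)‖ ∂μ := by
        refine integral_mono ((h_int (hq k)).sub (h_int hq₀)).norm
          ((integrableOn_comp_of_leftInvOn_lipschitzWith hh hg h_maps h_inv h_sub).norm.const_mul M)
          fun x => ?_
        simpa only [map_sub] using (L x).le_of_opNorm_le (hLM x) (q k (h x) - q₀ (h x))
    _ ≤ M * ((K : ℝ) ^ finrank ℝ E * ∫ x in D, ‖q k x - q₀ x‖ ∂μ) := by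
        rw [integral_const_mul]
        gcongr
        exact setIntegral_norm_comp_le_of_leftInvOn_lipschitzWith hh hg h_maps h_inv h_sub
    _ = M * (K : ℝ) ^ finrank ℝ E * ∫ x in D, ‖q k x - q₀ x‖ ∂μ := by ring

variable {V : E → ℝ} {G : E → E →L[ℝ] ℝ} {K' : ℝ≥0}

theorem integrableOn_comp_fderiv (hh : LipschitzWith K' h) (hg : LipschitzWith K g)
    (h_maps : MapsTo h O D) (h_inv : LeftInvOn g h O) (hG : IntegrableOn G D μ) :
    IntegrableOn (fun x => (G (h x)).comp (fderiv ℝ h x)) O μ := by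
  have hGh := integrableOn_comp_of_leftInvOn_lipschitzWith hh.continuous.measurable hg h_maps
    h_inv hG
  refine (hGh.norm.mul_const (K' : ℝ)).mono'
    ((ContinuousLinearMap.compL ℝ E E ℝ).aestronglyMeasurable_comp₂ hGh.aestronglyMeasurable
      (measurable_fderiv ℝ h).aestronglyMeasurable) (.of_forall fun x => ?_)
  refine (opNorm_comp_le _ _).trans ?_
  gcongr
  exact norm_fderiv_le_of_lipschitz ℝ hh

theorem integral_comp_mul_fderiv_eq_neg {W φ : E → ℝ} (hW : ContDiff ℝ 1 W)
    (hWc : HasCompactSupport W) (hh : LipschitzWith K' h) (hφ : ContDiff ℝ 1 φ)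
    (hφc : HasCompactSupport φ) (v : E) :
    ∫ x, W (h x) * fderiv ℝ φ x v ∂μ = -∫ x, fderiv ℝ W (h x) (fderiv ℝ h x v) * φ x ∂μ := by
  obtain ⟨A, hA⟩ := ContDiff.lipschitzWith_of_hasCompactSupport hWc hW one_ne_zero
  refine (integral_mul_fderiv_eq_neg_of_lipschitzWith (hA.comp hh) hφ hφc v).trans ?_
  congr 1
  refine integral_congr_ae ?_
  filter_upwards [hh.ae_differentiableAt (μ := μ)] with x hx
  rw [fderiv_comp x (hW.differentiable one_ne_zero _) hx, comp_apply]

theorem tendsto_setIntegral_comp_mul {ψ : E → ℝ} (hh : Measurable h) (hg : LipschitzWith K g)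
    (h_maps : MapsTo h O D) (h_inv : LeftInvOn g h O) (hψ : Continuous ψ)
    (hψc : HasCompactSupport ψ) {q : ℕ → E → ℝ} {q₀ : E → ℝ} (hq : ∀ k, IntegrableOn (q k) D μ)
    (hq₀ : IntegrableOn q₀ D μ)
    (h_lim : Tendsto (fun k => ∫ x in D, ‖q k x - q₀ x‖ ∂μ) atTop (𝓝 0)) :
    Tendsto (fun k => ∫ x in O, q k (h x) * ψ x ∂μ) atTop (𝓝 (∫ x in O, q₀ (h x) * ψ x ∂μ)) := by
  obtain ⟨M, hM⟩ := hψc.exists_bound_of_continuous hψ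
  simpa [mul_comm] using tendsto_setIntegral_clm_apply_comp
    (L := fun x => ψ x • ContinuousLinearMap.id ℝ ℝ) hh hg h_maps h_inv
    (hψ.smul continuous_const).aestronglyMeasurable
    (fun x => (by simpa [norm_smul] using hM x : _ ≤ M)) hq hq₀ h_lim

theorem tendsto_setIntegral_comp_fderiv_mul {φ : E → ℝ} (hh : LipschitzWith K' h)
    (hg : LipschitzWith K g) (h_maps : MapsTo h O D) (h_inv : LeftInvOn g h O)
    (hφ : Continuous φ) (hφc : HasCompactSupport φ) (v : E) {q : ℕ → E → E →L[ℝ] ℝ}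
    (hq : ∀ k, IntegrableOn (q k) D μ) (hG : IntegrableOn G D μ)
    (h_lim : Tendsto (fun k => ∫ x in D, ‖q k x - G x‖ ∂μ) atTop (𝓝 0)) :
    Tendsto (fun k => ∫ x in O, q k (h x) (fderiv ℝ h x v) * φ x ∂μ) atTop
      (𝓝 (∫ x in O, G (h x) (fderiv ℝ h x v) * φ x ∂μ)) := by
  obtain ⟨M, hM⟩ := hφc.exists_bound_of_continuous hφ
  have hM0 : 0 ≤ M := (norm_nonneg _).trans (hM 0)
  have h_meas : AEStronglyMeasurable
      (fun x => φ x • ContinuousLinearMap.apply ℝ ℝ (fderiv ℝ h x v)) (μ.restrict O) :=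
    hφ.aestronglyMeasurable.smul
      ((ContinuousLinearMap.apply ℝ ℝ).continuous.comp_aestronglyMeasurable
        (measurable_fderiv_apply_const ℝ h v).aestronglyMeasurable)
  have h_bound (x : E) :
      ‖φ x • ContinuousLinearMap.apply ℝ ℝ (fderiv ℝ h x v)‖ ≤ M * (K' * ‖v‖) := by
    refine opNorm_le_bound _ (by positivity) fun T => ?_
    calc ‖φ x * T (fderiv ℝ h x v)‖
        = ‖φ x‖ * ‖T (fderiv ℝ h x v)‖ := norm_mul _ _
      _ ≤ M * (‖T‖ * (K' * ‖v‖)) := by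
        gcongr
        · exact hM x
        · exact T.le_opNorm_of_le
            ((fderiv ℝ h x).le_of_opNorm_le (norm_fderiv_le_of_lipschitz ℝ hh) v)
      _ = M * (K' * ‖v‖) * ‖T‖ := by ring
  simpa [mul_comm] using tendsto_setIntegral_clm_apply_comp hh.continuous.measurable hg h_maps
    h_inv h_meas h_bound hq hG h_lim

theorem HasWeakFDerivOn.comp_lipschitzWith (hV : HasWeakFDerivOn μ D V G) (hD : IsOpen D)
    (hb : Bornology.IsBounded D) (hh : LipschitzWith K' h) (hg : LipschitzWith K g)
    (h_maps : MapsTo h O D) (h_inv : LeftInvOn g h O) :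
    HasWeakFDerivOn μ O (fun x => V (h x)) (fun x => (G (h x)).comp (fderiv ℝ h x)) := by
  have hhm := hh.continuous.measurable
  refine ⟨integrableOn_comp_of_leftInvOn_lipschitzWith hhm hg h_maps h_inv hV.integrableOn,
    integrableOn_comp_fderiv hh hg h_maps h_inv hV.integrableOn_deriv, fun φ hφ hφc hφO v => ?_⟩
  set T := tsupport φ
  have hT : IsCompact (h '' T) := hφc.isCompact.image hh.continuous
  have hTD : h '' T ⊆ D := (h_maps.mono_left hφO).image_subset
  obtain ⟨W, hW_smooth, hWc, hWV, hWG⟩ := hV.exists_seq_contDiff hD hb hTD hT.measurableSet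
    (admitsSmallShifts_of_isCompact hT hD hTD)
  have hW (k : ℕ) : ContDiff ℝ 1 (W k) := (hW_smooth k).of_le (by simp)
  have h_lim_left := tendsto_setIntegral_comp_mul (μ := μ) hhm hg h_maps h_inv
    ((hφ.continuous_fderiv one_ne_zero).clm_apply continuous_const) (hφc.fderiv_apply ℝ v)
    (fun k => integrableOn_of_continuous_of_isBounded (hW k).continuous hb) hV.integrableOn hWV
  have h_lim_right := tendsto_setIntegral_comp_fderiv_mul (μ := μ) hh hg (mapsTo_image h T)
    (h_inv.mono hφO) hφ.continuous hφc v
    (fun k => integrableOn_of_continuous_of_isBounded ((hW k).continuous_fderiv one_ne_zero)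
      hT.isBounded) (hV.integrableOn_deriv.mono_set hTD) hWG
  have h_parts (k : ℕ) : ∫ x in O, W k (h x) * fderiv ℝ φ x v ∂μ =
      -∫ x in T, fderiv ℝ (W k) (h x) (fderiv ℝ h x v) * φ x ∂μ := by
    rw [setIntegral_mul_eq_integral _ ((tsupport_fderiv_apply_subset ℝ v).trans hφO),
      setIntegral_mul_eq_integral _ subset_rfl]
    exact integral_comp_mul_fderiv_eq_neg (hW k) (hWc k) hh hφ hφc v
  refine (tendsto_nhds_unique (h_lim_left.congr h_parts) h_lim_right.neg).trans ?_
  rw [setIntegral_mul_eq_integral _ subset_rfl, ← setIntegral_mul_eq_integral _ hφO]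
  rfl

end LipschitzChangeOfVariables

section DetOneAdd

variable {E : Type*} [NormedAddCommGroup E] [NormedSpace ℝ E] [FiniteDimensional ℝ E]

theorem det_one_add_pos_of_norm_lt_one {A : E →L[ℝ] E} (hA : ‖A‖ < 1) :
    0 < (1 + A : E →L[ℝ] E).det := by
  have h_cont : Continuous fun s : ℝ => (1 + s • A : E →L[ℝ] E).det :=
    continuous_det.comp (by fun_prop)
  have h_ne (s : ℝ) (hs : s ∈ Icc (0 : ℝ) 1) : (1 + s • A : E →L[ℝ] E).det ≠ 0 := by
    intro h_det
    obtain ⟨x, hx, hx₀⟩ :=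
      (Submodule.ne_bot_iff _).1 (LinearMap.bot_lt_ker_of_det_eq_zero h_det).ne'
    have h_eq : x = -(s • A x) := eq_neg_of_add_eq_zero_left hx
    have h_le : ‖x‖ ≤ ‖A‖ * ‖x‖ := calc
      ‖x‖ = s * ‖A x‖ := by
        rw [congrArg norm h_eq, norm_neg, norm_smul, Real.norm_of_nonneg hs.1]
      _ ≤ ‖A‖ * ‖x‖ := (mul_le_of_le_one_left (norm_nonneg _) hs.2).trans (A.le_opNorm x)
    nlinarith [norm_pos_iff.2 hx₀]
  by_contra! h_nonpos
  obtain ⟨s, hs, hs₀⟩ := intermediate_value_Icc' zero_le_one h_cont.continuousOn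
    (show (0 : ℝ) ∈ Icc _ _ from ⟨by simpa using h_nonpos, by simp [ContinuousLinearMap.det]⟩)
  exact h_ne s hs hs₀

theorem det_add_smulRight_comp (A : E →L[ℝ] E) (l : E →L[ℝ] ℝ) (v : E) :
    (A + (l.comp A).smulRight v : E →L[ℝ] E).det = (1 + l v) * A.det := by
  have h_eq : ((A + (l.comp A).smulRight v : E →L[ℝ] E) : E →ₗ[ℝ] E) =
      LinearMap.transvection (l : E →ₗ[ℝ] ℝ) v * (A : E →ₗ[ℝ] E) := by
    ext x
    simp [LinearMap.transvection]
  rw [ContinuousLinearMap.det, h_eq, map_mul, LinearMap.transvection.det]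
  rfl

theorem exists_polynomial_eval_eq_det_one_add_smul (A : E →L[ℝ] E) :
    ∃ P : Polynomial ℝ, P.natDegree ≤ finrank ℝ E ∧
      ∀ t : ℝ, P.eval t = (1 + t • A : E →L[ℝ] E).det := by
  let b := finBasis ℝ E
  let M := LinearMap.toMatrix b b (A : E →ₗ[ℝ] E)
  refine ⟨((Polynomial.X : Polynomial ℝ) • M.map Polynomial.C +
    (1 : Matrix _ _ ℝ).map Polynomial.C).det, ?_, fun t => ?_⟩
  · simpa using Polynomial.natDegree_det_X_add_C_le M 1
  have h_matrix : LinearMap.toMatrix b b ((1 + t • A : E →L[ℝ] E) : E →ₗ[ℝ] E) = 1 + t • M := by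
    change LinearMap.toMatrix b b (LinearMap.id + t • (A : E →ₗ[ℝ] E)) = _
    rw [map_add, map_smul, LinearMap.toMatrix_id]
  rw [ContinuousLinearMap.det, ← LinearMap.det_toMatrix b, h_matrix, ← Polynomial.coe_evalRingHom,
    RingHom.map_det]
  congr 1
  ext i j
  simp only [Matrix.add_apply, Matrix.smul_apply, RingHom.mapMatrix_apply, Matrix.map_apply,
    Polynomial.coe_evalRingHom, smul_eq_mul, Polynomial.eval_add, Polynomial.eval_mul,
    Polynomial.eval_X, Polynomial.eval_C]
  rw [add_comm]

theorem exists_finset_eval_eq_sum {𝕜 : Type*} [Field 𝕜] {S : Set 𝕜} (hS : S.Infinite) (d : ℕ)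
    (s : 𝕜) : ∃ (t : Finset 𝕜) (w : 𝕜 → 𝕜), ↑t ⊆ S ∧
      ∀ P : Polynomial 𝕜, P.natDegree ≤ d → P.eval s = ∑ i ∈ t, P.eval i * w i := by
  classical
  obtain ⟨t, htS, ht⟩ := hS.exists_subset_card_eq (d + 1)
  refine ⟨t, fun i => (Lagrange.basis t id i).eval s, htS, fun P hP => ?_⟩
  have h_deg : P.degree < t.card := by
    rw [ht]
    exact Polynomial.degree_le_natDegree.trans_lt (by exact_mod_cast Nat.lt_succ_of_le hP)
  conv_lhs => rw [Lagrange.eq_interpolate (injOn_id _) h_deg]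
  simp [Lagrange.interpolate_apply, Polynomial.eval_finsetSum]

end DetOneAdd

section ContractionPerturbation

variable {E : Type*} [NormedAddCommGroup E] {H : E → E} {c : ℝ≥0}

theorem injective_id_add_of_lipschitzWith_lt_one (hc : c < 1) (hH : LipschitzWith c H) :
    Function.Injective fun x => x + H x := by
  have h_anti := AntilipschitzWith.id.add_lipschitzWith hH (by simpa using hc)
  exact h_anti.injective

theorem image_id_add_of_lipschitzWith_lt_one [CompleteSpace E] (hc : c < 1)
    (hH : LipschitzWith c H) {B : Set E} (h₀ : ∀ x ∉ B, H x = 0) :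
    (fun x => x + H x) '' B = B := by
  have h_inj := injective_id_add_of_lipschitzWith_lt_one hc hH
  have h_contr (y : E) : ContractingWith c fun x => y - H x :=
    ⟨hc, LipschitzWith.of_dist_le_mul fun a b => by
      simpa only [dist_sub_left] using hH.dist_le_mul a b⟩
  have h_surj : Function.Surjective fun x => x + H x := fun y =>
    ⟨ContractingWith.fixedPoint _ (h_contr y),
      (sub_eq_iff_eq_add.1 (h_contr y).fixedPoint_isFixedPt).symm⟩
  have h_compl : EqOn (fun x => x + H x) id Bᶜ := fun x hx => by simp [h₀ x hx]
  rw [← compl_inj_iff, ← image_compl_eq ⟨h_inj, h_surj⟩, h_compl.image_eq, image_id]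

end ContractionPerturbation

section NullLagrangian

variable {E : Type*} [NormedAddCommGroup E] [NormedSpace ℝ E] [FiniteDimensional ℝ E]
  [MeasurableSpace E] [BorelSpace E] {μ : Measure E} [μ.IsAddHaarMeasure]
  {G : E → E} {K : ℝ≥0} {B : Set E}

theorem addHaar_image_eq_zero_of_lipschitzWith (hG : LipschitzWith K G) {s : Set E}
    (hs : μ s = 0) : μ (G '' s) = 0 :=
  le_antisymm ((addHaar_image_le_of_lipschitzWith hG s).trans_eq (by simp [hs])) zero_le

theorem setIntegral_image_of_lipschitzWith (hG : LipschitzWith K G) (hB : MeasurableSet B)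
    (h_inj : InjOn G B) (q : E → ℝ) :
    ∫ z in G '' B, q z ∂μ = ∫ x in B, |(fderiv ℝ G x).det| * q (G x) ∂μ := by
  set s := B ∩ {x | DifferentiableAt ℝ G x}
  have h_null : μ (B \ s) = 0 := by
    refine measure_mono_null ?_ (hG.ae_differentiableAt (μ := μ))
    exact fun x hx hd => hx.2 ⟨hx.1, hd⟩
  have h_ae : s =ᵐ[μ] B :=
    (LE.le.eventuallyLE inter_subset_left).antisymm (ae_le_set.2 h_null)
  have h_image_ae : G '' s =ᵐ[μ] G '' B := by
    refine (LE.le.eventuallyLE (image_mono inter_subset_left)).antisymm (ae_le_set.2 ?_)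
    refine measure_mono_null (t := G '' (B \ s)) ?_
      (addHaar_image_eq_zero_of_lipschitzWith hG h_null)
    rw [sdiff_subset_iff, ← image_union, union_sdiff_self]
    exact image_mono subset_union_right
  rw [← setIntegral_congr_set h_image_ae, ← setIntegral_congr_set h_ae]
  simpa only [smul_eq_mul] using integral_image_eq_integral_abs_det_fderiv_smul μ
    (hB.inter (measurableSet_of_differentiableAt ℝ G))
    (fun x hx => (hx.2 : DifferentiableAt ℝ G x).hasFDerivAt.hasFDerivWithinAt)
    (h_inj.mono inter_subset_left) q

omit [BorelSpace E] [μ.IsAddHaarMeasure] in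
theorem integrableOn_det_of_norm_le {A : E → E →L[ℝ] E} {M : ℝ} (hA : Measurable A)
    (hM : ∀ x, ‖A x‖ ≤ M) (hB : μ B ≠ ⊤) : IntegrableOn (fun x => (A x).det) B μ := by
  have : ProperSpace (E →L[ℝ] E) := FiniteDimensional.proper ℝ _
  obtain ⟨C, hC⟩ := (isCompact_closedBall (0 : E →L[ℝ] E) M).exists_bound_of_continuousOn
    continuous_det.continuousOn
  have : IsFiniteMeasure (μ.restrict B) := ⟨by simpa using hB.lt_top⟩
  exact Integrable.of_bound (C := C) (continuous_det.measurable.comp hA).aestronglyMeasurable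
    (.of_forall fun x => hC _ (mem_closedBall_zero_iff.2 (hM x)))

omit [μ.IsAddHaarMeasure] in
theorem integrableOn_det_one_add_smul_fderiv (hG : LipschitzWith K G) (hB : μ B ≠ ⊤) (t : ℝ) :
    IntegrableOn (fun x => (1 + t • fderiv ℝ G x : E →L[ℝ] E).det) B μ := by
  refine integrableOn_det_of_norm_le (M := ‖(1 : E →L[ℝ] E)‖ + |t| * K)
    (((measurable_fderiv ℝ G).const_smul t).const_add 1) (fun x => ?_) hB
  refine (norm_add_le _ _).trans ?_
  rw [norm_smul, Real.norm_eq_abs]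
  gcongr
  exact norm_fderiv_le_of_lipschitz ℝ hG

theorem integral_det_one_add_fderiv_of_lipschitzWith_lt_one (hK : K < 1)
    (hG : LipschitzWith K G) (hB : MeasurableSet B) (h₀ : ∀ x ∉ B, G x = 0) :
    ∫ x in B, (1 + fderiv ℝ G x : E →L[ℝ] E).det ∂μ = μ.real B := by
  have h_area := setIntegral_image_of_lipschitzWith (μ := μ) (LipschitzWith.id.add hG) hB
    (injective_id_add_of_lipschitzWith_lt_one hK hG).injOn (fun _ => 1)
  have h_image : (fun x => id x + G x) '' B = B := image_id_add_of_lipschitzWith_lt_one hK hG h₀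
  rw [h_image, setIntegral_const, smul_eq_mul, mul_one] at h_area
  rw [h_area]
  refine setIntegral_congr_ae hB ?_
  filter_upwards [hG.ae_differentiableAt (μ := μ)] with x hx _
  have h_fderiv : fderiv ℝ (fun x => id x + G x) x = 1 + fderiv ℝ G x :=
    ((hasFDerivAt_id x).add hx.hasFDerivAt).fderiv
  rw [h_fderiv, mul_one, abs_of_pos]
  exact det_one_add_pos_of_norm_lt_one
    ((norm_fderiv_le_of_lipschitz ℝ hG).trans_lt (by exact_mod_cast hK))

-- For small `t` the map `id + tG` permutes `B`, so the volume `∫ det(1 + t DG)` of its image is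
-- that of `B`; the integral being polynomial in `t`, this extends to `t = 1`.
theorem integral_det_one_add_fderiv (hG : LipschitzWith K G) (hB : MeasurableSet B)
    (hBμ : μ B ≠ ⊤) (h₀ : ∀ x ∉ B, G x = 0) :
    ∫ x in B, (1 + fderiv ℝ G x : E →L[ℝ] E).det ∂μ = μ.real B := by
  have h_small (t : ℝ) (ht : t ∈ Ioo (0 : ℝ) (1 / (K + 1))) :
      ∫ x in B, (1 + t • fderiv ℝ G x : E →L[ℝ] E).det ∂μ = μ.real B := by
    have h_lt : ‖t‖₊ * K < 1 := by
      have h_one : t * (K + 1) < 1 := (lt_div_iff₀ (by positivity)).1 ht.2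
      rw [← NNReal.coe_lt_coe]
      simp only [NNReal.coe_mul, coe_nnnorm, Real.norm_of_nonneg ht.1.le, NNReal.coe_one]
      linarith [ht.1]
    rw [← integral_det_one_add_fderiv_of_lipschitzWith_lt_one (G := t • G) h_lt
      ((lipschitzWith_smul t).comp hG) hB (fun x hx => by simp [h₀ x hx])]
    simp only [fderiv_const_smul_field, Pi.smul_apply]
  obtain ⟨s, w, hs, h_eval⟩ :=
    exists_finset_eval_eq_sum (Ioo_infinite (by positivity : (0 : ℝ) < 1 / (K + 1)))
      (finrank ℝ E) 1
  have h_sum : ∑ t ∈ s, w t = 1 := by simpa using (h_eval 1 (by simp)).symm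
  have h_det (A : E →L[ℝ] E) :
      (1 + A : E →L[ℝ] E).det = ∑ t ∈ s, (1 + t • A : E →L[ℝ] E).det * w t := by
    obtain ⟨P, hP, hP_eval⟩ := exists_polynomial_eval_eq_det_one_add_smul A
    simpa only [hP_eval, one_smul] using h_eval P hP
  calc ∫ x in B, (1 + fderiv ℝ G x : E →L[ℝ] E).det ∂μ
      = ∑ t ∈ s, (∫ x in B, (1 + t • fderiv ℝ G x : E →L[ℝ] E).det ∂μ) * w t := by
        simp_rw [fun x => h_det (fderiv ℝ G x), ← integral_mul_const]
        exact integral_finsetSum _ fun t _ =>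
          (integrableOn_det_one_add_smul_fderiv hG hBμ t).mul_const _
    _ = ∑ t ∈ s, μ.real B * w t :=
        Finset.sum_congr rfl fun t ht => by rw [h_small t (hs ht)]
    _ = μ.real B := by rw [← Finset.mul_sum, h_sum, mul_one]

end NullLagrangian

section InvarianceOfDomain

theorem exists_lipschitzWith_smul_of_hasCompactSupport {X F : Type*} [PseudoMetricSpace X]
    [NormedAddCommGroup F] [NormedSpace ℝ F] {χ : X → ℝ} {w : X → F} {A K : ℝ≥0}
    (hχ : LipschitzWith A χ) (hχc : HasCompactSupport χ) (hw : LipschitzWith K w) :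
    ∃ K' : ℝ≥0, LipschitzWith K' fun x => χ x • w x := by
  obtain ⟨M, hM⟩ := hχc.exists_bound_of_continuous hχ.continuous
  obtain ⟨C, hC⟩ := hχc.isCompact.exists_bound_of_continuousOn hw.continuous.continuousOn
  have h_supp (a b : X) (ha : a ∈ tsupport χ) :
      dist (χ a • w a) (χ b • w b) ≤ (A * |C| + |M| * K) * dist a b := by
    have h_split : χ a • w a - χ b • w b = (χ a - χ b) • w a + χ b • (w a - w b) := by
      rw [sub_smul, smul_sub]
      abel
    calc dist (χ a • w a) (χ b • w b)
        ≤ dist (χ a) (χ b) * ‖w a‖ + ‖χ b‖ * dist (w a) (w b) := by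
          simpa only [dist_eq_norm, h_split, norm_smul] using
            norm_add_le ((χ a - χ b) • w a) (χ b • (w a - w b))
      _ ≤ (A * dist a b) * |C| + |M| * (K * dist a b) := by
          gcongr
          · exact hχ.dist_le_mul a b
          · exact (hC a ha).trans (le_abs_self C)
          · exact (hM b).trans (le_abs_self M)
          · exact hw.dist_le_mul a b
      _ = (A * |C| + |M| * K) * dist a b := by ring
  refine ⟨A * ‖C‖₊ + ‖M‖₊ * K, LipschitzWith.of_dist_le_mul fun a b => ?_⟩
  simp only [NNReal.coe_add, NNReal.coe_mul, coe_nnnorm, Real.norm_eq_abs]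
  by_cases ha : a ∈ tsupport χ
  · exact h_supp a b ha
  by_cases hb : b ∈ tsupport χ
  · simpa only [dist_comm] using h_supp b a hb
  · rw [image_eq_zero_of_notMem_tsupport ha, image_eq_zero_of_notMem_tsupport hb, zero_smul,
      zero_smul, dist_self]
    positivity

variable {E : Type*} [NormedAddCommGroup E] [NormedSpace ℝ E]

theorem one_add_fderiv_smul_sub_id {F : E → E} {χ : E → ℝ} {y : E} (hχ : χ =ᶠ[𝓝 y] 1)
    (hF : DifferentiableAt ℝ F y) : 1 + fderiv ℝ (fun z => χ z • (F z - z)) y = fderiv ℝ F y := by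
  have h_eq : (fun z => χ z • (F z - z)) =ᶠ[𝓝 y] fun z => F z - z := by
    filter_upwards [hχ] with z hz
    simp [hz]
  rw [h_eq.fderiv_eq, fderiv_fun_sub hF differentiableAt_fun_id, fderiv_fun_id]
  exact add_sub_cancel _ _

/-- The local degree on `Q` of a Lipschitz map `h` that has the left inverse `g` on `Q`: on
`h '' Q` it is the sign of the Jacobian of `h` at the preimage, elsewhere it vanishes. The sign
of `J` is encoded as `J / |J|`, which is `0` for `J = 0`. -/
noncomputable def localDegree (h g : E → E) (Q : Set E) : E → ℝ :=
  (h '' Q).indicator fun z => (fderiv ℝ h (g z)).det / |(fderiv ℝ h (g z)).det|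

theorem norm_localDegree_le (h g : E → E) (Q : Set E) (z : E) : ‖localDegree h g Q z‖ ≤ 1 := by
  refine (norm_indicator_le_norm_self _ _).trans ?_
  rw [norm_div, Real.norm_eq_abs, Real.norm_eq_abs, abs_abs]
  exact div_self_le_one _

variable [FiniteDimensional ℝ E] [MeasurableSpace E] [BorelSpace E] {μ : Measure E}
  [μ.IsAddHaarMeasure]

theorem integral_det_fderiv_eq_of_eqOn_annulus {F₀ F₁ : E → E} {K₀ K₁ : ℝ≥0}
    (hF₀ : LipschitzWith K₀ F₀) (hF₁ : LipschitzWith K₁ F₁) {x : E} {R R₀ : ℝ} (hR : 0 < R)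
    (hR₀ : R < R₀) (h_eq : EqOn F₁ F₀ (Metric.ball x R₀ \ Metric.closedBall x R)) :
    ∫ y in Metric.closedBall x R, (fderiv ℝ F₁ y).det ∂μ =
      ∫ y in Metric.closedBall x R, (fderiv ℝ F₀ y).det ∂μ := by
  let χ : ContDiffBump x := ⟨R, R₀, hR, hR₀⟩
  set B := Metric.ball x R₀
  set Q := Metric.closedBall x R
  have hQ : MeasurableSet Q := Metric.isClosed_closedBall.measurableSet
  have hχ₀ (y : E) (hy : y ∉ B) : χ y = 0 := χ.zero_of_le_dist (not_lt.1 hy)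
  have h_int {F : E → E} {K : ℝ≥0} (hF : LipschitzWith K F) :
      ∫ y in Q, (fderiv ℝ F y).det ∂μ = μ.real B -
        ∫ y in B \ Q, (1 + fderiv ℝ (fun z => χ z • (F z - z)) y : E →L[ℝ] E).det ∂μ := by
    obtain ⟨A, hA⟩ :=
      ContDiff.lipschitzWith_of_hasCompactSupport χ.hasCompactSupport (χ.contDiff (n := 1))
        one_ne_zero
    obtain ⟨K', hK'⟩ := exists_lipschitzWith_smul_of_hasCompactSupport hA χ.hasCompactSupport
      (hF.sub LipschitzWith.id)
    have h_total := integral_det_one_add_fderiv (μ := μ) hK' Metric.isOpen_ball.measurableSet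
      measure_ball_lt_top.ne (fun y hy => by rw [hχ₀ y hy, zero_smul])
    have h_integrable := integrableOn_det_one_add_smul_fderiv (μ := μ) (B := B) hK'
      measure_ball_lt_top.ne 1
    simp only [one_smul] at h_integrable
    rw [eq_sub_iff_add_eq, ← h_total, ← integral_inter_add_sdiff hQ h_integrable,
      inter_eq_self_of_subset_right (Metric.closedBall_subset_ball hR₀)]
    congr 1
    refine setIntegral_congr_ae hQ ?_
    filter_upwards [hF.ae_differentiableAt (μ := μ), measure_eq_zero_iff_ae_notMem.1
      (Measure.addHaar_sphere_of_ne_zero μ x hR.ne')] with y hy h_sphere hyQ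
    have hy_ball : y ∈ Metric.ball x R := lt_of_le_of_ne hyQ h_sphere
    exact congrArg ContinuousLinearMap.det
      (one_add_fderiv_smul_sub_id (χ.eventuallyEq_one_of_mem_ball hy_ball) hy).symm
  rw [h_int hF₁, h_int hF₀]
  congr 1
  refine setIntegral_congr_fun (Metric.isOpen_ball.measurableSet.diff hQ) fun y hy => ?_
  have h_near : (fun z => χ z • (F₁ z - z)) =ᶠ[𝓝 y] fun z => χ z • (F₀ z - z) := by
    filter_upwards [(Metric.isOpen_ball.sdiff Metric.isClosed_closedBall).mem_nhds hy] with z hz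
    rw [h_eq hz]
  simp only [h_near.fderiv_eq]

variable {h g : E → E} {K K' : ℝ≥0} {x : E} {R R₀ : ℝ}

theorem integral_det_mul_fderiv_comp_eq_zero (hh : LipschitzWith K h) (hR : 0 < R) (hR₀ : R < R₀)
    {φ : E → ℝ} (hφ : ContDiff ℝ 1 φ) (hφc : HasCompactSupport φ)
    (hφ₀ : ∀ y ∈ Metric.ball x R₀ \ Metric.closedBall x R, φ (h y) = 0) (v : E) :
    ∫ y in Metric.closedBall x R, (fderiv ℝ h y).det * fderiv ℝ φ (h y) v ∂μ = 0 := by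
  obtain ⟨A, hA⟩ := ContDiff.lipschitzWith_of_hasCompactSupport hφc hφ one_ne_zero
  have h_lip : LipschitzWith (K + ‖ContinuousLinearMap.toSpanSingleton ℝ v‖₊ * (A * K))
      fun y => h y + φ (h y) • v :=
    hh.add ((ContinuousLinearMap.toSpanSingleton ℝ v).lipschitz.comp (hA.comp hh))
  have h_eq := integral_det_fderiv_eq_of_eqOn_annulus (μ := μ) (x := x) hh h_lip hR hR₀
    (fun y hy => by simp [hφ₀ y hy])
  have h_integrable {F : E → E} {C : ℝ≥0} (hF : LipschitzWith C F) :
      IntegrableOn (fun y => (fderiv ℝ F y).det) (Metric.closedBall x R) μ :=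
    integrableOn_det_of_norm_le (measurable_fderiv ℝ F)
      (fun _ => norm_fderiv_le_of_lipschitz ℝ hF) measure_closedBall_lt_top.ne
  rw [← sub_eq_zero, ← integral_sub (h_integrable h_lip) (h_integrable hh)] at h_eq
  rw [← h_eq]
  refine integral_congr_ae (ae_restrict_of_ae ?_)
  filter_upwards [hh.ae_differentiableAt (μ := μ)] with y hy
  have hφh : HasFDerivAt (fun z => φ (h z)) ((fderiv ℝ φ (h y)).comp (fderiv ℝ h y)) y :=
    (hφ.differentiable one_ne_zero (h y)).hasFDerivAt.comp y hy.hasFDerivAt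
  rw [(hy.hasFDerivAt.fun_add (hφh.smul_const v)).fderiv, det_add_smulRight_comp]
  ring

theorem measurable_localDegree {Q : Set E} (hg : Measurable g) (hQ : MeasurableSet (h '' Q)) :
    Measurable (localDegree h g Q) := by
  have h_det : Measurable fun z => (fderiv ℝ h (g z)).det :=
    continuous_det.measurable.comp ((measurable_fderiv ℝ h).comp hg)
  exact (h_det.div h_det.abs).indicator hQ

theorem integral_localDegree_mul (hh : LipschitzWith K h) {Q : Set E} (hQ : IsCompact Q)
    (h_inv : LeftInvOn g h Q) (q : E → ℝ) :
    ∫ z, localDegree h g Q z * q z ∂μ = ∫ y in Q, (fderiv ℝ h y).det * q (h y) ∂μ := by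
  rw [← setIntegral_eq_integral_of_forall_compl_eq_zero (s := h '' Q) (fun z hz => by
      rw [localDegree, indicator_of_notMem hz, zero_mul]),
    setIntegral_image_of_lipschitzWith hh hQ.measurableSet h_inv.injOn]
  refine setIntegral_congr_fun hQ.measurableSet fun y hy => ?_
  simp only [localDegree, indicator_of_mem (mem_image_of_mem h hy), h_inv hy]
  rw [← mul_assoc, mul_div_cancel_of_imp' fun h_zero => abs_eq_zero.1 h_zero]

theorem ae_abs_localDegree_eq_one (hh : LipschitzWith K h) {Q : Set E}
    (h_inv : LeftInvOn g h Q) : ∀ᵐ z ∂μ, z ∈ h '' Q → |localDegree h g Q z| = 1 := by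
  have h_crit : μ (h '' {y | DifferentiableAt ℝ h y ∧ (fderiv ℝ h y).det = 0}) = 0 :=
    addHaar_image_eq_zero_of_det_fderivWithin_eq_zero μ
      (fun y hy => (hy.1 : DifferentiableAt ℝ h y).hasFDerivAt.hasFDerivWithinAt)
      (fun y hy => hy.2)
  have h_nondiff : μ (h '' {y | ¬DifferentiableAt ℝ h y}) = 0 :=
    addHaar_image_eq_zero_of_lipschitzWith hh (hh.ae_differentiableAt (μ := μ))
  filter_upwards [measure_eq_zero_iff_ae_notMem.1 h_crit,
    measure_eq_zero_iff_ae_notMem.1 h_nondiff] with z hz_crit hz_nondiff hz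
  obtain ⟨y, hy, rfl⟩ := hz
  have hyd : DifferentiableAt ℝ h y := by_contra fun hc => hz_nondiff ⟨y, hc, rfl⟩
  have h_det : (fderiv ℝ h y).det ≠ 0 := fun hc => hz_crit ⟨y, ⟨hyd, hc⟩, rfl⟩
  rw [localDegree, indicator_of_mem (mem_image_of_mem h hy), h_inv hy, abs_div, abs_abs,
    div_self (abs_ne_zero.2 h_det)]

theorem hasWeakFDerivOn_localDegree (hh : LipschitzWith K h) (hg : LipschitzWith K' g)
    (hR : 0 < R) (hR₀ : R < R₀) (h_inv : LeftInvOn g h (Metric.ball x R₀)) {r : ℝ}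
    (hr : K' * r ≤ R) :
    HasWeakFDerivOn μ (Metric.ball (h x) r) (localDegree h g (Metric.closedBall x R)) 0 := by
  have h_inv_Q := h_inv.mono (Metric.closedBall_subset_ball hR₀)
  have h_image : IsCompact (h '' Metric.closedBall x R) :=
    (isCompact_closedBall x R).image hh.continuous
  refine ⟨?_, integrable_zero E (E →L[ℝ] ℝ) _, fun φ hφ hφc hφr v => ?_⟩
  · have : IsFiniteMeasure (μ.restrict (Metric.ball (h x) r)) :=
      ⟨by simpa using measure_ball_lt_top⟩
    exact Integrable.of_bound (measurable_localDegree hg.continuous.measurable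
      h_image.measurableSet).aestronglyMeasurable 1
      (.of_forall (norm_localDegree_le h g _))
  have hφ₀ (y : E) (hy : y ∈ Metric.ball x R₀ \ Metric.closedBall x R) : φ (h y) = 0 := by
    refine image_eq_zero_of_notMem_tsupport fun h_mem => hy.2 ?_
    have h_dist := hg.dist_le_mul (h y) (h x)
    rw [h_inv hy.1, h_inv (Metric.mem_ball_self (hR.trans hR₀))] at h_dist
    exact h_dist.trans ((mul_le_mul_of_nonneg_left (hφr h_mem).le K'.2).trans hr)
  rw [setIntegral_mul_eq_integral _ ((tsupport_fderiv_apply_subset ℝ v).trans hφr),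
    integral_localDegree_mul hh (isCompact_closedBall x R) h_inv_Q,
    integral_det_mul_fderiv_comp_eq_zero hh hR hR₀ hφ hφc hφ₀]
  simp

theorem HasWeakFDerivOn.ae_eq_average_of_zero {D S : Set E} {V : E → ℝ}
    (hV : HasWeakFDerivOn μ D V 0) (hD : IsOpen D) (hb : Bornology.IsBounded D) (hSD : S ⊆ D)
    (hSm : MeasurableSet S) (hSc : Convex ℝ S) (hS : AdmitsSmallShifts S D) :
    ∀ᵐ z ∂μ.restrict S, V z = ⨍ y in S, V y ∂μ := by
  have h_le := hV.integral_norm_sub_average_le hD hb hSD hSm hSc hS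
  simp only [Pi.zero_apply, norm_zero, integral_zero, mul_zero] at h_le
  have h_const : IntegrableOn (fun _ => ⨍ y in S, V y ∂μ) S μ :=
    integrableOn_of_continuous_of_isBounded continuous_const (hb.subset hSD)
  have h_zero := (integral_eq_zero_iff_of_nonneg (fun _ => norm_nonneg _)
    ((hV.integrableOn.mono_set hSD).sub h_const).norm).1
    (h_le.antisymm (integral_nonneg fun _ => norm_nonneg _))
  filter_upwards [h_zero] with z hz
  exact sub_eq_zero.1 (norm_eq_zero.1 hz)

theorem addHaar_inter_image_pos (hh : Continuous h) (hg : LipschitzWith K' g) {U V : Set E}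
    (hU : U ∈ 𝓝 x) (hV : V ∈ 𝓝 (h x)) (h_inv : LeftInvOn g h U) : 0 < μ (V ∩ h '' U) := by
  refine pos_iff_ne_zero.2 fun h_null => ?_
  have h_sub : h ⁻¹' V ∩ U ⊆ g '' (V ∩ h '' U) := fun y hy =>
    ⟨h y, ⟨hy.1, mem_image_of_mem h hy.2⟩, h_inv hy.2⟩
  exact (Measure.measure_pos_of_mem_nhds μ (inter_mem (hh.continuousAt hV) hU)).ne'
    (measure_mono_null h_sub (addHaar_image_eq_zero_of_lipschitzWith hg h_null))

theorem exists_ae_localDegree_eq (hh : LipschitzWith K h) (hg : LipschitzWith K' g)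
    (hR : 0 < R) (hR₀ : R < R₀) (h_inv : LeftInvOn g h (Metric.ball x R₀)) :
    ∃ r > 0, ∃ c, ∀ᵐ z ∂μ.restrict (Metric.ball (h x) r),
      localDegree h g (Metric.closedBall x R) z = c := by
  set r := R / (K' + 1)
  have hr : 0 < r := by positivity
  have hr_le : K' * r ≤ R := by
    calc K' * r ≤ (K' + 1) * r := by gcongr; exact le_add_of_nonneg_right zero_le_one
      _ = R := mul_div_cancel₀ R (by positivity)
  have h_sub : Metric.closedBall (h x) (r / 2) ⊆ Metric.ball (h x) r :=
    Metric.closedBall_subset_ball (half_lt_self hr)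
  refine ⟨r / 2, half_pos hr, _, ae_restrict_of_ae_restrict_of_subset Metric.ball_subset_closedBall
    ((hasWeakFDerivOn_localDegree (μ := μ) hh hg hR hR₀ h_inv hr_le).ae_eq_average_of_zero
      Metric.isOpen_ball Metric.isBounded_ball h_sub measurableSet_closedBall
      (convex_closedBall _ _) ?_)⟩
  exact admitsSmallShifts_of_isCompact (isCompact_closedBall _ _) Metric.isOpen_ball h_sub

-- Near `h x` the local degree of `h` has vanishing weak derivative, hence is constant. Its modulus
-- is `1` on the image, which has positive measure, so that no open set can lie off the image.
theorem image_mem_nhds_of_leftInvOn_lipschitzWith (hh : LipschitzWith K h)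
    (hg : LipschitzWith K' g) {U : Set E} (hU : U ∈ 𝓝 x) (h_inv : LeftInvOn g h U) :
    h '' U ∈ 𝓝 (h x) := by
  obtain ⟨R₀, hR₀, hU⟩ := Metric.mem_nhds_iff.1 hU
  set Q := Metric.closedBall x (R₀ / 2)
  have hQU : Q ⊆ Metric.ball x R₀ := Metric.closedBall_subset_ball (half_lt_self hR₀)
  have h_inv_Q : LeftInvOn g h Q := h_inv.mono (hQU.trans hU)
  have hQ : IsClosed (h '' Q) :=
    ((isCompact_closedBall x (R₀ / 2)).image hh.continuous).isClosed
  let μ : Measure E := Measure.addHaar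
  obtain ⟨r, hr, c, hc⟩ := exists_ae_localDegree_eq (μ := μ) hh hg (half_pos hR₀)
    (half_lt_self hR₀) (h_inv.mono hU)
  rw [ae_restrict_iff' measurableSet_ball] at hc
  have h_image : ∃ᵐ z ∂μ, z ∈ Metric.ball (h x) r ∩ h '' Q :=
    frequently_ae_mem_iff.2 (addHaar_inter_image_pos hh.continuous hg
      (Metric.closedBall_mem_nhds x (half_pos hR₀)) (Metric.ball_mem_nhds (h x) hr) h_inv_Q).ne'
  obtain ⟨z, ⟨hz_ball, hz_image⟩, hz_abs, hz_const⟩ :=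
    (h_image.and_eventually ((ae_abs_localDegree_eq_one hh h_inv_Q).and hc)).exists
  have h_sub : Metric.ball (h x) r ⊆ h '' Q := by
    by_contra h_not
    have h_open : 0 < μ (Metric.ball (h x) r \ h '' Q) :=
      (Metric.isOpen_ball.sdiff hQ).measure_pos μ (sdiff_nonempty.2 h_not)
    obtain ⟨y, ⟨hy_ball, hy_image⟩, hy_const⟩ :=
      ((frequently_ae_mem_iff.2 h_open.ne').and_eventually hc).exists
    have h_zero : c = 0 := by
      rw [← hy_const hy_ball, localDegree, indicator_of_notMem hy_image]
    have h_one := hz_abs hz_image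
    rw [hz_const hz_ball, h_zero, abs_zero] at h_one
    exact zero_ne_one h_one
  exact mem_of_superset (Metric.ball_mem_nhds (h x) hr)
    (h_sub.trans (image_mono (hQU.trans hU)))

end InvarianceOfDomain

section LipschitzChart

variable {E : Type*} [NormedAddCommGroup E] [NormedSpace ℝ E] {Ω : Set E}

/-- A bi-Lipschitz chart of `Ω` around points of its closure. The chart straightens `source ∩ Ω`
into the convex set `inner`, while its inverse is defined on the larger set `outer`; this leaves
the room that is needed to mollify functions on `outer`. Both maps are extended to the whole
space. -/
structure LipschitzChart (Ω : Set E) where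
  source : Set E
  inner : Set E
  outer : Set E
  toFun : E → E
  invFun : E → E
  const : ℝ≥0
  isOpen_source : IsOpen source
  isOpen_outer : IsOpen outer
  isBounded_outer : Bornology.IsBounded outer
  inner_subset_outer : inner ⊆ outer
  isOpen_inner : IsOpen inner
  convex_inner : Convex ℝ inner
  admitsSmallShifts : AdmitsSmallShifts inner outer
  lipschitzWith_toFun : LipschitzWith const toFun
  lipschitzWith_invFun : LipschitzWith const invFun
  mapsTo_toFun : MapsTo toFun (source ∩ Ω) inner
  mapsTo_invFun : MapsTo invFun outer Ω
  leftInvOn : LeftInvOn invFun toFun source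
  rightInvOn : LeftInvOn toFun invFun outer

variable [FiniteDimensional ℝ E] {x : E}

theorem exists_lipschitzChart_of_mem_nhds (hx : Ω ∈ 𝓝 x) :
    ∃ c : LipschitzChart Ω, x ∈ c.source := by
  obtain ⟨r, hr, h_sub⟩ := Metric.mem_nhds_iff.1 hx
  have h_closedBall : Metric.closedBall x (r / 2) ⊆ Metric.ball x r :=
    Metric.closedBall_subset_ball (half_lt_self hr)
  have h_ball : Metric.ball x (r / 2) ⊆ Metric.closedBall x (r / 2) := Metric.ball_subset_closedBall
  refine ⟨{
    source := Metric.ball x (r / 2)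
    inner := Metric.ball x (r / 2)
    outer := Metric.ball x r
    toFun := id
    invFun := id
    const := 1
    isOpen_source := Metric.isOpen_ball
    isOpen_outer := Metric.isOpen_ball
    isBounded_outer := Metric.isBounded_ball
    inner_subset_outer := h_ball.trans h_closedBall
    isOpen_inner := Metric.isOpen_ball
    convex_inner := convex_ball _ _
    admitsSmallShifts := ?_
    lipschitzWith_toFun := LipschitzWith.id
    lipschitzWith_invFun := LipschitzWith.id
    mapsTo_toFun := fun _ hy => hy.1
    mapsTo_invFun := h_sub
    leftInvOn := fun _ _ => rfl
    rightInvOn := fun _ _ => rfl }, Metric.mem_ball_self (half_pos hr)⟩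
  exact (admitsSmallShifts_of_isCompact (isCompact_closedBall x (r / 2)) Metric.isOpen_ball
    h_closedBall).mono_left h_ball

theorem exists_lipschitzChart_of_halfSpace {U : Set E} {h₀ g₀ : E → E} {K : ℝ≥0}
    {ℓ : E →L[ℝ] ℝ} (hℓ : ℓ ≠ 0) (hU : IsOpen U) (hxU : x ∈ U) (hh₀ : LipschitzOnWith K h₀ U)
    (hg₀ : LipschitzOnWith K g₀ (h₀ '' U)) (h_inv₀ : LeftInvOn g₀ h₀ U)
    (h_half : h₀ '' (U ∩ Ω) = h₀ '' U ∩ {y | 0 < ℓ y}) :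
    ∃ c : LipschitzChart Ω, x ∈ c.source := by
  obtain ⟨h, hh, h_eq⟩ := hh₀.extend_finite_dimension
  obtain ⟨g, hg, g_eq⟩ := hg₀.extend_finite_dimension
  have h_inv : LeftInvOn g h U := fun y hy => by
    rw [← h_eq hy, ← g_eq (mem_image_of_mem h₀ hy), h_inv₀ hy]
  rw [(h_eq.mono inter_subset_left).image_eq, h_eq.image_eq] at h_half
  borelize E
  obtain ⟨r, hr, hrU⟩ := Metric.mem_nhds_iff.1
    (image_mem_nhds_of_leftInvOn_lipschitzWith hh hg (hU.mem_nhds hxU) h_inv)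
  have h_surj (z : E) (hz : z ∈ halfBall ℓ (h x) r) : ∃ y ∈ U ∩ Ω, h y = z :=
    h_half.symm.subset ⟨hrU hz.1, hz.2⟩
  exact ⟨{
    source := U ∩ h ⁻¹' Metric.ball (h x) (r / 2)
    inner := halfBall ℓ (h x) (r / 2)
    outer := halfBall ℓ (h x) r
    toFun := h
    invFun := g
    const := lipschitzExtensionConstant E * K
    isOpen_source := hU.inter (Metric.isOpen_ball.preimage hh.continuous)
    isOpen_outer := isOpen_halfBall
    isBounded_outer := isBounded_halfBall
    inner_subset_outer := halfBall_subset_halfBall (half_le_self hr.le)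
    isOpen_inner := isOpen_halfBall
    convex_inner := convex_halfBall
    admitsSmallShifts := admitsSmallShifts_halfBall hℓ (half_lt_self hr)
    lipschitzWith_toFun := hh
    lipschitzWith_invFun := hg
    mapsTo_toFun := fun y hy =>
      ⟨hy.1.2, (h_half.subset (mem_image_of_mem h ⟨hy.1.1, hy.2⟩)).2⟩
    mapsTo_invFun := fun z hz => by
      obtain ⟨y, hy, rfl⟩ := h_surj z hz
      exact (h_inv hy.1).symm ▸ hy.2
    leftInvOn := h_inv.mono inter_subset_left
    rightInvOn := fun z hz => by
      obtain ⟨y, hy, rfl⟩ := h_surj z hz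
      rw [h_inv hy.1] }, hxU, Metric.mem_ball_self (half_pos hr)⟩

theorem IsLipschitzDomain.exists_lipschitzChart {n : ℕ} {Ω : Set (EVec n)}
    (hΩ : IsLipschitzDomain Ω) (x : EVec n) (hx : x ∈ closure Ω) :
    ∃ c : LipschitzChart Ω, x ∈ c.source := by
  obtain ⟨h_open, -, -, h_frontier⟩ := hΩ
  by_cases hxΩ : x ∈ Ω
  · exact exists_lipschitzChart_of_mem_nhds (h_open.mem_nhds hxΩ)
  · obtain ⟨U, h, g, K, e, he, hU, hxU, hh, hg, h_inv, h_half⟩ :=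
      h_frontier x (h_open.frontier_eq ▸ ⟨hx, hxΩ⟩)
    refine exists_lipschitzChart_of_halfSpace (ℓ := innerSL ℝ e) ?_ hU hxU hh hg h_inv h_half
    rw [← norm_ne_zero_iff, innerSL_apply_norm, he]
    exact one_ne_zero

end LipschitzChart

section PoincareOnDomain

theorem exists_superset_of_isPreconnected_of_finite_cover {X ι : Type*} [TopologicalSpace X]
    {Ω : Set X} {P : Set X → Prop} (hΩ : IsPreconnected Ω) (hΩ₀ : Ω.Nonempty)
    (h_union : ∀ S T, P S → P T → (S ∩ T).Nonempty → P (S ∪ T)) [Finite ι] {S : ι → Set X}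
    (hSo : ∀ i, IsOpen (S i)) (hSP : ∀ i, P (S i)) (h_cover : Ω ⊆ ⋃ i, S i) :
    ∃ T, P T ∧ Ω ⊆ T := by
  have h_joined {x y : X} (hx : x ∈ Ω) (hy : y ∈ Ω) : ∃ T, P T ∧ x ∈ T ∧ y ∈ T := by
    refine hΩ.induction₂ (fun x y => ∃ T, P T ∧ x ∈ T ∧ y ∈ T) (fun x hx => ?_) ?_ ?_ hx hy
    · obtain ⟨i, hi⟩ := mem_iUnion.1 (h_cover hx)
      filter_upwards [mem_nhdsWithin_of_mem_nhds ((hSo i).mem_nhds hi)] with y hy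
      exact ⟨S i, hSP i, hi, hy⟩
    · rintro x y z - - - ⟨T, hT, hxT, hyT⟩ ⟨T', hT', hyT', hzT'⟩
      exact ⟨T ∪ T', h_union T T' hT hT' ⟨y, hyT, hyT'⟩, .inl hxT, .inr hzT'⟩
    · rintro x y - - ⟨T, hT, hxT, hyT⟩
      exact ⟨T, hT, hyT, hxT⟩
  obtain ⟨x₀, hx₀⟩ := hΩ₀
  have h_finset (s : Set ι) (hs : s.Finite) : ∃ T, P T ∧ x₀ ∈ T ∧ ∀ i ∈ s, Ω ∩ S i ⊆ T := by
    induction s, hs using Set.Finite.induction_on with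
    | empty =>
      obtain ⟨T, hT, hxT, -⟩ := h_joined hx₀ hx₀
      exact ⟨T, hT, hxT, fun i hi => hi.elim⟩
    | @insert i s _ _ ih =>
      obtain ⟨T, hT, hxT, hsT⟩ := ih
      rcases (Ω ∩ S i).eq_empty_or_nonempty with h_empty | ⟨y, hyΩ, hyS⟩
      · exact ⟨T, hT, hxT, forall_mem_insert.2 ⟨h_empty ▸ empty_subset T, hsT⟩⟩
      · obtain ⟨T', hT', hxT', hyT'⟩ := h_joined hx₀ hyΩ
        have h_inner := h_union T' (S i) hT' (hSP i) ⟨y, hyT', hyS⟩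
        refine ⟨T ∪ (T' ∪ S i), h_union _ _ hT h_inner ⟨x₀, hxT, .inl hxT'⟩, .inl hxT,
          forall_mem_insert.2 ⟨fun z hz => .inr (.inr hz.2), fun j hj z hz => .inl (hsT j hj hz)⟩⟩
  obtain ⟨T, hT, -, hST⟩ := h_finset univ finite_univ
  refine ⟨T, hT, fun y hy => ?_⟩
  obtain ⟨i, hi⟩ := mem_iUnion.1 (h_cover hy)
  exact hST i (mem_univ i) ⟨hy, hi⟩

section Overlap

variable {X F : Type*} [MeasurableSpace X] {μ : Measure X} [NormedAddCommGroup F] {S T : Set X}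
  {v : X → F}

theorem setIntegral_norm_le_add_const (hT : μ T ≠ ⊤) (hv : IntegrableOn v T μ) (a b : F) :
    ∫ x in T, ‖v x - a‖ ∂μ ≤ ∫ x in T, ‖v x - b‖ ∂μ + μ.real T * ‖a - b‖ := by
  have h_tri := integral_norm_sub_le hv (integrableOn_const (C := b) hT)
    (integrableOn_const (C := a) hT)
  rwa [setIntegral_const, smul_eq_mul, norm_sub_rev b a] at h_tri

theorem measureReal_inter_mul_norm_sub_le (hS : μ S ≠ ⊤) (hT : μ T ≠ ⊤) (hvS : IntegrableOn v S μ)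
    (hvT : IntegrableOn v T μ) (a b : F) :
    μ.real (S ∩ T) * ‖a - b‖ ≤ ∫ x in S, ‖v x - a‖ ∂μ + ∫ x in T, ‖v x - b‖ ∂μ := by
  have h_inter : μ (S ∩ T) ≠ ⊤ := measure_ne_top_of_subset inter_subset_left hS
  have h_tri := integral_norm_sub_le (integrableOn_const (C := a) h_inter)
    (hvS.mono_set inter_subset_left) (integrableOn_const (C := b) h_inter)
  rw [setIntegral_const, smul_eq_mul] at h_tri
  simp only [norm_sub_rev a] at h_tri
  rw [norm_sub_rev b a] at h_tri
  exact h_tri.trans (add_le_add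
    (setIntegral_norm_mono inter_subset_left (hvS.sub (integrableOn_const hS)))
    (setIntegral_norm_mono inter_subset_right (hvT.sub (integrableOn_const hT))))

theorem setIntegral_norm_sub_union_le (hSm : MeasurableSet S) (hTm : MeasurableSet T)
    (hS : μ S ≠ ⊤) (hT : μ T ≠ ⊤) (h_inter : μ (S ∩ T) ≠ 0) (hvS : IntegrableOn v S μ)
    (hvT : IntegrableOn v T μ) (a b : F) :
    ∫ x in S ∪ T, ‖v x - a‖ ∂μ ≤ (1 + μ.real T / μ.real (S ∩ T)) *
      (∫ x in S, ‖v x - a‖ ∂μ + ∫ x in T, ‖v x - b‖ ∂μ) := by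
  have h_pos : 0 < μ.real (S ∩ T) := ENNReal.toReal_pos h_inter
    (measure_ne_top_of_subset inter_subset_left hS)
  have h_int_S : IntegrableOn (fun x => v x - a) S μ := hvS.sub (integrableOn_const hS)
  have h_int_T : IntegrableOn (fun x => v x - a) T μ := hvT.sub (integrableOn_const hT)
  have h_dist := measureReal_inter_mul_norm_sub_le hS hT hvS hvT a b
  have h_split : ∫ x in S ∪ T, ‖v x - a‖ ∂μ ≤
      ∫ x in S, ‖v x - a‖ ∂μ + ∫ x in T, ‖v x - a‖ ∂μ := by
    rw [← union_sdiff_self, setIntegral_union disjoint_sdiff_right (hTm.diff hSm) h_int_S.norm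
      (h_int_T.mono_set sdiff_subset).norm]
    exact add_le_add le_rfl (setIntegral_norm_mono sdiff_subset h_int_T)
  have h_const := setIntegral_norm_le_add_const hT hvT a b
  rw [mul_comm, ← le_div_iff₀ h_pos] at h_dist
  have h_mul := mul_le_mul_of_nonneg_left h_dist (measureReal_nonneg (μ := μ) (s := T))
  rw [mul_div_assoc', ← div_mul_eq_mul_div] at h_mul
  linarith

end Overlap

variable {E : Type*} [NormedAddCommGroup E] [NormedSpace ℝ E] [MeasurableSpace E]
  {μ : Measure E} {Ω S T : Set E}

/-- The Poincaré inequality on `S` for functions with an integrable weak derivative on `Ω`: in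
`L¹(S)` they are close to constants, with a bound in terms of the derivative on all of `Ω`. -/
def PoincareOn (μ : Measure E) (Ω S : Set E) : Prop :=
  ∃ C : ℝ≥0, ∀ (v : E → ℝ) (G : E → E →L[ℝ] ℝ), HasWeakFDerivOn μ Ω v G →
    ∃ a, ∫ x in S, ‖v x - a‖ ∂μ ≤ C * ∫ x in Ω, ‖G x‖ ∂μ

theorem PoincareOn.union (hSP : PoincareOn μ Ω S) (hTP : PoincareOn μ Ω T)
    (hSm : MeasurableSet S) (hTm : MeasurableSet T) (hSΩ : S ⊆ Ω) (hTΩ : T ⊆ Ω) (hΩ : μ Ω ≠ ⊤)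
    (h_inter : μ (S ∩ T) ≠ 0) : PoincareOn μ Ω (S ∪ T) := by
  obtain ⟨C, hC⟩ := hSP
  obtain ⟨C', hC'⟩ := hTP
  set q : ℝ≥0 := 1 + (μ T).toNNReal / (μ (S ∩ T)).toNNReal
  refine ⟨q * (C + C'), fun v G hv => ?_⟩
  obtain ⟨a, ha⟩ := hC v G hv
  obtain ⟨b, hb⟩ := hC' v G hv
  refine ⟨a, (setIntegral_norm_sub_union_le hSm hTm (measure_ne_top_of_subset hSΩ hΩ)
    (measure_ne_top_of_subset hTΩ hΩ) h_inter (hv.integrableOn.mono_set hSΩ)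
    (hv.integrableOn.mono_set hTΩ) a b).trans ?_⟩
  calc _ ≤ (q : ℝ) * (C * ∫ x in Ω, ‖G x‖ ∂μ + C' * ∫ x in Ω, ‖G x‖ ∂μ) :=
        mul_le_mul_of_nonneg_left (add_le_add ha hb) q.2
    _ = _ := by
        push_cast
        ring

theorem PoincareOn.integral_norm_le_of_integral_eq_zero (hΩP : PoincareOn μ Ω Ω) (hΩ : μ Ω ≠ ⊤) :
    ∃ C : ℝ≥0, ∀ (v : E → ℝ) (G : E → E →L[ℝ] ℝ), HasWeakFDerivOn μ Ω v G →
      ∫ x in Ω, v x ∂μ = 0 → ∫ x in Ω, ‖v x‖ ∂μ ≤ C * ∫ x in Ω, ‖G x‖ ∂μ := by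
  obtain ⟨C, hC⟩ := hΩP
  refine ⟨2 * C, fun v G hv h_mean => ?_⟩
  obtain ⟨a, ha⟩ := hC v G hv
  have h_const : μ.real Ω * ‖a‖ ≤ ∫ x in Ω, ‖v x - a‖ ∂μ := by
    calc μ.real Ω * ‖a‖ = ‖∫ x in Ω, (v x - a) ∂μ‖ := by
          rw [integral_sub hv.integrableOn (integrableOn_const hΩ), h_mean, setIntegral_const,
            zero_sub, norm_neg, norm_smul, Real.norm_of_nonneg measureReal_nonneg]
      _ ≤ ∫ x in Ω, ‖v x - a‖ ∂μ := norm_integral_le_integral_norm _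
  have h_tri := setIntegral_norm_le_add_const hΩ hv.integrableOn 0 a
  simp only [sub_zero, zero_sub, norm_neg] at h_tri
  push_cast
  linarith

variable [FiniteDimensional ℝ E] [BorelSpace E] [μ.IsAddHaarMeasure]

theorem setIntegral_norm_comp_fderiv_le {h g : E → E} {K K' : ℝ≥0} {O D : Set E}
    (hh : LipschitzWith K' h) (hg : LipschitzWith K g) (h_maps : MapsTo h O D)
    (h_inv : LeftInvOn g h O) {q : E → E →L[ℝ] ℝ} (hq : IntegrableOn q D μ) :
    ∫ x in O, ‖(q (h x)).comp (fderiv ℝ h x)‖ ∂μ ≤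
      K' * K ^ finrank ℝ E * ∫ x in D, ‖q x‖ ∂μ := by
  have h_meas := hh.continuous.measurable
  calc ∫ x in O, ‖(q (h x)).comp (fderiv ℝ h x)‖ ∂μ ≤ ∫ x in O, K' * ‖q (h x)‖ ∂μ := by
        refine integral_mono (integrableOn_comp_fderiv hh hg h_maps h_inv hq).norm
          ((integrableOn_comp_of_leftInvOn_lipschitzWith h_meas hg h_maps h_inv hq).norm.const_mul
            _) fun x => ?_
        rw [mul_comm]
        exact (opNorm_comp_le _ _).trans (mul_le_mul_of_nonneg_left
          (norm_fderiv_le_of_lipschitz ℝ hh) (norm_nonneg _))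
    _ = K' * ∫ x in O, ‖q (h x)‖ ∂μ := integral_const_mul _ _
    _ ≤ K' * (K ^ finrank ℝ E * ∫ x in D, ‖q x‖ ∂μ) := by
        gcongr
        exact setIntegral_norm_comp_le_of_leftInvOn_lipschitzWith h_meas hg h_maps h_inv hq
    _ = _ := (mul_assoc _ _ _).symm

theorem LipschitzChart.hasWeakFDerivOn_comp_invFun (c : LipschitzChart Ω) (hΩ : IsOpen Ω)
    (hb : Bornology.IsBounded Ω) {v : E → ℝ} {G : E → E →L[ℝ] ℝ} (hv : HasWeakFDerivOn μ Ω v G) :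
    HasWeakFDerivOn μ c.outer (fun z => v (c.invFun z))
      (fun z => (G (c.invFun z)).comp (fderiv ℝ c.invFun z)) :=
  hv.comp_lipschitzWith hΩ hb c.lipschitzWith_invFun c.lipschitzWith_toFun c.mapsTo_invFun
    c.rightInvOn

theorem LipschitzChart.setIntegral_norm_comp_toFun_le (c : LipschitzChart Ω)
    {F : Type*} [NormedAddCommGroup F] {q : E → F} (hq : IntegrableOn q c.inner μ) :
    ∫ x in c.source ∩ Ω, ‖q (c.toFun x)‖ ∂μ ≤ c.const ^ finrank ℝ E * ∫ z in c.inner, ‖q z‖ ∂μ :=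
  setIntegral_norm_comp_le_of_leftInvOn_lipschitzWith c.lipschitzWith_toFun.continuous.measurable
    c.lipschitzWith_invFun c.mapsTo_toFun (c.leftInvOn.mono inter_subset_left) hq

theorem LipschitzChart.poincareOn (c : LipschitzChart Ω) (hΩ : IsOpen Ω)
    (hb : Bornology.IsBounded Ω) : PoincareOn μ Ω (c.source ∩ Ω) := by
  set d := finrank ℝ E
  refine ⟨c.const ^ d * (2 * 2 ^ d * (Metric.diam c.inner).toNNReal *
    (c.const * c.const ^ d)), fun v G hv => ?_⟩
  have h_comp := c.hasWeakFDerivOn_comp_invFun hΩ hb hv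
  set a := ⨍ z in c.inner, v (c.invFun z) ∂μ
  have h_int : IntegrableOn (fun z => v (c.invFun z) - a) c.inner μ :=
    (h_comp.integrableOn.mono_set c.inner_subset_outer).sub
      (integrableOn_of_continuous_of_isBounded continuous_const
        (c.isBounded_outer.subset c.inner_subset_outer))
  refine ⟨a, ?_⟩
  calc ∫ x in c.source ∩ Ω, ‖v x - a‖ ∂μ
      = ∫ x in c.source ∩ Ω, ‖v (c.invFun (c.toFun x)) - a‖ ∂μ :=
        setIntegral_congr_fun (c.isOpen_source.inter hΩ).measurableSet fun x hx => by
          simp only [c.leftInvOn hx.1]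
    _ ≤ c.const ^ d * ∫ z in c.inner, ‖v (c.invFun z) - a‖ ∂μ :=
        c.setIntegral_norm_comp_toFun_le h_int
    _ ≤ c.const ^ d * (2 * 2 ^ d * Metric.diam c.inner *
          ∫ z in c.inner, ‖(G (c.invFun z)).comp (fderiv ℝ c.invFun z)‖ ∂μ) := by
        gcongr
        exact h_comp.integral_norm_sub_average_le c.isOpen_outer c.isBounded_outer
          c.inner_subset_outer c.isOpen_inner.measurableSet c.convex_inner c.admitsSmallShifts
    _ ≤ c.const ^ d * (2 * 2 ^ d * Metric.diam c.inner *
          (c.const * c.const ^ d * ∫ x in Ω, ‖G x‖ ∂μ)) := by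
        gcongr
        exact setIntegral_norm_comp_fderiv_le c.lipschitzWith_invFun c.lipschitzWith_toFun
          (c.mapsTo_invFun.mono_left c.inner_subset_outer)
          (c.rightInvOn.mono c.inner_subset_outer) hv.integrableOn_deriv
    _ = _ := by
        push_cast [Real.coe_toNNReal _ Metric.diam_nonneg]
        ring

omit [MeasurableSpace E] [BorelSpace E] in
theorem exists_finite_lipschitzChart_cover (hb : Bornology.IsBounded Ω)
    (h_chart : ∀ x ∈ closure Ω, ∃ c : LipschitzChart Ω, x ∈ c.source) :
    ∃ (m : ℕ) (c : Fin m → LipschitzChart Ω), closure Ω ⊆ ⋃ i, (c i).source := by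
  choose c hc using fun x : closure Ω => h_chart x x.2
  obtain ⟨t, ht⟩ := hb.isCompact_closure.elim_finite_subcover (fun x => (c x).source)
    (fun x => (c x).isOpen_source) fun x hx => mem_iUnion.2 ⟨⟨x, hx⟩, hc ⟨x, hx⟩⟩
  refine ⟨t.card, fun i => c (t.equivFin.symm i), ht.trans (iUnion₂_subset fun x hx => ?_)⟩
  refine subset_iUnion_of_subset (t.equivFin ⟨x, hx⟩) ?_
  simp only [Equiv.symm_apply_apply, Subset.rfl]

theorem poincareOn_self_of_isPreconnected (hΩ : IsOpen Ω) (hb : Bornology.IsBounded Ω)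
    (hΩ₀ : Ω.Nonempty) (hΩc : IsPreconnected Ω)
    (h_chart : ∀ x ∈ closure Ω, ∃ c : LipschitzChart Ω, x ∈ c.source) : PoincareOn μ Ω Ω := by
  obtain ⟨m, c, h_cover⟩ := exists_finite_lipschitzChart_cover hb h_chart
  have h_union (S T : Set E) : IsOpen S ∧ S ⊆ Ω ∧ PoincareOn μ Ω S →
      IsOpen T ∧ T ⊆ Ω ∧ PoincareOn μ Ω T → (S ∩ T).Nonempty →
      IsOpen (S ∪ T) ∧ S ∪ T ⊆ Ω ∧ PoincareOn μ Ω (S ∪ T) := by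
    rintro ⟨hSo, hSΩ, hSP⟩ ⟨hTo, hTΩ, hTP⟩ h_inter
    exact ⟨hSo.union hTo, union_subset hSΩ hTΩ,
      hSP.union hTP hSo.measurableSet hTo.measurableSet hSΩ hTΩ hb.measure_lt_top.ne
        ((hSo.inter hTo).measure_pos μ h_inter).ne'⟩
  obtain ⟨T, ⟨-, hTΩ, hTP⟩, hΩT⟩ := exists_superset_of_isPreconnected_of_finite_cover hΩc hΩ₀
    h_union (fun i => (c i).isOpen_source.inter hΩ)
    (fun i => ⟨(c i).isOpen_source.inter hΩ, inter_subset_right, (c i).poincareOn hΩ hb⟩)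
    (by rw [← iUnion_inter]; exact subset_inter (subset_closure.trans h_cover) Subset.rfl)
  rwa [hTΩ.antisymm hΩT] at hTP

end PoincareOnDomain

section Density

theorem exists_lipschitzWith_finsetSum {X F ι : Type*} [PseudoEMetricSpace X]
    [SeminormedAddCommGroup F] (s : Finset ι) {a : ι → X → F}
    (ha : ∀ i ∈ s, ∃ K, LipschitzWith K (a i)) :
    ∃ K, LipschitzWith K fun x => ∑ i ∈ s, a i x := by
  classical
  induction s using Finset.induction_on with
  | empty => exact ⟨0, by simpa using LipschitzWith.const 0⟩
  | insert i s hi ih =>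
    obtain ⟨A, hA⟩ := ha i (Finset.mem_insert_self i s)
    obtain ⟨K, hK⟩ := ih fun j hj => ha j (Finset.mem_insert_of_mem hj)
    exact ⟨A + K, by simpa only [Finset.sum_insert hi] using hA.add hK⟩

variable {E : Type*} [NormedAddCommGroup E] [NormedSpace ℝ E]

theorem exists_contDiff_partition_of_unity [FiniteDimensional ℝ E] {ι : Type*} [Fintype ι]
    {Q : Set E} (hQ : IsCompact Q) {S : ι → Set E} (hS : ∀ i, IsOpen (S i))
    (h_cover : Q ⊆ ⋃ i, S i) :
    ∃ ψ : ι → E → ℝ, (∀ i, ContDiff ℝ 1 (ψ i)) ∧ (∀ i, HasCompactSupport (ψ i)) ∧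
      (∀ i, tsupport (ψ i) ⊆ S i) ∧ (∀ i x, ‖ψ i x‖ ≤ 1) ∧ ∀ x ∈ Q, ∑ i, ψ i x = 1 := by
  obtain ⟨R, hR⟩ := hQ.isBounded.subset_ball 0
  obtain ⟨f, hf⟩ := SmoothPartitionOfUnity.exists_isSubordinate (modelWithCornersSelf ℝ E)
    hQ.isClosed (fun i => S i ∩ Metric.ball 0 R) (fun i => (hS i).inter Metric.isOpen_ball)
    (by rw [← iUnion_inter]; exact subset_inter h_cover hR)
  refine ⟨fun i => f i, fun i => (f i).contMDiff.contDiff.of_le (by simp), fun i => ?_,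
    fun i => (hf i).trans inter_subset_left, fun i x => ?_, fun x hx => ?_⟩
  · exact Metric.isCompact_of_isClosed_isBounded (isClosed_tsupport _)
      (Metric.isBounded_ball.subset ((hf i).trans inter_subset_right))
  · rw [Real.norm_of_nonneg (f.nonneg i x)]
    exact f.le_one i x
  · rw [← f.sum_eq_one hx, finsum_eq_sum_of_fintype]

theorem fderiv_sum_smul_sub_eq {ι : Type*} [Fintype ι] {ψ w : ι → E → ℝ} {x : E}
    (hψ : ∀ i, DifferentiableAt ℝ (ψ i) x) (hw : ∀ i, DifferentiableAt ℝ (w i) x)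
    (h_one : ∀ᶠ y in 𝓝 x, ∑ i, ψ i y = 1) (a : ℝ) (L : E →L[ℝ] ℝ) :
    fderiv ℝ (fun y => ∑ i, ψ i y • w i y) x - L =
      ∑ i, (ψ i x • (fderiv ℝ (w i) x - L) + (w i x - a) • fderiv ℝ (ψ i) x) := by
  have h_deriv : fderiv ℝ (fun y => ∑ i, ψ i y • w i y) x =
      ∑ i, (ψ i x • fderiv ℝ (w i) x + w i x • fderiv ℝ (ψ i) x) := by
    rw [fderiv_fun_sum fun i _ => (hψ i).fun_smul (hw i)]
    exact Finset.sum_congr rfl fun i _ => fderiv_fun_mul (hψ i) (hw i)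
  have h_sum_deriv : ∑ i, fderiv ℝ (ψ i) x = 0 := by
    rw [← fderiv_fun_sum fun i _ => hψ i]
    have h_const : (fun y => ∑ i, ψ i y) =ᶠ[𝓝 x] fun _ => 1 := h_one
    rw [h_const.fderiv_eq, fderiv_fun_const, Pi.zero_apply]
  simp only [smul_sub, sub_smul, Finset.sum_add_distrib, Finset.sum_sub_distrib,
    ← Finset.smul_sum, ← Finset.sum_smul, h_one.self_of_nhds, h_sum_deriv, h_deriv, one_smul,
    smul_zero, sub_zero]
  abel

variable [MeasurableSpace E] {μ : Measure E} {Ω S : Set E} {v : E → ℝ} {G : E → E →L[ℝ] ℝ}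

/-- The pair `(v, G)` is an `L¹(S)` limit of Lipschitz functions together with their
almost-everywhere derivatives. -/
def ApproxByLipschitzOn (μ : Measure E) (S : Set E) (v : E → ℝ) (G : E → E →L[ℝ] ℝ) : Prop :=
  ∃ w : ℕ → E → ℝ, (∀ k, ∃ A, LipschitzWith A (w k)) ∧
    Tendsto (fun k => ∫ x in S, ‖w k x - v x‖ ∂μ) atTop (𝓝 0) ∧
    Tendsto (fun k => ∫ x in S, ‖fderiv ℝ (w k) x - G x‖ ∂μ) atTop (𝓝 0)

variable [FiniteDimensional ℝ E] [BorelSpace E] [μ.IsAddHaarMeasure]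

theorem integrableOn_fderiv_of_lipschitzWith {w : E → ℝ} {A : ℝ≥0} (hw : LipschitzWith A w)
    (hS : Bornology.IsBounded S) : IntegrableOn (fderiv ℝ w) S μ :=
  have : IsFiniteMeasure (μ.restrict S) := ⟨by simpa using hS.measure_lt_top⟩
  Integrable.of_bound (measurable_fderiv ℝ w).aestronglyMeasurable A
    (.of_forall fun _ => norm_fderiv_le_of_lipschitz ℝ hw)

theorem ae_fderiv_comp_sub_eq_of_leftInvOn {h g : E → E} {K K' : ℝ≥0} {O : Set E} (hO : IsOpen O)
    (hh : LipschitzWith K' h) (hg : LipschitzWith K g) (h_inv : LeftInvOn g h O) {W : E → ℝ}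
    (hW : Differentiable ℝ W) (G : E → E →L[ℝ] ℝ) :
    ∀ᵐ x ∂μ.restrict O, fderiv ℝ (fun y => W (h y)) x - G x =
      (fderiv ℝ W (h x) - (G (g (h x))).comp (fderiv ℝ g (h x))).comp (fderiv ℝ h x) := by
  have h_null : μ (g '' {z | ¬DifferentiableAt ℝ g z}) = 0 :=
    addHaar_image_eq_zero_of_lipschitzWith hg hg.ae_differentiableAt
  filter_upwards [ae_restrict_of_ae (measure_eq_zero_iff_ae_notMem.1 h_null),
    ae_restrict_of_ae (hh.ae_differentiableAt (μ := μ)), ae_restrict_mem hO.measurableSet]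
    with x hx hhx hxO
  have hgx : DifferentiableAt ℝ g (h x) := by
    by_contra h_not
    exact hx ⟨h x, h_not, h_inv hxO⟩
  have h_id : (fderiv ℝ g (h x)).comp (fderiv ℝ h x) = ContinuousLinearMap.id ℝ E := by
    have h_near : g ∘ h =ᶠ[𝓝 x] id := by
      filter_upwards [hO.mem_nhds hxO] with y hy using h_inv hy
    rw [← fderiv_comp x hgx hhx, h_near.fderiv_eq, fderiv_id]
  rw [sub_comp, comp_assoc, h_id, comp_id, h_inv hxO,
    ← fderiv_comp x (hW (h x)) hhx, Function.comp_def]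

theorem LipschitzChart.approxByLipschitzOn (c : LipschitzChart Ω) (hΩ : IsOpen Ω)
    (hb : Bornology.IsBounded Ω) (hv : HasWeakFDerivOn μ Ω v G) :
    ApproxByLipschitzOn μ (c.source ∩ Ω) v G := by
  have h_comp := c.hasWeakFDerivOn_comp_invFun hΩ hb hv
  obtain ⟨W, hW, hWc, hWv, hWG⟩ := h_comp.exists_seq_contDiff c.isOpen_outer c.isBounded_outer
    c.inner_subset_outer c.isOpen_inner.measurableSet c.admitsSmallShifts
  have hO : IsOpen (c.source ∩ Ω) := c.isOpen_source.inter hΩ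
  have h_inv : LeftInvOn c.invFun c.toFun (c.source ∩ Ω) := c.leftInvOn.mono inter_subset_left
  have h_maps : MapsTo c.toFun (c.source ∩ Ω) c.outer :=
    c.mapsTo_toFun.mono_right c.inner_subset_outer
  have h_meas := c.lipschitzWith_toFun.continuous.measurable
  choose A hA using fun k => ContDiff.lipschitzWith_of_hasCompactSupport (hWc k) (hW k) (by simp)
  have h_int (k : ℕ) : IntegrableOn (fun z => W k z - v (c.invFun z)) c.outer μ :=
    (integrableOn_of_continuous_of_isBounded (hW k).continuous c.isBounded_outer).sub
      h_comp.integrableOn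
  have h_int_deriv (k : ℕ) : IntegrableOn
      (fun z => fderiv ℝ (W k) z - (G (c.invFun z)).comp (fderiv ℝ c.invFun z)) c.inner μ :=
    (integrableOn_fderiv_of_lipschitzWith (hA k)
      (c.isBounded_outer.subset c.inner_subset_outer)).sub
        (h_comp.integrableOn_deriv.mono_set c.inner_subset_outer)
  refine ⟨fun k x => W k (c.toFun x), fun k => ⟨_, (hA k).comp c.lipschitzWith_toFun⟩,
    squeeze_zero (fun _ => integral_nonneg fun _ => norm_nonneg _) (fun k => ?_)
      ((hWv.const_mul ((c.const : ℝ) ^ finrank ℝ E)).trans_eq (by rw [mul_zero])),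
    squeeze_zero (fun _ => integral_nonneg fun _ => norm_nonneg _) (fun k => ?_)
      ((hWG.const_mul (c.const * (c.const : ℝ) ^ finrank ℝ E)).trans_eq (by rw [mul_zero]))⟩
  · calc ∫ x in c.source ∩ Ω, ‖W k (c.toFun x) - v x‖ ∂μ
        = ∫ x in c.source ∩ Ω, ‖W k (c.toFun x) - v (c.invFun (c.toFun x))‖ ∂μ :=
          setIntegral_congr_fun hO.measurableSet fun x hx => by simp only [h_inv hx]
      _ ≤ (c.const : ℝ) ^ finrank ℝ E * ∫ z in c.outer, ‖W k z - v (c.invFun z)‖ ∂μ :=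
          setIntegral_norm_comp_le_of_leftInvOn_lipschitzWith
            (q := fun z => W k z - v (c.invFun z)) h_meas c.lipschitzWith_invFun h_maps h_inv
            (h_int k)
  · rw [integral_congr_ae ((ae_fderiv_comp_sub_eq_of_leftInvOn hO c.lipschitzWith_toFun
      c.lipschitzWith_invFun h_inv ((hW k).differentiable (by simp)) G).mono
        fun x hx => congrArg norm hx)]
    exact setIntegral_norm_comp_fderiv_le
      (q := fun z => fderiv ℝ (W k) z - (G (c.invFun z)).comp (fderiv ℝ c.invFun z))
      c.lipschitzWith_toFun c.lipschitzWith_invFun c.mapsTo_toFun h_inv (h_int_deriv k)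

theorem setIntegral_norm_le_sum_of_le_indicator {X F ι : Type*} [MeasurableSpace X] {μ : Measure X}
    [NormedAddCommGroup F] [Fintype ι] {Ω : Set X} {S : ι → Set X} (hS : ∀ i, MeasurableSet (S i))
    {u : X → F} {q : ι → X → ℝ} (hq : ∀ i, IntegrableOn (q i) Ω μ)
    (h_le : ∀ᵐ x ∂μ.restrict Ω, ‖u x‖ ≤ ∑ i, (S i).indicator (q i) x) :
    ∫ x in Ω, ‖u x‖ ∂μ ≤ ∑ i, ∫ x in S i ∩ Ω, q i x ∂μ := by
  have h_int (i : ι) : IntegrableOn ((S i).indicator (q i)) Ω μ := (hq i).indicator (hS i)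
  calc ∫ x in Ω, ‖u x‖ ∂μ ≤ ∫ x in Ω, ∑ i, (S i).indicator (q i) x ∂μ :=
        integral_mono_of_nonneg (.of_forall fun _ => norm_nonneg _)
          (integrable_finsetSum _ fun i _ => h_int i) h_le
    _ = ∑ i, ∫ x in S i ∩ Ω, q i x ∂μ := by
        rw [integral_finsetSum _ fun i _ => h_int i]
        simp only [setIntegral_indicator (hS _), inter_comm Ω]

section Gluing

variable {ι : Type*} [Fintype ι] {S : ι → Set E} {ψ w : ι → E → ℝ} {B : ι → ℝ≥0}

omit [FiniteDimensional ℝ E] [NormedSpace ℝ E] [μ.IsAddHaarMeasure] [BorelSpace E] in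
theorem setIntegral_norm_sum_smul_sub_le (hS : ∀ i, MeasurableSet (S i)) (hΩ : MeasurableSet Ω)
    (hψS : ∀ i, tsupport (ψ i) ⊆ S i) (hψ₁ : ∀ i x, ‖ψ i x‖ ≤ 1)
    (hψ_sum : ∀ x ∈ Ω, ∑ i, ψ i x = 1) (hwv : ∀ i, IntegrableOn (fun x => w i x - v x) Ω μ) :
    ∫ x in Ω, ‖∑ i, ψ i x • w i x - v x‖ ∂μ ≤ ∑ i, ∫ x in S i ∩ Ω, ‖w i x - v x‖ ∂μ := by
  refine setIntegral_norm_le_sum_of_le_indicator hS (fun i => (hwv i).norm) ?_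
  filter_upwards [ae_restrict_mem hΩ] with x hx
  have h_split : ∑ i, ψ i x • w i x - v x = ∑ i, ψ i x • (w i x - v x) := by
    simp only [smul_sub, Finset.sum_sub_distrib, ← Finset.sum_smul, hψ_sum x hx, one_smul]
  rw [h_split]
  refine (norm_sum_le _ _).trans (Finset.sum_le_sum fun i _ => ?_)
  by_cases hxS : x ∈ S i
  · rw [indicator_of_mem hxS, norm_smul]
    exact mul_le_of_le_one_left (norm_nonneg _) (hψ₁ i x)
  · rw [indicator_of_notMem hxS, image_eq_zero_of_notMem_tsupport fun h => hxS (hψS i h), zero_smul,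
      norm_zero]

theorem setIntegral_norm_fderiv_sum_smul_sub_le (hS : ∀ i, MeasurableSet (S i)) (hΩ : IsOpen Ω)
    (hψ : ∀ i, Differentiable ℝ (ψ i)) (hψB : ∀ i, LipschitzWith (B i) (ψ i))
    (hψS : ∀ i, tsupport (ψ i) ⊆ S i) (hψ₁ : ∀ i x, ‖ψ i x‖ ≤ 1)
    (hψ_sum : ∀ x ∈ Ω, ∑ i, ψ i x = 1) {A : ι → ℝ≥0} (hw : ∀ i, LipschitzWith (A i) (w i))
    (hwv : ∀ i, IntegrableOn (fun x => w i x - v x) Ω μ)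
    (hwG : ∀ i, IntegrableOn (fun x => fderiv ℝ (w i) x - G x) Ω μ) :
    ∫ x in Ω, ‖fderiv ℝ (fun y => ∑ i, ψ i y • w i y) x - G x‖ ∂μ ≤
      ∑ i, (∫ x in S i ∩ Ω, ‖fderiv ℝ (w i) x - G x‖ ∂μ +
        B i * ∫ x in S i ∩ Ω, ‖w i x - v x‖ ∂μ) := by
  have h_int (i : ι) : IntegrableOn (fun x => B i * ‖w i x - v x‖) Ω μ :=
    (hwv i).norm.const_mul (B i)
  have h_int_deriv (i : ι) : IntegrableOn (fun x => ‖fderiv ℝ (w i) x - G x‖) Ω μ := (hwG i).norm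
  have h_add (i : ι) : ∫ x in S i ∩ Ω, ‖fderiv ℝ (w i) x - G x‖ ∂μ +
      B i * ∫ x in S i ∩ Ω, ‖w i x - v x‖ ∂μ =
      ∫ x in S i ∩ Ω, (‖fderiv ℝ (w i) x - G x‖ + B i * ‖w i x - v x‖) ∂μ := by
    rw [integral_add ((h_int_deriv i).mono_set inter_subset_right)
      ((h_int i).mono_set inter_subset_right), integral_const_mul]
  simp only [h_add]
  refine setIntegral_norm_le_sum_of_le_indicator hS (fun i => (h_int_deriv i).add (h_int i)) ?_
  have h_diff : ∀ᵐ x ∂μ.restrict Ω, ∀ i, DifferentiableAt ℝ (w i) x :=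
    ae_all_iff.2 fun i => ae_restrict_of_ae (hw i).ae_differentiableAt
  filter_upwards [h_diff, ae_restrict_mem hΩ.measurableSet] with x hx hxΩ
  rw [fderiv_sum_smul_sub_eq (fun i => hψ i x) hx
    ((hΩ.eventually_mem hxΩ).mono fun y hy => hψ_sum y hy) (v x) (G x)]
  refine (norm_sum_le _ _).trans (Finset.sum_le_sum fun i _ => ?_)
  by_cases hxS : x ∈ S i
  · rw [indicator_of_mem hxS]
    refine (norm_add_le _ _).trans (add_le_add ?_ ?_) <;> rw [norm_smul]
    · exact mul_le_of_le_one_left (norm_nonneg _) (hψ₁ i x)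
    · rw [mul_comm]
      exact mul_le_mul_of_nonneg_right (norm_fderiv_le_of_lipschitz ℝ (hψB i)) (norm_nonneg _)
  · have hx_supp : x ∉ tsupport (ψ i) := fun h => hxS (hψS i h)
    rw [indicator_of_notMem hxS, image_eq_zero_of_notMem_tsupport hx_supp,
      image_eq_zero_of_notMem_tsupport fun h => hx_supp (tsupport_fderiv_subset ℝ h), zero_smul,
      smul_zero, add_zero, norm_zero]

omit [Fintype ι] in
theorem approxByLipschitzOn_of_cover [Finite ι] (hΩ : IsOpen Ω) (hb : Bornology.IsBounded Ω)
    (hv : IntegrableOn v Ω μ) (hG : IntegrableOn G Ω μ) (hS : ∀ i, IsOpen (S i))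
    (h_cover : closure Ω ⊆ ⋃ i, S i) (h : ∀ i, ApproxByLipschitzOn μ (S i ∩ Ω) v G) :
    ApproxByLipschitzOn μ Ω v G := by
  have := Fintype.ofFinite ι
  obtain ⟨ψ, hψ, hψc, hψS, hψ₁, hψ_sum⟩ :=
    exists_contDiff_partition_of_unity hb.isCompact_closure hS h_cover
  choose B hB using fun i =>
    ContDiff.lipschitzWith_of_hasCompactSupport (hψc i) (hψ i) one_ne_zero
  choose w hw hwv hwG using h
  choose A hA using hw
  have hSm (i : ι) := (hS i).measurableSet
  have h_sum (x : E) (hx : x ∈ Ω) := hψ_sum x (subset_closure hx)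
  have h_int (i : ι) (k : ℕ) : IntegrableOn (fun x => w i k x - v x) Ω μ :=
    (integrableOn_of_continuous_of_isBounded (hA i k).continuous hb).sub hv
  have h_int_deriv (i : ι) (k : ℕ) : IntegrableOn (fun x => fderiv ℝ (w i k) x - G x) Ω μ :=
    (integrableOn_fderiv_of_lipschitzWith (hA i k) hb).sub hG
  refine ⟨fun k x => ∑ i, ψ i x • w i k x, fun k => exists_lipschitzWith_finsetSum _ fun i _ =>
      exists_lipschitzWith_smul_of_hasCompactSupport (hB i) (hψc i) (hA i k),
    squeeze_zero (fun _ => integral_nonneg fun _ => norm_nonneg _)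
      (fun k => setIntegral_norm_sum_smul_sub_le hSm hΩ.measurableSet hψS hψ₁ h_sum
        fun i => h_int i k) ?_,
    squeeze_zero (fun _ => integral_nonneg fun _ => norm_nonneg _)
      (fun k => setIntegral_norm_fderiv_sum_smul_sub_le hSm hΩ
        (fun i => (hψ i).differentiable one_ne_zero) hB hψS hψ₁ h_sum (fun i => hA i k)
        (fun i => h_int i k) fun i => h_int_deriv i k) ?_⟩
  · simpa only [Finset.sum_const_zero] using tendsto_finsetSum Finset.univ fun i _ => hwv i
  · simpa only [mul_zero, add_zero, Finset.sum_const_zero] using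
      tendsto_finsetSum Finset.univ fun i _ => (hwG i).add ((hwv i).const_mul (B i : ℝ))

end Gluing

theorem HasWeakFDerivOn.approxByLipschitzOn (hv : HasWeakFDerivOn μ Ω v G) (hΩ : IsOpen Ω)
    (hb : Bornology.IsBounded Ω)
    (h_chart : ∀ x ∈ closure Ω, ∃ c : LipschitzChart Ω, x ∈ c.source) :
    ApproxByLipschitzOn μ Ω v G := by
  obtain ⟨m, c, h_cover⟩ := exists_finite_lipschitzChart_cover hb h_chart
  exact approxByLipschitzOn_of_cover hΩ hb hv.integrableOn hv.integrableOn_deriv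
    (fun i => (c i).isOpen_source) h_cover fun i => (c i).approxByLipschitzOn hΩ hb hv

end Density

section RadialConvexity

theorem le_of_convexOn_Ici_of_hasDerivWithinAt_zero {f : ℝ → ℝ} {a : ℝ} (hf : ConvexOn ℝ (Ici a) f)
    (h_deriv : HasDerivWithinAt f 0 (Ici a) a) {t : ℝ} (ht : t ∈ Ici a) : f a ≤ f t := by
  rcases eq_or_lt_of_le (mem_Ici.1 ht) with rfl | h_lt
  · exact le_rfl
  have h_slope := hf.le_slope_of_hasDerivWithinAt self_mem_Ici ht h_lt h_deriv
  rw [slope_def_field] at h_slope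
  simpa using (le_div_iff₀ (sub_pos.2 h_lt)).1 h_slope

theorem strictMonoOn_Ici_of_strictConvexOn {f : ℝ → ℝ} {a : ℝ} (hf : StrictConvexOn ℝ (Ici a) f)
    (h_min : ∀ t ∈ Ici a, f a ≤ f t) : StrictMonoOn f (Ici a) := by
  intro s hs t ht hst
  rcases eq_or_lt_of_le (mem_Ici.1 hs) with rfl | has
  · have h_mid := hf.2 hs ht hst.ne one_half_pos one_half_pos (add_halves 1)
    have h_le := h_min _ (hf.1 hs ht one_half_pos.le one_half_pos.le (add_halves 1))
    simp only [smul_eq_mul] at h_mid h_le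
    linarith
  · have hs_seg : s ∈ openSegment ℝ a t := by
      rw [openSegment_eq_Ioo (has.trans hst)]
      exact ⟨has, hst⟩
    have h_lt := hf.lt_on_openSegment self_mem_Ici ht (has.trans hst).ne hs_seg
    rwa [max_eq_right (h_min t ht)] at h_lt

theorem strictConvexOn_comp_norm {E : Type*} [NormedAddCommGroup E] [NormedSpace ℝ E]
    [StrictConvexSpace ℝ E] {f : ℝ → ℝ} (hf : StrictConvexOn ℝ (Ici 0) f)
    (hf_mono : StrictMonoOn f (Ici 0)) : StrictConvexOn ℝ univ fun z : E => f ‖z‖ := by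
  refine ⟨convex_univ, fun x _ y _ hxy a b ha hb hab => ?_⟩
  have h_mem : a • ‖x‖ + b • ‖y‖ ∈ Ici (0 : ℝ) :=
    hf.1 (norm_nonneg x) (norm_nonneg y) ha.le hb.le hab
  rcases eq_or_ne ‖x‖ ‖y‖ with h_eq | h_ne
  · have h_lt : ‖a • x + b • y‖ < ‖y‖ := norm_combo_lt_of_ne h_eq.le le_rfl hxy ha hb hab
    beta_reduce
    rw [h_eq, ← add_smul, hab, one_smul]
    exact hf_mono (norm_nonneg _) (norm_nonneg _) h_lt
  · have h_le : ‖a • x + b • y‖ ≤ a • ‖x‖ + b • ‖y‖ := by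
      simpa only [norm_smul_of_nonneg ha.le, norm_smul_of_nonneg hb.le, smul_eq_mul] using
        norm_add_le (a • x) (b • y)
    exact (hf_mono.monotoneOn (norm_nonneg _) h_mem h_le).trans_lt
      (hf.2 (norm_nonneg x) (norm_nonneg y) h_ne ha hb hab)

variable {f : ℝ → ℝ} {c : ℝ}

theorem tendsto_sub_div_sub_of_tendsto_div (hfc : Tendsto (fun t => f t / t) atTop (𝓝 c)) (s : ℝ) :
    Tendsto (fun t => (f t - f s) / (t - s)) atTop (𝓝 c) := by
  have h_lim : Tendsto (fun t => (f t / t - f s / t) / (1 - s / t)) atTop (𝓝 c) := by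
    have h_zero (r : ℝ) : Tendsto (fun t => r / t) atTop (𝓝 0) := tendsto_id.const_div_atTop r
    have h_div := (hfc.sub (h_zero (f s))).div ((h_zero s).const_sub 1) (by norm_num)
    rwa [sub_zero, sub_zero, div_one] at h_div
  refine h_lim.congr' ?_
  filter_upwards [eventually_gt_atTop 0] with t ht
  rw [← sub_div, one_sub_div ht.ne', div_div_div_cancel_right₀ ht.ne']

theorem sub_le_mul_sub_of_convexOn_Ici {a : ℝ} (hf : ConvexOn ℝ (Ici a) f)
    (hfc : Tendsto (fun t => f t / t) atTop (𝓝 c)) {s t : ℝ} (hs : a ≤ s) (hst : s ≤ t) :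
    f t - f s ≤ c * (t - s) := by
  rcases hst.eq_or_lt with rfl | hst
  · simp
  rw [← div_le_iff₀ (sub_pos.2 hst)]
  refine ge_of_tendsto (tendsto_sub_div_sub_of_tendsto_div hfc s) ?_
  filter_upwards [eventually_ge_atTop t] with R hR
  exact hf.secant_mono hs (hs.trans hst.le) (hs.trans (hst.le.trans hR)) hst.ne'
    (hst.trans_le hR).ne' hR

theorem lipschitzWith_comp_norm {E : Type*} [SeminormedAddCommGroup E]
    (hf : ConvexOn ℝ (Ici 0) f) (hf_mono : MonotoneOn f (Ici 0))
    (hfc : Tendsto (fun t => f t / t) atTop (𝓝 c)) :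
    LipschitzWith c.toNNReal fun z : E => f ‖z‖ := by
  refine .of_le_add_mul _ fun x y => ?_
  rcases le_total ‖x‖ ‖y‖ with h | h
  · exact (hf_mono (norm_nonneg x) (norm_nonneg y) h).trans
      (le_add_of_nonneg_right (by positivity))
  · have h_slope := sub_le_mul_sub_of_convexOn_Ici hf hfc (norm_nonneg y) h
    have h_dist : c * (‖x‖ - ‖y‖) ≤ c.toNNReal * dist x y :=
      mul_le_mul (Real.le_coe_toNNReal c) (dist_eq_norm x y ▸ norm_sub_norm_le x y)
        (sub_nonneg.2 h) c.toNNReal.2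
    linarith

theorem exists_forall_mul_sub_le_of_tendsto_div {m : ℝ} (hf : ∀ t ∈ Ici (0 : ℝ), m ≤ f t)
    (hfc : Tendsto (fun t => f t / t) atTop (𝓝 c)) {σ : ℝ} (hσ : σ < c) :
    ∃ C, ∀ t ∈ Ici (0 : ℝ), σ * t - C ≤ f t := by
  obtain ⟨R, hR⟩ := eventually_atTop.1
    ((hfc.eventually_const_le hσ).and (eventually_gt_atTop (0 : ℝ)))
  have hR₀ : 0 < R := (hR R le_rfl).2
  refine ⟨|σ| * R + |m|, fun t ht => ?_⟩
  rcases le_total R t with h | h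
  · have h_le := (le_div_iff₀ (hR t h).2).1 (hR t h).1
    linarith [mul_nonneg (abs_nonneg σ) hR₀.le, abs_nonneg m]
  · have h_le : σ * t ≤ |σ| * R := mul_le_mul (le_abs_self σ) h ht (abs_nonneg σ)
    linarith [hf t ht, neg_abs_le m]

end RadialConvexity

section MidpointGap

variable {E : Type*} [AddCommGroup E] [Module ℝ E] {F : E → ℝ}

/-- The defect in midpoint convexity of `F` between `a` and `b`, which measures the distance of `a`
and `b` when `F` is strictly convex. -/
noncomputable def midpointGap (F : E → ℝ) (a b : E) : ℝ := F a + F b - 2 * F ((2 : ℝ)⁻¹ • (a + b))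

theorem midpointGap_nonneg (hF : ConvexOn ℝ univ F) (a b : E) : 0 ≤ midpointGap F a b := by
  have h := hF.2 (mem_univ a) (mem_univ b) (by norm_num) (by norm_num)
    (by norm_num : (2 : ℝ)⁻¹ + 2⁻¹ = 1)
  rw [← smul_add, smul_eq_mul, smul_eq_mul] at h
  rw [midpointGap]
  linarith

theorem midpointGap_pos (hF : StrictConvexOn ℝ univ F) {a b : E} (hab : a ≠ b) :
    0 < midpointGap F a b := by
  have h := hF.2 (mem_univ a) (mem_univ b) hab (by norm_num) (by norm_num)
    (by norm_num : (2 : ℝ)⁻¹ + 2⁻¹ = 1)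
  rw [← smul_add, smul_eq_mul, smul_eq_mul] at h
  rw [midpointGap]
  linarith

theorem midpointGap_lineMap_le (hF : ConvexOn ℝ univ F) (a b : E) {t : ℝ} (ht : t ∈ Icc (0 : ℝ) 1) :
    midpointGap F a (AffineMap.lineMap a b t) ≤ midpointGap F a b := by
  set p := AffineMap.lineMap a b t with hp
  set m := (2 : ℝ)⁻¹ • (a + p) with hm
  have h2 : 0 < 2 - t := by linarith [ht.2]
  have hp_combo : p = (t / (2 - t)) • b + (2 * (1 - t) / (2 - t)) • m := by
    rw [hm, hp, AffineMap.lineMap_apply_module]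
    match_scalars <;> field_simp <;> ring
  have hm_combo : (2 : ℝ)⁻¹ • (a + b) = ((1 - t) / (2 - t)) • b + (1 / (2 - t)) • m := by
    rw [hm, hp, AffineMap.lineMap_apply_module]
    match_scalars <;> field_simp <;> ring
  have hFp := hF.2 (mem_univ b) (mem_univ m) (div_nonneg ht.1 h2.le)
    (div_nonneg (mul_nonneg zero_le_two (sub_nonneg.2 ht.2)) h2.le) (by field_simp; ring)
  have hFm := hF.2 (mem_univ b) (mem_univ m) (div_nonneg (sub_nonneg.2 ht.2) h2.le)
    (one_div_nonneg.2 h2.le) (by field_simp; ring)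
  rw [← hp_combo, smul_eq_mul, smul_eq_mul] at hFp
  rw [← hm_combo, smul_eq_mul, smul_eq_mul] at hFm
  have h_sum : t / (2 - t) * F b + 2 * (1 - t) / (2 - t) * F m +
      2 * ((1 - t) / (2 - t) * F b + 1 / (2 - t) * F m) = F b + 2 * F m := by
    field_simp
    ring
  rw [midpointGap, midpointGap, ← hm]
  linarith

theorem tendsto_of_tendsto_midpointGap {E ι : Type*} [NormedAddCommGroup E] [NormedSpace ℝ E]
    [FiniteDimensional ℝ E] {F : E → ℝ} (hF : StrictConvexOn ℝ univ F) {l : Filter ι} {z : ι → E}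
    {a : E} (h : Tendsto (fun i => midpointGap F a (z i)) l (𝓝 0)) : Tendsto z l (𝓝 a) := by
  have hF_cont : Continuous F :=
    continuousOn_univ.1 (hF.convexOn.continuousOn isOpen_univ)
  have h_cont : Continuous (midpointGap F a) := by unfold midpointGap; fun_prop
  rw [Metric.tendsto_nhds]
  intro ε hε
  obtain ⟨δ, hδ, hδ_le⟩ := (isCompact_sphere a ε).exists_forall_le' h_cont.continuousOn
    fun b hb => midpointGap_pos hF (Metric.ne_of_mem_sphere hb hε.ne').symm
  filter_upwards [h.eventually_lt_const hδ] with i hi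
  by_contra! h_far
  have h_pos : 0 < dist (z i) a := hε.trans_le h_far
  have h_sphere : AffineMap.lineMap a (z i) (ε / dist (z i) a) ∈ Metric.sphere a ε := by
    rw [Metric.mem_sphere, dist_lineMap_left, Real.norm_of_nonneg (div_nonneg hε.le h_pos.le),
      dist_comm a, div_mul_cancel₀ _ h_pos.ne']
  exact (hi.trans_le (hδ_le _ h_sphere)).not_ge (midpointGap_lineMap_le hF.convexOn a (z i)
    ⟨div_nonneg hε.le h_pos.le, (div_le_one h_pos).2 h_far⟩)

end MidpointGap

section VariationalConvergence

variable {X : Type*} [MeasurableSpace X] {μ : Measure X}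

theorem tendsto_integral_zero_of_le_of_tendsto_integral {a b : ℕ → X → ℝ} {b₀ : X → ℝ}
    (ha : ∀ k, Integrable (a k) μ) (hb : ∀ k, Integrable (b k) μ) (hb₀ : Integrable b₀ μ)
    (ha_nonneg : ∀ k, ∀ᵐ x ∂μ, 0 ≤ a k x) (hab : ∀ k, ∀ᵐ x ∂μ, a k x ≤ b k x)
    (ha_lim : ∀ᵐ x ∂μ, Tendsto (fun k => a k x) atTop (𝓝 0))
    (hb_lim : ∀ᵐ x ∂μ, Tendsto (fun k => b k x) atTop (𝓝 (b₀ x)))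
    (hb_int : Tendsto (fun k => ∫ x, b k x ∂μ) atTop (𝓝 (∫ x, b₀ x ∂μ))) :
    Tendsto (fun k => ∫ x, a k x ∂μ) atTop (𝓝 0) := by
  let g (k : ℕ) (x : X) : ℝ := max (b₀ x - b k x + a k x) 0
  have hg (k : ℕ) : Integrable (g k) μ := ((hb₀.sub (hb k)).add (ha k)).pos_part
  have hb₀_nonneg : ∀ᵐ x ∂μ, 0 ≤ b₀ x := by
    filter_upwards [hb_lim, ae_all_iff.2 ha_nonneg, ae_all_iff.2 hab] with x hx hax habx
    exact ge_of_tendsto' hx fun k => (hax k).trans (habx k)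
  have hg_int : Tendsto (fun k => ∫ x, g k x ∂μ) atTop (𝓝 (∫ _, (0 : ℝ) ∂μ)) := by
    refine tendsto_integral_of_dominated_convergence b₀
      (fun k => (hg k).aestronglyMeasurable) hb₀ (fun k => ?_) ?_
    · filter_upwards [hb₀_nonneg, hab k] with x hx habx
      rw [Real.norm_of_nonneg (le_max_right _ _)]
      exact max_le (by linarith) hx
    · filter_upwards [ha_lim, hb_lim] with x hax hbx
      simpa only [sub_self, add_zero, max_self] using
        ((hbx.const_sub (b₀ x)).add hax).max (tendsto_const_nhds (x := 0))
  refine squeeze_zero (fun k => integral_nonneg_of_ae (ha_nonneg k)) (fun k => ?_)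
    ((hg_int.add (hb_int.sub_const (∫ x, b₀ x ∂μ))).trans_eq (by simp))
  have h_diff : Integrable (fun x => b k x - b₀ x) μ := (hb k).sub hb₀
  rw [← integral_sub (hb k) hb₀, ← integral_add (hg k) h_diff]
  refine integral_mono (ha k) ((hg k).fun_add h_diff) fun x => ?_
  have h_le : b₀ x - b k x + a k x ≤ g k x := le_max_left _ _
  linarith

theorem exists_seq_tendsto_ae_of_tendsto_integral_zero {g : ℕ → X → ℝ}
    (hg : ∀ k, Integrable (g k) μ) (hg_nonneg : ∀ k, ∀ᵐ x ∂μ, 0 ≤ g k x)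
    (hg_int : Tendsto (fun k => ∫ x, g k x ∂μ) atTop (𝓝 0)) :
    ∃ ns : ℕ → ℕ, StrictMono ns ∧ ∀ᵐ x ∂μ, Tendsto (fun k => g (ns k) x) atTop (𝓝 0) := by
  have h_norm (k : ℕ) : eLpNorm (g k - 0) 1 μ = ENNReal.ofReal (∫ x, g k x ∂μ) := by
    rw [sub_zero, eLpNorm_one_eq_lintegral_enorm,
      ofReal_integral_eq_lintegral_ofReal (hg k) (hg_nonneg k)]
    refine lintegral_congr_ae ?_
    filter_upwards [hg_nonneg k] with x hx using Real.enorm_of_nonneg hx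
  refine (tendstoInMeasure_of_tendsto_eLpNorm one_ne_zero
    (fun k => (hg k).aestronglyMeasurable) aestronglyMeasurable_zero ?_).exists_seq_tendsto_ae
  simpa only [h_norm, ENNReal.ofReal_zero] using ENNReal.tendsto_ofReal hg_int

variable {E : Type*} [NormedAddCommGroup E] {Φ : X → E → ℝ} {H : X → E} {Z : ℕ → X → E}

theorem tendsto_integral_norm_sub_of_tendsto_ae {c : ℝ} (hc : 0 < c) {C : X → ℝ}
    (hC : Integrable C μ) (hΦ_cont : ∀ᵐ x ∂μ, Continuous (Φ x))
    (hΦ_int : ∀ Y, Integrable Y μ → Integrable (fun x => Φ x (Y x)) μ)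
    (hΦ_coercive : ∀ᵐ x ∂μ, ∀ z, c * ‖z‖ ≤ Φ x z + C x) (hH : Integrable H μ)
    (hZ : ∀ k, Integrable (Z k) μ)
    (hZH : ∀ᵐ x ∂μ, Tendsto (fun k => Z k x) atTop (𝓝 (H x)))
    (h_lim : Tendsto (fun k => ∫ x, Φ x (Z k x) ∂μ) atTop (𝓝 (∫ x, Φ x (H x) ∂μ))) :
    Tendsto (fun k => ∫ x, ‖Z k x - H x‖ ∂μ) atTop (𝓝 0) := by
  let b (Y : X → E) (x : X) : ℝ := c⁻¹ * (Φ x (Y x) + Φ x (H x) + 2 * C x)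
  have hb {Y : X → E} (hY : Integrable Y μ) : Integrable (b Y) μ :=
    (((hΦ_int Y hY).add (hΦ_int H hH)).add (hC.const_mul 2)).const_mul _
  have hb_int {Y : X → E} (hY : Integrable Y μ) : ∫ x, b Y x ∂μ =
      c⁻¹ * (∫ x, Φ x (Y x) ∂μ + ∫ x, Φ x (H x) ∂μ + 2 * ∫ x, C x ∂μ) := by
    simp only [b]
    rw [integral_const_mul, integral_add ((hΦ_int Y hY).fun_add (hΦ_int H hH)) (hC.const_mul 2),
      integral_add (hΦ_int Y hY) (hΦ_int H hH), integral_const_mul]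
  refine tendsto_integral_zero_of_le_of_tendsto_integral (b := fun k => b (Z k))
    (fun k => ((hZ k).sub hH).norm) (fun k => hb (hZ k)) (hb hH)
    (fun k => .of_forall fun x => norm_nonneg _) (fun k => ?_) ?_ ?_ ?_
  · filter_upwards [hΦ_coercive] with x hx
    rw [le_inv_mul_iff₀ hc]
    calc c * ‖Z k x - H x‖ ≤ c * ‖Z k x‖ + c * ‖H x‖ := by
          rw [← mul_add]
          exact mul_le_mul_of_nonneg_left (norm_sub_le _ _) hc.le
      _ ≤ Φ x (Z k x) + Φ x (H x) + 2 * C x := by linarith [hx (Z k x), hx (H x)]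
  · filter_upwards [hZH] with x hx
    exact tendsto_iff_norm_sub_tendsto_zero.1 hx
  · filter_upwards [hZH, hΦ_cont] with x hx hΦx
    exact ((((hΦx.tendsto _).comp hx).add_const _).add_const _).const_mul _
  · simp only [hb_int hH, hb_int (hZ _)]
    exact ((h_lim.add_const _).add_const _).const_mul _

variable [NormedSpace ℝ E]

theorem tendsto_integral_midpointGap (hΦ : ∀ᵐ x ∂μ, ConvexOn ℝ univ (Φ x))
    (hΦ_int : ∀ Y, Integrable Y μ → Integrable (fun x => Φ x (Y x)) μ) (hH : Integrable H μ)
    (hZ : ∀ k, Integrable (Z k) μ)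
    (h_min : ∀ k, ∫ x, Φ x (H x) ∂μ ≤ ∫ x, Φ x ((2 : ℝ)⁻¹ • (H x + Z k x)) ∂μ)
    (h_lim : Tendsto (fun k => ∫ x, Φ x (Z k x) ∂μ) atTop (𝓝 (∫ x, Φ x (H x) ∂μ))) :
    Tendsto (fun k => ∫ x, midpointGap (Φ x) (H x) (Z k x) ∂μ) atTop (𝓝 0) := by
  refine squeeze_zero
    (fun k => integral_nonneg_of_ae (hΦ.mono fun x hx => midpointGap_nonneg hx _ _)) (fun k => ?_)
    ((h_lim.sub_const (∫ x, Φ x (H x) ∂μ)).trans_eq (by rw [sub_self]))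
  have h_mid := hΦ_int (fun x => (2 : ℝ)⁻¹ • (H x + Z k x)) ((hH.add (hZ k)).smul _)
  simp only [midpointGap]
  rw [integral_sub ((hΦ_int H hH).fun_add (hΦ_int _ (hZ k))) (h_mid.const_mul 2),
    integral_add (hΦ_int H hH) (hΦ_int _ (hZ k)), integral_const_mul]
  linarith [h_min k]

theorem tendsto_integral_norm_sub_of_strictConvexOn [FiniteDimensional ℝ E] {c : ℝ} (hc : 0 < c)
    {C : X → ℝ} (hC : Integrable C μ) (hΦ : ∀ᵐ x ∂μ, StrictConvexOn ℝ univ (Φ x))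
    (hΦ_int : ∀ Y, Integrable Y μ → Integrable (fun x => Φ x (Y x)) μ)
    (hΦ_coercive : ∀ᵐ x ∂μ, ∀ z, c * ‖z‖ ≤ Φ x z + C x) (hH : Integrable H μ)
    (hZ : ∀ k, Integrable (Z k) μ)
    (h_min : ∀ k, ∫ x, Φ x (H x) ∂μ ≤ ∫ x, Φ x ((2 : ℝ)⁻¹ • (H x + Z k x)) ∂μ)
    (h_lim : Tendsto (fun k => ∫ x, Φ x (Z k x) ∂μ) atTop (𝓝 (∫ x, Φ x (H x) ∂μ))) :
    Tendsto (fun k => ∫ x, ‖Z k x - H x‖ ∂μ) atTop (𝓝 0) := by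
  have hΦ_convex : ∀ᵐ x ∂μ, ConvexOn ℝ univ (Φ x) := hΦ.mono fun x hx => hx.convexOn
  have hΦ_cont : ∀ᵐ x ∂μ, Continuous (Φ x) :=
    hΦ_convex.mono fun x hx => continuousOn_univ.1 (hx.continuousOn isOpen_univ)
  have h_gap := tendsto_integral_midpointGap hΦ_convex hΦ_int hH hZ h_min h_lim
  have h_gap_int (k : ℕ) : Integrable (fun x => midpointGap (Φ x) (H x) (Z k x)) μ :=
    ((hΦ_int H hH).add (hΦ_int _ (hZ k))).sub
      ((hΦ_int (fun x => (2 : ℝ)⁻¹ • (H x + Z k x)) ((hH.add (hZ k)).smul _)).const_mul 2)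
  refine tendsto_of_subseq_tendsto fun ns hns => ?_
  obtain ⟨ms, hms, h_ae⟩ := exists_seq_tendsto_ae_of_tendsto_integral_zero
    (fun k => h_gap_int (ns k)) (fun k => hΦ_convex.mono fun x hx => midpointGap_nonneg hx _ _)
    (h_gap.comp hns)
  refine ⟨ms, tendsto_integral_norm_sub_of_tendsto_ae hc hC hΦ_cont hΦ_int hΦ_coercive hH
    (fun k => hZ (ns (ms k))) ?_ (h_lim.comp (hns.comp hms.tendsto_atTop))⟩
  filter_upwards [hΦ, h_ae] with x hx hx_gap using tendsto_of_tendsto_midpointGap hx hx_gap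

end VariationalConvergence

section EuclideanNorms

variable {ι κ : Type*} [Fintype ι] [Fintype κ]

theorem vnorm_eq_norm (v : ι → ℝ) : vnorm v = ‖WithLp.toLp 2 v‖ := by
  simp only [vnorm, EuclideanSpace.norm_eq, Real.norm_eq_abs, sq_abs]

theorem continuous_vnorm : Continuous (vnorm : (ι → ℝ) → ℝ) := by
  unfold vnorm
  fun_prop

theorem abs_apply_le_vnorm (v : ι → ℝ) (a : ι) : |v a| ≤ vnorm v :=
  (PiLp.norm_apply_le (WithLp.toLp 2 v) a).trans_eq (vnorm_eq_norm v).symm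

theorem vnorm_le_sum_abs (v : ι → ℝ) : vnorm v ≤ ∑ a, |v a| := by
  refine Real.sqrt_le_iff.2 ⟨by positivity, ?_⟩
  simpa only [sq_abs] using
    Finset.sum_sq_le_sq_sum_of_nonneg (s := Finset.univ) (f := fun a => |v a|)
      fun a _ => abs_nonneg (v a)

theorem mnorm_eq_vnorm_vnorm (A : ι → κ → ℝ) : mnorm A = vnorm fun a => vnorm (A a) := by
  have h_row (a : ι) : vnorm (A a) ^ 2 = ∑ i, A a i * A a i := by
    simp only [vnorm, ← sq]
    exact Real.sq_sqrt (by positivity)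
  rw [mnorm, mdot, vnorm]
  simp only [h_row]

theorem vnorm_apply_le_mnorm (A : ι → κ → ℝ) (a : ι) : vnorm (A a) ≤ mnorm A :=
  (le_abs_self _).trans ((abs_apply_le_vnorm (fun a => vnorm (A a)) a).trans_eq
    (mnorm_eq_vnorm_vnorm A).symm)

theorem mnorm_le_sum_vnorm (A : ι → κ → ℝ) : mnorm A ≤ ∑ a, vnorm (A a) := by
  rw [mnorm_eq_vnorm_vnorm]
  exact (vnorm_le_sum_abs _).trans_eq
    (Finset.sum_congr rfl fun a _ => abs_of_nonneg (Real.sqrt_nonneg _))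

/-- A matrix as a point of Euclidean space, so that `mdot` and `mnorm` become the inner product and
the norm. -/
noncomputable def matrixToEuclidean (ι κ : Type*) [Fintype ι] [Fintype κ] :
    (ι → κ → ℝ) →L[ℝ] EuclideanSpace ℝ (ι × κ) :=
  LinearMap.toContinuousLinearMap
    { toFun A := WithLp.toLp 2 fun p => A p.1 p.2
      map_add' _ _ := rfl
      map_smul' _ _ := rfl }

theorem inner_matrixToEuclidean (A B : ι → κ → ℝ) :
    ⟪matrixToEuclidean ι κ A, matrixToEuclidean ι κ B⟫ = mdot A B := by
  simp only [PiLp.inner_apply, Fintype.sum_prod_type, mdot, RCLike.inner_apply, conj_trivial]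
  exact Finset.sum_congr rfl fun a _ => Finset.sum_congr rfl fun i _ => mul_comm _ _

theorem norm_matrixToEuclidean (A : ι → κ → ℝ) : ‖matrixToEuclidean ι κ A‖ = mnorm A := by
  rw [mnorm, ← inner_matrixToEuclidean, real_inner_self_eq_norm_sq, Real.sqrt_sq (norm_nonneg _)]

/-- The linear functional on Euclidean space with the given coordinates, which turns the rows of
a gradient matrix into Fréchet derivatives. -/
noncomputable def functionalOfCoords (κ : Type*) [Fintype κ] :
    (κ → ℝ) →L[ℝ] EuclideanSpace ℝ κ →L[ℝ] ℝ :=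
  LinearMap.toContinuousLinearMap
    { toFun z := innerSL ℝ (WithLp.toLp 2 z)
      map_add' z w := by ext; simp
      map_smul' c z := by ext; simp }

theorem functionalOfCoords_single [DecidableEq κ] (z : κ → ℝ) (i : κ) :
    functionalOfCoords κ z (EuclideanSpace.single i 1) = z i := by
  simp [functionalOfCoords, EuclideanSpace.inner_single_right]

theorem functionalOfCoords_apply_single [DecidableEq κ] (G : EuclideanSpace ℝ κ →L[ℝ] ℝ) :
    (functionalOfCoords κ fun i => G (EuclideanSpace.single i 1)) = G := by
  refine ContinuousLinearMap.coe_injective ((EuclideanSpace.basisFun κ ℝ).toBasis.ext fun i => ?_)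
  simp [functionalOfCoords_single]

theorem norm_functionalOfCoords (z : κ → ℝ) : ‖functionalOfCoords κ z‖ = vnorm z :=
  (innerSL_apply_norm ℝ _).trans (vnorm_eq_norm z).symm

end EuclideanNorms

section WeakDerivativeCalculus

variable {E : Type*} [NormedAddCommGroup E] [NormedSpace ℝ E] [MeasurableSpace E]
  [OpensMeasurableSpace E] {μ : Measure E} {Ω : Set E} {u w : E → ℝ} {G H : E → E →L[ℝ] ℝ}
  {φ : E → ℝ}

omit [NormedSpace ℝ E] in
theorem integrableOn_mul_of_hasCompactSupport (hu : IntegrableOn u Ω μ) (hφ : Continuous φ)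
    (hφc : HasCompactSupport φ) : IntegrableOn (fun x => u x * φ x) Ω μ :=
  let ⟨M, hM⟩ := hφc.exists_bound_of_continuous hφ
  Integrable.mul_bdd (c := M) hu hφ.aestronglyMeasurable (.of_forall hM)

theorem integrableOn_mul_fderiv_apply (hu : IntegrableOn u Ω μ) (hφ : ContDiff ℝ 1 φ)
    (hφc : HasCompactSupport φ) (v : E) : IntegrableOn (fun x => u x * fderiv ℝ φ x v) Ω μ :=
  integrableOn_mul_of_hasCompactSupport hu
    ((hφ.continuous_fderiv one_ne_zero).clm_apply continuous_const) (hφc.fderiv_apply ℝ v)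

theorem integrableOn_clm_apply_mul (hG : IntegrableOn G Ω μ) (hφ : Continuous φ)
    (hφc : HasCompactSupport φ) (v : E) : IntegrableOn (fun x => G x v * φ x) Ω μ :=
  integrableOn_mul_of_hasCompactSupport (hG.apply_continuousLinearMap v) hφ hφc

theorem hasWeakFDerivOn_of_basis {ι : Type*} (b : Basis ι ℝ E) (hu : IntegrableOn u Ω μ)
    (hG : IntegrableOn G Ω μ)
    (h : ∀ φ : E → ℝ, ContDiff ℝ 1 φ → HasCompactSupport φ → tsupport φ ⊆ Ω →
      ∀ i, ∫ x in Ω, u x * fderiv ℝ φ x (b i) ∂μ = -∫ x in Ω, G x (b i) * φ x ∂μ) :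
    HasWeakFDerivOn μ Ω u G where
  integrableOn := hu
  integrableOn_deriv := hG
  integral_mul_fderiv φ hφ hφc hφΩ v := by
    induction (b.span_eq ▸ Submodule.mem_top : v ∈ Submodule.span ℝ (range b))
      using Submodule.span_induction with
    | mem _ hv =>
      obtain ⟨i, rfl⟩ := hv
      exact h φ hφ hφc hφΩ i
    | zero => simp
    | add v v' _ _ hv hv' =>
      simp only [map_add, mul_add, add_mul]
      rw [integral_add (integrableOn_mul_fderiv_apply hu hφ hφc v)
          (integrableOn_mul_fderiv_apply hu hφ hφc v'),
        integral_add (integrableOn_clm_apply_mul hG hφ.continuous hφc v)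
          (integrableOn_clm_apply_mul hG hφ.continuous hφc v'), hv, hv', neg_add]
    | smul c v _ hv =>
      simp only [map_smul, smul_eq_mul, mul_assoc, mul_left_comm (u _) c]
      rw [integral_const_mul, integral_const_mul, hv, mul_neg]

theorem HasWeakFDerivOn.smul_add_smul (hu : HasWeakFDerivOn μ Ω u G) (hw : HasWeakFDerivOn μ Ω w H)
    (α β : ℝ) :
    HasWeakFDerivOn μ Ω (fun x => α • u x + β • w x) fun x => α • G x + β • H x where
  integrableOn := (hu.integrableOn.smul α).add (hw.integrableOn.smul β)
  integrableOn_deriv := (hu.integrableOn_deriv.smul α).add (hw.integrableOn_deriv.smul β)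
  integral_mul_fderiv φ hφ hφc hφΩ v := by
    simp only [add_apply, smul_apply, smul_eq_mul, add_mul, mul_assoc]
    rw [integral_add
        ((integrableOn_mul_fderiv_apply hu.integrableOn hφ hφc v).const_mul α)
        ((integrableOn_mul_fderiv_apply hw.integrableOn hφ hφc v).const_mul β),
      integral_add
        ((integrableOn_clm_apply_mul hu.integrableOn_deriv hφ.continuous hφc v).const_mul α)
        ((integrableOn_clm_apply_mul hw.integrableOn_deriv hφ.continuous hφc v).const_mul β)]
    simp only [integral_const_mul, hu.integral_mul_fderiv φ hφ hφc hφΩ v,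
      hw.integral_mul_fderiv φ hφ hφc hφΩ v]
    ring

theorem hasWeakFDerivOn_of_lipschitzWith {E : Type*} [NormedAddCommGroup E] [NormedSpace ℝ E]
    [FiniteDimensional ℝ E] [MeasurableSpace E] [BorelSpace E] {μ : Measure E}
    [μ.IsAddHaarMeasure] {Ω : Set E} (hΩ : Bornology.IsBounded Ω) {w : E → ℝ} {A : ℝ≥0}
    (hw : LipschitzWith A w) : HasWeakFDerivOn μ Ω w (fderiv ℝ w) where
  integrableOn :=
    have : ProperSpace E := FiniteDimensional.proper_real E
    integrableOn_of_continuous_of_isBounded hw.continuous hΩ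
  integrableOn_deriv := integrableOn_fderiv_of_lipschitzWith hw hΩ
  integral_mul_fderiv φ hφ hφc hφΩ v := by
    rw [setIntegral_mul_eq_integral w ((tsupport_fderiv_apply_subset ℝ v).trans hφΩ),
      setIntegral_mul_eq_integral (fun x => fderiv ℝ w x v) hφΩ]
    exact integral_mul_fderiv_eq_neg_of_lipschitzWith hw hφ hφc v

end WeakDerivativeCalculus

section VectorSobolev

variable {n : ℕ} {ι : Type*} [Fintype ι] {Ω : Set (EVec n)} {u w : EVec n → ι → ℝ}
  {Du Dw : EVec n → ι → Fin n → ℝ}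

theorem hasWeakDerivOn_iff : HasWeakDerivOn Ω u Du ↔
    ∀ a, HasWeakFDerivOn volume Ω (fun x => u x a)
      fun x => functionalOfCoords (Fin n) (Du x a) := by
  constructor
  · rintro ⟨hu, hDu, h⟩ a
    refine hasWeakFDerivOn_of_basis (EuclideanSpace.basisFun (Fin n) ℝ).toBasis (hu.eval a)
      ((functionalOfCoords (Fin n)).integrable_comp (hDu.eval a)) fun φ hφ hφc hφΩ i => ?_
    simpa [functionalOfCoords_single] using h φ hφ hφc hφΩ a i
  · intro h
    refine ⟨Integrable.of_eval fun a => (h a).integrableOn, Integrable.of_eval fun a =>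
      Integrable.of_eval fun i => ?_, fun φ hφ hφc hφΩ a i => ?_⟩
    · simpa only [functionalOfCoords_single] using
        (h a).integrableOn_deriv.apply_continuousLinearMap (EuclideanSpace.single i 1)
    · simpa only [functionalOfCoords_single] using
        (h a).integral_mul_fderiv φ hφ hφc hφΩ (EuclideanSpace.single i 1)

theorem HasWeakDerivOn.smul_add_smul (hu : HasWeakDerivOn Ω u Du) (hw : HasWeakDerivOn Ω w Dw)
    (α β : ℝ) :
    HasWeakDerivOn Ω (fun x => α • u x + β • w x) fun x => α • Du x + β • Dw x :=
  hasWeakDerivOn_iff.2 fun a => by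
    simpa using (hasWeakDerivOn_iff.1 hu a).smul_add_smul (hasWeakDerivOn_iff.1 hw a) α β

theorem HasWeakDerivOn.sub (hu : HasWeakDerivOn Ω u Du) (hw : HasWeakDerivOn Ω w Dw) :
    HasWeakDerivOn Ω (fun x => u x - w x) fun x => Du x - Dw x := by
  simpa [← sub_eq_add_neg] using hu.smul_add_smul hw 1 (-1)

theorem HasWeakDerivOn.integrable_matrixToEuclidean (hu : HasWeakDerivOn Ω u Du) :
    Integrable (fun x => matrixToEuclidean ι (Fin n) (Du x)) (volume.restrict Ω) :=
  (matrixToEuclidean ι (Fin n)).integrable_comp hu.2.1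

theorem HasWeakDerivOn.integrableOn_mnorm (hu : HasWeakDerivOn Ω u Du) :
    IntegrableOn (fun x => mnorm (Du x)) Ω := by
  simpa only [IntegrableOn, norm_matrixToEuclidean] using hu.integrable_matrixToEuclidean.norm

theorem ZeroMean.sub (hu : ZeroMean Ω u) (hw : ZeroMean Ω w) (hu_int : IntegrableOn u Ω)
    (hw_int : IntegrableOn w Ω) : ZeroMean Ω fun x => u x - w x := fun a => by
  simp only [Pi.sub_apply]
  rw [integral_sub (hu_int.eval a) (hw_int.eval a), hu a, hw a, sub_zero]

theorem memW12_of_lipschitzWith (hΩ : Bornology.IsBounded Ω) {w : ι → EVec n → ℝ} {A : ι → ℝ≥0}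
    (hw : ∀ a, LipschitzWith (A a) (w a)) :
    MemW12 Ω (fun x a => w a x) fun x a i => fderiv ℝ (w a) x (EuclideanSpace.single i 1) := by
  have h_deriv : HasWeakDerivOn Ω (fun x a => w a x)
      fun x a i => fderiv ℝ (w a) x (EuclideanSpace.single i 1) :=
    hasWeakDerivOn_iff.2 fun a => by
      simpa only [functionalOfCoords_apply_single] using hasWeakFDerivOn_of_lipschitzWith hΩ (hw a)
  have h_cont : Continuous fun x a => w a x := continuous_pi fun a => (hw a).continuous
  have : IsFiniteMeasure (volume.restrict Ω) := ⟨by simpa using hΩ.measure_lt_top⟩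
  refine ⟨h_deriv, integrableOn_of_continuous_of_isBounded
    ((continuous_vnorm.comp h_cont).pow 2) hΩ,
    Integrable.of_bound (h_deriv.integrableOn_mnorm.aestronglyMeasurable.pow 2)
      ((∑ a, (A a : ℝ)) ^ 2) (.of_forall fun x => ?_)⟩
  rw [Real.norm_of_nonneg (sq_nonneg _)]
  refine pow_le_pow_left₀ (Real.sqrt_nonneg _) ((mnorm_le_sum_vnorm _).trans ?_) 2
  refine Finset.sum_le_sum fun a _ => ?_
  rw [← norm_functionalOfCoords, functionalOfCoords_apply_single]
  exact norm_fderiv_le_of_lipschitz ℝ (hw a)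

theorem HasWeakDerivOn.setIntegral_mnorm_le (hu : HasWeakDerivOn Ω u Du) :
    ∫ x in Ω, mnorm (Du x) ≤ ∑ a, ∫ x in Ω, ‖functionalOfCoords (Fin n) (Du x a)‖ := by
  have h_row (a : ι) : IntegrableOn (fun x => ‖functionalOfCoords (Fin n) (Du x a)‖) Ω :=
    (hasWeakDerivOn_iff.1 hu a).integrableOn_deriv.norm
  rw [← integral_finsetSum _ fun a _ => h_row a]
  refine integral_mono hu.integrableOn_mnorm (integrable_finsetSum _ fun a _ => h_row a) fun x => ?_
  simpa only [norm_functionalOfCoords] using mnorm_le_sum_vnorm (Du x)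

theorem exists_memW12_tendsto_setIntegral_mnorm_sub (hΩ : IsLipschitzDomain Ω)
    (hb : Bornology.IsBounded Ω) (hu : HasWeakDerivOn Ω u Du) :
    ∃ (w : ℕ → EVec n → ι → ℝ) (Dw : ℕ → EVec n → ι → Fin n → ℝ), (∀ k, MemW12 Ω (w k) (Dw k)) ∧
      Tendsto (fun k => ∫ x in Ω, mnorm (Dw k x - Du x)) atTop (𝓝 0) := by
  choose w hw _ hDw using fun a =>
    (hasWeakDerivOn_iff.1 hu a).approxByLipschitzOn hΩ.1 hb hΩ.exists_lipschitzChart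
  choose A hA using hw
  have h_mem (k : ℕ) := memW12_of_lipschitzWith hb fun a => hA a k
  refine ⟨_, _, h_mem, squeeze_zero (fun k => integral_nonneg fun x => Real.sqrt_nonneg _)
    (fun k => ((h_mem k).1.sub hu).setIntegral_mnorm_le) ?_⟩
  simpa [functionalOfCoords_apply_single] using tendsto_finsetSum Finset.univ fun a _ => hDw a

theorem exists_setIntegral_vnorm_le_mul_setIntegral_mnorm (hΩ : IsLipschitzDomain Ω)
    (hb : Bornology.IsBounded Ω) :
    ∃ C : ℝ, ∀ (u : EVec n → ι → ℝ) (Du : EVec n → ι → Fin n → ℝ), HasWeakDerivOn Ω u Du →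
      ZeroMean Ω u → ∫ x in Ω, vnorm (u x) ≤ C * ∫ x in Ω, mnorm (Du x) := by
  obtain ⟨C, hC⟩ := (poincareOn_self_of_isPreconnected (μ := volume) hΩ.1 hb hΩ.2.1
    hΩ.2.2.1.isPreconnected hΩ.exists_lipschitzChart).integral_norm_le_of_integral_eq_zero
    hb.measure_lt_top.ne
  refine ⟨Fintype.card ι * C, fun u Du hu hu₀ => ?_⟩
  have h_row (a : ι) : IntegrableOn (fun x => |u x a|) Ω := (hu.1.eval a).abs
  calc ∫ x in Ω, vnorm (u x)
    _ ≤ ∫ x in Ω, ∑ a, |u x a| := integral_mono_of_nonneg (.of_forall fun x => Real.sqrt_nonneg _)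
        (integrable_finsetSum _ fun a _ => h_row a) (.of_forall fun x => vnorm_le_sum_abs (u x))
    _ = ∑ a, ∫ x in Ω, |u x a| := integral_finsetSum _ fun a _ => h_row a
    _ ≤ ∑ _a : ι, C * ∫ x in Ω, mnorm (Du x) := Finset.sum_le_sum fun a _ => by
        refine (hC _ _ (hasWeakDerivOn_iff.1 hu a) (hu₀ a)).trans ?_
        refine mul_le_mul_of_nonneg_left (integral_mono
          (hasWeakDerivOn_iff.1 hu a).integrableOn_deriv.norm hu.integrableOn_mnorm fun x => ?_)
          C.coe_nonneg
        exact (norm_functionalOfCoords _).trans_le (vnorm_apply_le_mnorm (Du x) a)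
    _ = Fintype.card ι * C * ∫ x in Ω, mnorm (Du x) := by
        rw [Finset.sum_const, Finset.card_univ, nsmul_eq_mul, mul_assoc]

end VectorSobolev

section TiltedIntegrand

variable {E : Type*} [NormedAddCommGroup E] [InnerProductSpace ℝ E] {F : E → ℝ} {K : ℝ≥0}

/-- The convex integrand `F` tilted by the linear form `⟪t, ·⟫`. With `F = f ∘ ‖·‖` and `t = T₀ x`
it is the integrand of `𝔉` at the point `x`, as a function of the gradient. -/
def tiltedIntegrand (F : E → ℝ) (t z : E) : ℝ :=
  F z - ⟪t, z⟫

theorem strictConvexOn_tiltedIntegrand (hF : StrictConvexOn ℝ univ F) (t : E) :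
    StrictConvexOn ℝ univ (tiltedIntegrand F t) :=
  hF.sub_concaveOn ((innerSL ℝ t).toLinearMap.concaveOn convex_univ)

theorem norm_tiltedIntegrand_sub_le (hF : LipschitzWith K F) (t y z : E) :
    ‖tiltedIntegrand F t y - tiltedIntegrand F t z‖ ≤ (K + ‖t‖) * ‖y - z‖ := calc
  ‖tiltedIntegrand F t y - tiltedIntegrand F t z‖ = ‖(F y - F z) - ⟪t, y - z⟫‖ := by
    rw [tiltedIntegrand, tiltedIntegrand, inner_sub_right, sub_sub_sub_comm]
  _ ≤ ‖F y - F z‖ + ‖⟪t, y - z⟫‖ := norm_sub_le _ _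
  _ ≤ K * ‖y - z‖ + ‖t‖ * ‖y - z‖ := add_le_add (hF.norm_sub_le y z) (norm_inner_le_norm t _)
  _ = (K + ‖t‖) * ‖y - z‖ := (add_mul _ _ _).symm

variable {X : Type*} [MeasurableSpace X] {μ : Measure X} [IsFiniteMeasure μ] {T : X → E} {τ : ℝ}

theorem integrable_tiltedIntegrand (hF : LipschitzWith K F) (hT : AEStronglyMeasurable T μ)
    (hTτ : ∀ᵐ x ∂μ, ‖T x‖ ≤ τ) {Y : X → E} (hY : Integrable Y μ) :
    Integrable (fun x => tiltedIntegrand F (T x) (Y x)) μ := by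
  refine Integrable.mono' ((hY.norm.const_mul (K + τ)).add (integrable_const ‖F 0‖))
    ((hF.continuous.comp_aestronglyMeasurable hY.1).sub (hT.inner hY.1)) ?_
  filter_upwards [hTτ] with x hx
  have h_zero : tiltedIntegrand F (T x) 0 = F 0 := by simp [tiltedIntegrand]
  have h_le := norm_tiltedIntegrand_sub_le hF (T x) (Y x) 0
  rw [h_zero, sub_zero] at h_le
  calc ‖tiltedIntegrand F (T x) (Y x)‖
    _ ≤ ‖tiltedIntegrand F (T x) (Y x) - F 0‖ + ‖F 0‖ := norm_le_norm_sub_add _ _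
    _ ≤ (K + τ) * ‖Y x‖ + ‖F 0‖ := by grw [h_le, hx]

theorem tendsto_integral_tiltedIntegrand (hF : LipschitzWith K F) (hT : AEStronglyMeasurable T μ)
    (hTτ : ∀ᵐ x ∂μ, ‖T x‖ ≤ τ) {ι : Type*} {l : Filter ι} {Y : ι → X → E} {Y₀ : X → E}
    (hY : ∀ i, Integrable (Y i) μ) (hY₀ : Integrable Y₀ μ)
    (h : Tendsto (fun i => ∫ x, ‖Y i x - Y₀ x‖ ∂μ) l (𝓝 0)) :
    Tendsto (fun i => ∫ x, tiltedIntegrand F (T x) (Y i x) ∂μ) l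
      (𝓝 (∫ x, tiltedIntegrand F (T x) (Y₀ x) ∂μ)) := by
  refine tendsto_integral_of_tendsto_integral_norm_sub
    (fun i => integrable_tiltedIntegrand hF hT hTτ (hY i))
    (integrable_tiltedIntegrand hF hT hTτ hY₀)
    (squeeze_zero (fun i => integral_nonneg fun x => norm_nonneg _) (fun i => ?_)
      ((h.const_mul (K + τ)).trans_eq (by rw [mul_zero])))
  rw [← integral_const_mul]
  refine integral_mono_of_nonneg (.of_forall fun x => norm_nonneg _)
    (((hY i).sub hY₀).norm.const_mul _) ?_
  filter_upwards [hTτ] with x hx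
  grw [norm_tiltedIntegrand_sub_le hF, hx]

theorem tendsto_integral_norm_sub_of_radial [FiniteDimensional ℝ E] {f : ℝ → ℝ} {c : ℝ}
    (hf : StrictConvexOn ℝ (Ici 0) f) (hf_min : ∀ t ∈ Ici 0, f 0 ≤ f t)
    (hfc : Tendsto (fun t => f t / t) atTop (𝓝 c)) (hT : AEStronglyMeasurable T μ)
    (hTτ : ∀ᵐ x ∂μ, ‖T x‖ ≤ τ) (hτ : τ < c) {H : X → E} {Z : ℕ → X → E} (hH : Integrable H μ)
    (hZ : ∀ k, Integrable (Z k) μ)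
    (h_min : ∀ k, ∫ x, tiltedIntegrand (fun z => f ‖z‖) (T x) (H x) ∂μ ≤
      ∫ x, tiltedIntegrand (fun z => f ‖z‖) (T x) ((2 : ℝ)⁻¹ • (H x + Z k x)) ∂μ)
    (h_lim : Tendsto (fun k => ∫ x, tiltedIntegrand (fun z => f ‖z‖) (T x) (Z k x) ∂μ) atTop
      (𝓝 (∫ x, tiltedIntegrand (fun z => f ‖z‖) (T x) (H x) ∂μ))) :
    Tendsto (fun k => ∫ x, ‖Z k x - H x‖ ∂μ) atTop (𝓝 0) := by
  have hf_mono := strictMonoOn_Ici_of_strictConvexOn hf hf_min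
  obtain ⟨σ, hτσ, hσc⟩ := exists_between hτ
  obtain ⟨C, hC⟩ := exists_forall_mul_sub_le_of_tendsto_div hf_min hfc hσc
  refine tendsto_integral_norm_sub_of_strictConvexOn (sub_pos.2 hτσ) (integrable_const C)
    (.of_forall fun x => strictConvexOn_tiltedIntegrand (strictConvexOn_comp_norm hf hf_mono) (T x))
    (fun Y hY => integrable_tiltedIntegrand
      (lipschitzWith_comp_norm hf.convexOn hf_mono.monotoneOn hfc) hT hTτ hY) ?_ hH hZ h_min h_lim
  filter_upwards [hTτ] with x hx z
  have h_inner : ⟪T x, z⟫ ≤ τ * ‖z‖ := by grw [real_inner_le_norm, hx]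
  rw [tiltedIntegrand]
  linarith [hC ‖z‖ (norm_nonneg z)]

end TiltedIntegrand

section Minimisers

variable {n N : ℕ} {Ω : Set (EVec n)} {f : ℝ → ℝ} {T₀ : EVec n → Fin N → Fin n → ℝ}

theorem FF_eq_setIntegral_tiltedIntegrand (D : EVec n → Fin N → Fin n → ℝ) :
    FF Ω f T₀ D = ∫ x in Ω, tiltedIntegrand (fun z => f ‖z‖)
      (matrixToEuclidean (Fin N) (Fin n) (T₀ x)) (matrixToEuclidean (Fin N) (Fin n) (D x)) := by
  simp only [FF, tiltedIntegrand, norm_matrixToEuclidean, inner_matrixToEuclidean]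

theorem ae_mnorm_le_toReal_linfNormOn (hT : linfNormOn Ω T₀ ≠ ⊤) :
    ∀ᵐ x ∂volume.restrict Ω, mnorm (T₀ x) ≤ (linfNormOn Ω T₀).toReal :=
  (ae_le_essSup (f := fun x => ENNReal.ofReal (mnorm (T₀ x)))).mono fun _ hx =>
    (ENNReal.ofReal_le_iff_le_toReal hT).1 hx

theorem tendsto_of_le_of_eventually_le_add_mul {α β : Type*} {l : Filter α} {l' : Filter β}
    [l'.NeBot] {x ε : α → ℝ} {y M : β → ℝ} {m : ℝ} (hx : ∀ᶠ k in l, m ≤ x k)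
    (hy : Tendsto y l' (𝓝 m)) (hε : Tendsto ε l (𝓝 0))
    (h : ∀ j, ∀ᶠ k in l, x k ≤ y j + ε k * M j) : Tendsto x l (𝓝 m) := by
  refine tendsto_order.2 ⟨fun a ha => hx.mono fun k hk => ha.trans_le hk, fun b hb => ?_⟩
  obtain ⟨j, hj⟩ := (hy.eventually_lt_const hb).exists
  have h_lim : Tendsto (fun k => y j + ε k * M j) l (𝓝 (y j)) := by
    simpa using (hε.mul_const (M j)).const_add (y j)
  filter_upwards [h j, h_lim.eventually_lt_const hj] with k hk hk' using hk.trans_lt hk'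

theorem tendsto_FF_of_forall_le {τ : ℝ} {K : ℝ≥0} (hΩ : IsLipschitzDomain Ω)
    (hb : Bornology.IsBounded Ω)
    (hf : LipschitzWith K fun z : EuclideanSpace ℝ (Fin N × Fin n) => f ‖z‖)
    (hT : AEStronglyMeasurable T₀ (volume.restrict Ω))
    (hTτ : ∀ᵐ x ∂volume.restrict Ω, mnorm (T₀ x) ≤ τ)
    {u : ℕ → EVec n → Fin N → ℝ} {Du : ℕ → EVec n → Fin N → Fin n → ℝ}
    (hu : ∀ k, 0 < k → HasWeakDerivOn Ω (u k) (Du k))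
    (hmin : ∀ k, 0 < k → ∀ w Dw, MemW12 Ω w Dw → FFk Ω f T₀ k (Du k) ≤ FFk Ω f T₀ k Dw)
    {U : EVec n → Fin N → ℝ} {DU : EVec n → Fin N → Fin n → ℝ} (hU : HasWeakDerivOn Ω U DU)
    (hUmin : ∀ w Dw, HasWeakDerivOn Ω w Dw → FF Ω f T₀ DU ≤ FF Ω f T₀ Dw) :
    Tendsto (fun k => FF Ω f T₀ (Du k)) atTop (𝓝 (FF Ω f T₀ DU)) := by
  have : IsFiniteMeasure (volume.restrict Ω) := ⟨by simpa using hb.measure_lt_top⟩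
  obtain ⟨w, Dw, hw, hDw⟩ := exists_memW12_tendsto_setIntegral_mnorm_sub hΩ hb hU
  have hFw : Tendsto (fun j => FF Ω f T₀ (Dw j)) atTop (𝓝 (FF Ω f T₀ DU)) := by
    simp only [FF_eq_setIntegral_tiltedIntegrand]
    refine tendsto_integral_tiltedIntegrand hf
      ((matrixToEuclidean (Fin N) (Fin n)).continuous.comp_aestronglyMeasurable hT)
      (by simpa only [norm_matrixToEuclidean] using hTτ)
      (fun j => (hw j).1.integrable_matrixToEuclidean)
      hU.integrable_matrixToEuclidean ?_
    simpa only [← map_sub, norm_matrixToEuclidean] using hDw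
  have h_inv : Tendsto (fun k : ℕ => (2 * (k : ℝ))⁻¹) atTop (𝓝 0) :=
    (tendsto_natCast_atTop_atTop.const_mul_atTop two_pos).inv_tendsto_atTop
  refine tendsto_of_le_of_eventually_le_add_mul (M := fun j => ∫ x in Ω, mnorm (Dw j x) ^ 2)
    ((eventually_gt_atTop 0).mono fun k hk => hUmin _ _ (hu k hk)) hFw h_inv
    fun j => (eventually_gt_atTop 0).mono fun k hk => ?_
  refine le_trans ?_ (hmin k hk _ _ (hw j))
  exact le_add_of_nonneg_right
    (mul_nonneg (by positivity) (integral_nonneg fun x => sq_nonneg _))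

theorem tendsto_setIntegral_mnorm_sub_of_tendsto_FF {finf : ℝ} (hb : Bornology.IsBounded Ω)
    (hf : StrictConvexOn ℝ (Ici 0) f) (hf_min : ∀ t ∈ Ici 0, f 0 ≤ f t)
    (hfinf : Tendsto (fun t => f t / t) atTop (𝓝 finf))
    (hT : AEStronglyMeasurable T₀ (volume.restrict Ω))
    (hTsmall : linfNormOn Ω T₀ < ENNReal.ofReal finf)
    {u : ℕ → EVec n → Fin N → ℝ} {Du : ℕ → EVec n → Fin N → Fin n → ℝ}
    (hu : ∀ k, HasWeakDerivOn Ω (u k) (Du k))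
    {U : EVec n → Fin N → ℝ} {DU : EVec n → Fin N → Fin n → ℝ} (hU : HasWeakDerivOn Ω U DU)
    (hUmin : ∀ w Dw, HasWeakDerivOn Ω w Dw → FF Ω f T₀ DU ≤ FF Ω f T₀ Dw)
    (h_lim : Tendsto (fun k => FF Ω f T₀ (Du k)) atTop (𝓝 (FF Ω f T₀ DU))) :
    Tendsto (fun k => ∫ x in Ω, mnorm (Du k x - DU x)) atTop (𝓝 0) := by
  have : IsFiniteMeasure (volume.restrict Ω) := ⟨by simpa using hb.measure_lt_top⟩
  have h_mid (k : ℕ) := hUmin _ _ (hU.smul_add_smul (hu k) (2 : ℝ)⁻¹ (2 : ℝ)⁻¹)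
  simp only [FF_eq_setIntegral_tiltedIntegrand, map_add, map_smul, ← smul_add] at h_lim h_mid
  simp only [← norm_matrixToEuclidean, map_sub]
  refine tendsto_integral_norm_sub_of_radial hf hf_min hfinf
    ((matrixToEuclidean (Fin N) (Fin n)).continuous.comp_aestronglyMeasurable hT) ?_
    ((ENNReal.lt_ofReal_iff_toReal_lt hTsmall.ne_top).1 hTsmall)
    hU.integrable_matrixToEuclidean
    (fun k => (hu k).integrable_matrixToEuclidean) h_mid h_lim
  simpa only [norm_matrixToEuclidean] using ae_mnorm_le_toReal_linfNormOn hTsmall.ne_top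

theorem tendsto_setIntegral_vnorm_sub_of_zeroMean {ι : Type*} [Fintype ι]
    (hΩ : IsLipschitzDomain Ω) (hb : Bornology.IsBounded Ω)
    {u : ℕ → EVec n → ι → ℝ} {Du : ℕ → EVec n → ι → Fin n → ℝ}
    (hu : ∀ k, HasWeakDerivOn Ω (u k) (Du k)) (hu₀ : ∀ k, ZeroMean Ω (u k))
    {U : EVec n → ι → ℝ} {DU : EVec n → ι → Fin n → ℝ} (hU : HasWeakDerivOn Ω U DU)
    (hU₀ : ZeroMean Ω U)
    (h : Tendsto (fun k => ∫ x in Ω, mnorm (Du k x - DU x)) atTop (𝓝 0)) :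
    Tendsto (fun k => ∫ x in Ω, vnorm (u k x - U x)) atTop (𝓝 0) := by
  obtain ⟨C, hC⟩ := exists_setIntegral_vnorm_le_mul_setIntegral_mnorm (ι := ι) hΩ hb
  exact squeeze_zero (fun k => integral_nonneg fun x => Real.sqrt_nonneg _)
    (fun k => hC _ _ ((hu k).sub hU) ((hu₀ k).sub hU₀ (hu k).1 hU.1))
    ((h.const_mul C).trans_eq (by rw [mul_zero]))

theorem MemW2inf.aestronglyMeasurable (hT : MemW2inf Ω T₀) (hΩ : MeasurableSet Ω) :
    AEStronglyMeasurable T₀ (volume.restrict Ω) := by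
  obtain ⟨_, _, _, h_deriv, _⟩ := hT
  exact ContinuousOn.aestronglyMeasurable (fun x hx => (h_deriv x hx).continuousWithinAt) hΩ

end Minimisers

theorem strong_W11_convergence_general
    {n N : ℕ} (Ω : Set (EVec n)) (hΩ : IsLipschitzDomain Ω) (hΩbdd : Bornology.IsBounded Ω)
    (f : ℝ → ℝ) (hstrict : StrictConvexOn ℝ (Ici 0) f) (hf_min : ∀ t ∈ Ici 0, f 0 ≤ f t)
    (finf : ℝ) (hfinf : Tendsto (fun t => f t / t) atTop (𝓝 finf))
    (T₀ : EVec n → Fin N → Fin n → ℝ) (hT : AEStronglyMeasurable T₀ (volume.restrict Ω))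
    (hTsmall : linfNormOn Ω T₀ < ENNReal.ofReal finf)
    (u : ℕ → EVec n → Fin N → ℝ) (Du : ℕ → EVec n → Fin N → Fin n → ℝ)
    (hmem : ∀ k, 0 < k → MemW12 Ω (u k) (Du k)) (hzero : ∀ k, 0 < k → ZeroMean Ω (u k))
    (hmin : ∀ k, 0 < k → ∀ w Dw, MemW12 Ω w Dw → FFk Ω f T₀ k (Du k) ≤ FFk Ω f T₀ k Dw)
    (U : EVec n → Fin N → ℝ) (DU : EVec n → Fin N → Fin n → ℝ) (hU : HasWeakDerivOn Ω U DU)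
    (hUzero : ZeroMean Ω U)
    (hUmin : ∀ w Dw, HasWeakDerivOn Ω w Dw → FF Ω f T₀ DU ≤ FF Ω f T₀ Dw) :
    Tendsto
      (fun k => (∫ x in Ω, vnorm (u k x - U x)) + ∫ x in Ω, mnorm (Du k x - DU x))
      atTop (𝓝 0) := by
  have h_energy := tendsto_FF_of_forall_le hΩ hΩbdd
    (lipschitzWith_comp_norm hstrict.convexOn
      (strictMonoOn_Ici_of_strictConvexOn hstrict hf_min).monotoneOn hfinf)
    hT (ae_mnorm_le_toReal_linfNormOn hTsmall.ne_top) (fun k hk => (hmem k hk).1) hmin hU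
    hUmin
  have hu (k : ℕ) := (hmem (k + 1) k.succ_pos).1
  have h_grad := tendsto_setIntegral_mnorm_sub_of_tendsto_FF hΩbdd hstrict hf_min hfinf hT hTsmall
    hu hU hUmin ((tendsto_add_atTop_iff_nat 1).2 h_energy)
  have h_fun := tendsto_setIntegral_vnorm_sub_of_zeroMean hΩ hΩbdd hu
    (fun k => hzero (k + 1) k.succ_pos) hU hUzero h_grad
  rw [← tendsto_add_atTop_iff_nat 1]
  simpa only [add_zero] using h_fun.add h_grad

/-- **Corollary 3.6 (strong `W^{1,1}` convergence).** On a simply connected bounded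
Lipschitz domain, the minimisers `u_k` of the regularised functionals `𝔉_k` (with zero
mean) converge strongly in `W^{1,1}(Ω;ℝ^N)` to the unique zero-mean minimiser `u` of
`𝔉` in `W^{1,1}(Ω;ℝ^N)`. -/
theorem strong_W11_convergence
    {n N : ℕ} (Ω : Set (EVec n))
    (hΩ : IsLipschitzDomain Ω) (hΩbdd : Bornology.IsBounded Ω)
    (hΩsc : SimplyConnectedSpace Ω)
    (ν L : ℝ) (hν : 0 < ν) (hνL : ν ≤ L)
    (f f' f'' : ℝ → ℝ)
    (hderiv : ∀ t ∈ Set.Ici (0:ℝ), HasDerivWithinAt f (f' t) (Set.Ici 0) t)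
    (hderiv' : ∀ t ∈ Set.Ici (0:ℝ), HasDerivWithinAt f' (f'' t) (Set.Ici 0) t)
    (hf''cont : ContinuousOn f'' (Set.Ici 0))
    (hstrict : StrictConvexOn ℝ (Set.Ici 0) f)
    (hf0 : f 0 = 0) (hf'0 : f' 0 = 0)
    (hgrowth : ∀ t ∈ Set.Ici (0:ℝ), ν * t - L ≤ f t ∧ f t ≤ L * (t + 1))
    (hsec : ∀ t ∈ Set.Ici (0:ℝ), f'' t ≤ L * (1 + t)⁻¹)
    (finf : ℝ) (hfinf : Filter.Tendsto (fun t => f t / t) Filter.atTop (nhds finf))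
    (T₀ : EVec n → Fin N → Fin n → ℝ)
    (hT : MemW2inf Ω T₀)
    (hTsmall : linfNormOn Ω T₀ < ENNReal.ofReal finf)
    (u : ℕ → EVec n → Fin N → ℝ) (Du : ℕ → EVec n → Fin N → Fin n → ℝ)
    (hmem : ∀ k, 0 < k → MemW12 Ω (u k) (Du k))
    (hzero : ∀ k, 0 < k → ZeroMean Ω (u k))
    (hmin : ∀ k, 0 < k →
      ∀ (w : EVec n → Fin N → ℝ) (Dw : EVec n → Fin N → Fin n → ℝ),
        MemW12 Ω w Dw → FFk Ω f T₀ k (Du k) ≤ FFk Ω f T₀ k Dw)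
    (U : EVec n → Fin N → ℝ) (DU : EVec n → Fin N → Fin n → ℝ)
    (hU : HasWeakDerivOn Ω U DU) (hUzero : ZeroMean Ω U)
    (hUmin : ∀ (w : EVec n → Fin N → ℝ) (Dw : EVec n → Fin N → Fin n → ℝ),
      HasWeakDerivOn Ω w Dw → FF Ω f T₀ DU ≤ FF Ω f T₀ Dw) :
    Filter.Tendsto
      (fun k : ℕ => (∫ x in Ω, vnorm (u k x - U x)) +
        ∫ x in Ω, mnorm (Du k x - DU x))
      Filter.atTop (nhds 0) := by
  have hf_deriv : HasDerivWithinAt f 0 (Ici 0) 0 := by simpa only [hf'0] using hderiv 0 self_mem_Ici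
  exact strong_W11_convergence_general Ω hΩ hΩbdd f hstrict
    (fun t ht => le_of_convexOn_Ici_of_hasDerivWithinAt_zero hstrict.convexOn hf_deriv ht)
    finf hfinf T₀ (hT.aestronglyMeasurable hΩ.1.measurableSet) hTsmall u Du hmem hzero hmin U DU hU
    hUzero hUmin
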